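/- Assume the Riemann Hypothesis. Then γ_r > e^{−γ} for every integer r ≥ 0. -/

import Mathlib

open Filter

/-- Generalized Euler constant for a finite set of primes `P`:
`γ(P) = ∏_{p∈P}(1 - 1/p) * (γ + ∑_{p∈P} log p / (p-1))`. -/
noncomputable def gammaP (P : Finset ℕ) : ℝ :=
  (∏ p ∈ P, (1 - 1 / (p : ℝ))) *
    (Real.eulerMascheroniConstant + ∑ p ∈ P, Real.log p / ((p : ℝ) - 1))

/-- `γ_r = γ({p_1, …, p_r})`, the generalized Euler constant for the first `r` primes. -/
noncomputable def gammaR (r : ℕ) : ℝ :=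
  gammaP ((Finset.range r).image (Nat.nth Nat.Prime))

section ZetaBounds

open Complex

/-- The derivative of `x ↦ x ^ s` along the positive reals. -/
lemma hasDerivAt_ofReal_cpow_pos {x : ℝ} (hx : 0 < x) (s : ℂ) :
    HasDerivAt (fun y : ℝ => (y : ℂ) ^ s) (s * (x : ℂ) ^ (s - 1)) x := by
  have h := ((hasDerivAt_id (x : ℂ)).cpow_const (c := s) (Or.inl (by simpa using hx))).comp_ofReal
  simpa using h

lemma norm_ofReal_cpow_neg_sub_le {a b : ℝ} (ha : 0 < a) (hab : a ≤ b) {s : ℂ} (hs : 0 ≤ s.re) :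
    ‖(b : ℂ) ^ (-s) - (a : ℂ) ^ (-s)‖ ≤ ‖s‖ * a ^ (-s.re - 1) * (b - a) := by
  refine norm_image_sub_le_of_norm_deriv_le_segment' (f := fun y : ℝ => (y : ℂ) ^ (-s))
    (f' := fun x => -s * (x : ℂ) ^ (-s - 1)) (C := ‖s‖ * a ^ (-s.re - 1)) ?_ ?_ b
    (Set.right_mem_Icc.2 hab)
  · intro x hx
    exact (hasDerivAt_ofReal_cpow_pos (ha.trans_le hx.1) _).hasDerivWithinAt
  · intro x hx
    have hx0 : 0 < x := ha.trans_le hx.1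
    rw [norm_mul, norm_neg, norm_cpow_eq_rpow_re_of_pos hx0]
    gcongr
    simp only [sub_re, neg_re, one_re]
    exact Real.rpow_le_rpow_of_nonpos ha hx.1 (by linarith)

/-- The terms of the series expressing `(s - 1) ζ(s) - 1`. -/
noncomputable def zetaTerm (n : ℕ) (s : ℂ) : ℂ :=
  (s - 1) * ((n + 1 : ℝ) : ℂ) ^ (-s) +
    (((n + 2 : ℝ) : ℂ) ^ (1 - s) - ((n + 1 : ℝ) : ℂ) ^ (1 - s))

lemma norm_zetaTerm_le (n : ℕ) {s : ℂ} (hs : 0 ≤ s.re) :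
    ‖zetaTerm n s‖ ≤ ‖s - 1‖ * ‖s‖ * (n + 1 : ℝ) ^ (-s.re - 1) := by
  have hn : (0 : ℝ) < n + 1 := by positivity
  have key := norm_image_sub_le_of_norm_deriv_le_segment'
    (f := fun y : ℝ => (s - 1) * ((n + 1 : ℝ) : ℂ) ^ (-s) * (y : ℂ) + (y : ℂ) ^ (1 - s))
    (f' := fun x => (s - 1) * ((n + 1 : ℝ) : ℂ) ^ (-s) * 1 + (1 - s) * (x : ℂ) ^ (1 - s - 1))
    (a := (n + 1 : ℝ)) (b := (n + 2 : ℝ)) (C := ‖s - 1‖ * ‖s‖ * (n + 1 : ℝ) ^ (-s.re - 1))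
    (fun x hx => by
      have hx0 : 0 < x := hn.trans_le hx.1
      refine HasDerivAt.hasDerivWithinAt ?_
      exact ((hasDerivAt_id (x : ℂ)).comp_ofReal.const_mul _).add
        (hasDerivAt_ofReal_cpow_pos hx0 _))
    (fun x hx => by
      have hx0 : 0 < x := hn.trans_le hx.1
      have h1 : (s - 1) * ((n + 1 : ℝ) : ℂ) ^ (-s) * 1 + (1 - s) * (x : ℂ) ^ (1 - s - 1)
          = -((s - 1) * ((x : ℂ) ^ (-s) - ((n + 1 : ℝ) : ℂ) ^ (-s))) := by
        rw [show (1 - s - 1 : ℂ) = -s by ring]; ring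
      rw [h1, norm_neg, norm_mul, mul_assoc]
      gcongr
      refine (norm_ofReal_cpow_neg_sub_le hn hx.1 hs).trans ?_
      refine mul_le_of_le_one_right (by positivity) ?_
      linarith [hx.2])
    (n + 2 : ℝ) (Set.right_mem_Icc.2 (by linarith))
  have e : (s - 1) * ((n + 1 : ℝ) : ℂ) ^ (-s) * ((n + 2 : ℝ) : ℂ) + ((n + 2 : ℝ) : ℂ) ^ (1 - s)
      - ((s - 1) * ((n + 1 : ℝ) : ℂ) ^ (-s) * ((n + 1 : ℝ) : ℂ) + ((n + 1 : ℝ) : ℂ) ^ (1 - s))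
      = zetaTerm n s := by
    rw [zetaTerm]; push_cast; ring
  rw [e] at key
  refine key.trans (le_of_eq ?_)
  ring

lemma hasSum_zetaTerm {s : ℂ} (hs : 1 < s.re) :
    HasSum (fun n => zetaTerm n s) (riemannZeta₁ s - 1) := by
  have hs1 : s ≠ 1 := by rintro rfl; simp at hs
  have hz : HasSum (fun n : ℕ => ((n + 1 : ℝ) : ℂ) ^ (-s)) (riemannZeta s) := by
    rw [zeta_eq_tsum_one_div_nat_add_one_cpow hs]
    have : Summable fun n : ℕ => 1 / (n + 1 : ℂ) ^ s := by
      have := (summable_nat_add_iff 1).2 (Complex.summable_one_div_nat_cpow.2 hs)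
      simpa using this
    convert this.hasSum using 2 with n
    rw [cpow_neg]; push_cast; simp
  have h1 : HasSum (fun n : ℕ => (s - 1) * ((n + 1 : ℝ) : ℂ) ^ (-s)) (riemannZeta₁ s) := by
    have e : riemannZeta₁ s = (s - 1) * riemannZeta s := by
      rw [riemannZeta_eq_inv_sub_mul hs1, mul_inv_cancel_left₀ (sub_ne_zero.2 hs1)]
    exact e ▸ hz.mul_left (s - 1)
  have hsumm : Summable fun n => zetaTerm n s := by
    refine Summable.of_norm_bounded (g := fun n : ℕ => ‖s - 1‖ * ‖s‖ * (n + 1 : ℝ) ^ (-s.re - 1)) ?_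
      (fun n => norm_zetaTerm_le n (by linarith))
    refine Summable.mul_left _ ?_
    have := (summable_nat_add_iff 1).2 (Real.summable_nat_rpow (p := -s.re - 1) |>.2 (by linarith))
    simpa using this
  have ht : Filter.Tendsto (fun N : ℕ => ∑ n ∈ Finset.range N, zetaTerm n s) Filter.atTop
      (nhds (riemannZeta₁ s - 1)) := by
    have e : ∀ N : ℕ, ∑ n ∈ Finset.range N, zetaTerm n s
        = ∑ n ∈ Finset.range N, (s - 1) * ((n + 1 : ℝ) : ℂ) ^ (-s)
          + (((N + 1 : ℝ) : ℂ) ^ (1 - s) - 1) := by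
      intro N
      simp only [zetaTerm, Finset.sum_add_distrib]
      congr 1
      have := Finset.sum_range_sub (fun n : ℕ => ((n + 1 : ℝ) : ℂ) ^ (1 - s)) N
      rw [show ((((0 : ℕ) : ℝ) + 1 : ℝ) : ℂ) ^ (1 - s) = 1 by simp] at this
      rw [← this]
      refine Finset.sum_congr rfl fun n _ => ?_
      push_cast
      ring_nf
    simp only [e]
    have h0 : Filter.Tendsto (fun N : ℕ => ((N + 1 : ℝ) : ℂ) ^ (1 - s)) Filter.atTop (nhds 0) := by
      rw [tendsto_zero_iff_norm_tendsto_zero]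
      have : ∀ N : ℕ, ‖((N + 1 : ℝ) : ℂ) ^ (1 - s)‖ = ((N + 1 : ℕ) : ℝ) ^ (-(s.re - 1)) := by
        intro N
        rw [norm_cpow_eq_rpow_re_of_pos (by positivity)]
        simp
      simp only [this]
      exact (tendsto_rpow_neg_atTop (by linarith)).comp
        (tendsto_natCast_atTop_atTop.comp (Filter.tendsto_add_atTop_nat 1))
    have := h1.tendsto_sum_nat.add (h0.sub_const 1)
    simpa [sub_eq_add_neg] using this
  exact (hsumm.hasSum_iff_tendsto_nat).2 ht

lemma differentiable_zetaTerm (n : ℕ) : Differentiable ℂ (zetaTerm n) := by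
  have h1 : ((n + 1 : ℝ) : ℂ) ≠ 0 := by exact_mod_cast (by positivity : (n + 1 : ℝ) ≠ 0)
  have h2 : ((n + 2 : ℝ) : ℂ) ≠ 0 := by exact_mod_cast (by positivity : (n + 2 : ℝ) ≠ 0)
  unfold zetaTerm
  have a1 : Differentiable ℂ fun s : ℂ => ((n + 1 : ℝ) : ℂ) ^ (-s) :=
    (differentiable_id.neg).const_cpow (Or.inl h1)
  have a2 : Differentiable ℂ fun s : ℂ => ((n + 1 : ℝ) : ℂ) ^ (1 - s) :=
    ((differentiable_const 1).sub differentiable_id).const_cpow (Or.inl h1)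
  have a3 : Differentiable ℂ fun s : ℂ => ((n + 2 : ℝ) : ℂ) ^ (1 - s) :=
    ((differentiable_const 1).sub differentiable_id).const_cpow (Or.inl h2)
  exact ((differentiable_id.sub_const 1).mul a1).add (a3.sub a2)

lemma riemannZeta₁_eq_tsum_zetaTerm {s : ℂ} (hs : 1 / 4 ≤ s.re) :
    riemannZeta₁ s - 1 = ∑' n, zetaTerm n s := by
  set R : ℝ := ‖s‖ + 4
  set U : Set ℂ := {z | 1 / 8 < z.re} ∩ Metric.ball 0 R
  have hUo : IsOpen U := (isOpen_lt continuous_const continuous_re).inter Metric.isOpen_ball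
  have hUc : IsPreconnected U :=
    ((convex_halfSpace_re_gt (1 / 8)).inter (convex_ball 0 R)).isPreconnected
  have hsU : s ∈ U := ⟨by simp only [Set.mem_ofPred_eq]; linarith, by simp [R]⟩
  have h3U : (3 : ℂ) ∈ U := ⟨by norm_num, by
    simp only [Metric.mem_ball, dist_zero_right, R]
    have := norm_nonneg s
    norm_num; linarith⟩
  have hd : DifferentiableOn ℂ (fun z => ∑' n, zetaTerm n z) U := by
    refine differentiableOn_tsum_of_summable_norm
      (u := fun n : ℕ => (R + 1) * R * (n + 1 : ℝ) ^ (-(9 / 8) : ℝ)) ?_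
      (fun n => (differentiable_zetaTerm n).differentiableOn) hUo ?_
    · refine Summable.mul_left _ ?_
      have := (summable_nat_add_iff 1).2 (Real.summable_nat_rpow (p := -(9/8)) |>.2 (by norm_num))
      simpa using this
    · intro n w hw
      have hw1 : 1 / 8 < w.re := hw.1
      have hw2 : ‖w‖ < R := by simpa using hw.2
      refine (norm_zetaTerm_le n (by linarith)).trans ?_
      have : ‖w - 1‖ ≤ R + 1 := (norm_sub_le _ _).trans (by simp; linarith)
      gcongr
      · simp
      · linarith
  have hU := AnalyticOnNhd.eqOn_of_preconnected_of_eventuallyEq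
    (f := fun z => riemannZeta₁ z - 1) (g := fun z => ∑' n, zetaTerm n z) (z₀ := 3)
    ((differentiable_riemannZeta₁.sub_const 1).differentiableOn.analyticOnNhd hUo)
    (hd.analyticOnNhd hUo) hUc h3U (by
      filter_upwards [(isOpen_lt continuous_const continuous_re).mem_nhds
        (show (3 : ℂ) ∈ {z : ℂ | 1 < z.re} by norm_num)] with z hz
      exact (hasSum_zetaTerm hz).tsum_eq.symm)
  exact hU hsU

lemma exists_norm_riemannZeta₁_le :
    ∃ C : ℝ, 0 < C ∧ ∀ s : ℂ, 1 / 4 ≤ s.re → ‖riemannZeta₁ s‖ ≤ 1 + ‖s - 1‖ * ‖s‖ * C := by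
  have hsum : Summable fun n : ℕ => (n + 1 : ℝ) ^ (-(5 / 4) : ℝ) := by
    have := (summable_nat_add_iff 1).2 (Real.summable_nat_rpow (p := -(5/4)) |>.2 (by norm_num))
    simpa using this
  refine ⟨∑' n : ℕ, (n + 1 : ℝ) ^ (-(5 / 4) : ℝ), ?_, fun s hs => ?_⟩
  · exact hsum.tsum_pos (fun n => by positivity) 0 (by positivity)
  · have h := riemannZeta₁_eq_tsum_zetaTerm hs
    have hb : ‖∑' n, zetaTerm n s‖ ≤ ∑' n : ℕ, ‖s - 1‖ * ‖s‖ * (n + 1 : ℝ) ^ (-(5 / 4) : ℝ) := by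
      refine tsum_of_norm_bounded (hsum.mul_left _).hasSum fun n => ?_
      refine (norm_zetaTerm_le n (by linarith)).trans ?_
      gcongr
      · simp
      · linarith
    rw [tsum_mul_left, ← h] at hb
    have := norm_le_norm_sub_add (riemannZeta₁ s) 1
    simp at this
    linarith

lemma riemannZeta₁_ne_zero_of_RH (hRH : RiemannHypothesis) {s : ℂ} (hs : 1 / 2 < s.re) :
    riemannZeta₁ s ≠ 0 := by
  by_cases h1 : s = 1
  · simp [h1]
  intro h0
  have hz : riemannZeta s = 0 := by rw [riemannZeta_eq_inv_sub_mul h1, h0, mul_zero]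
  have := hRH s hz (by
    rintro ⟨n, rfl⟩
    have : (-2 * ((n : ℂ) + 1)).re = -2 * (n + 1 : ℝ) := by simp
    rw [this] at hs
    have : (0 : ℝ) ≤ n := Nat.cast_nonneg n
    linarith) h1
  linarith

end ZetaBounds

section BorelCaratheodory

open Complex

/-- A holomorphic logarithm of a nonvanishing function on a disk. -/
lemma exists_log_of_differentiableOn_ball {f : ℂ → ℂ} {c : ℂ} {R : ℝ} (hR : 0 < R)
    (hf : DifferentiableOn ℂ f (Metric.ball c R)) (h0 : ∀ z ∈ Metric.ball c R, f z ≠ 0) :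
    ∃ g : ℂ → ℂ, DifferentiableOn ℂ g (Metric.ball c R) ∧ g c = 0 ∧
      ∀ z ∈ Metric.ball c R, f z = f c * exp (g z) := by
  have hd : DifferentiableOn ℂ (fun z => deriv f z / f z) (Metric.ball c R) :=
    (hf.deriv Metric.isOpen_ball).div hf h0
  obtain ⟨g, hgc, hg⟩ := hd.isExactOn_ball.with_val_at c 0
  have hcR : c ∈ Metric.ball c R := Metric.mem_ball_self hR
  refine ⟨g, fun z hz => (hg z hz).differentiableAt.differentiableWithinAt, hgc, fun z hz => ?_⟩
  have hder : ∀ z ∈ Metric.ball c R, HasDerivAt (fun z => f z * exp (-g z)) 0 z := by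
    intro z hz
    have h1 := (hf.differentiableAt (Metric.isOpen_ball.mem_nhds hz)).hasDerivAt
    refine (h1.mul (hg z hz).neg.cexp).congr_deriv ?_
    have := h0 z hz
    field_simp
    ring
  have hconst := Metric.isOpen_ball.is_const_of_deriv_eq_zero (convex_ball c R).isPreconnected
    (fun z hz => (hder z hz).differentiableAt.differentiableWithinAt)
    (fun z hz => (hder z hz).deriv) hz hcR
  simp only [hgc, neg_zero, exp_zero, mul_one] at hconst
  rw [← hconst, mul_assoc, ← exp_add, neg_add_cancel, exp_zero, mul_one]

/-- Lower bound for a nonvanishing holomorphic function, from the Borel–Carathéodory theorem. -/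
lemma norm_mul_exp_le_of_ne_zero {f : ℂ → ℂ} {c : ℂ} {R M : ℝ} (hR : 0 < R) (hM : 0 < M)
    (hf : DifferentiableOn ℂ f (Metric.ball c R)) (h0 : ∀ z ∈ Metric.ball c R, f z ≠ 0)
    (hb : ∀ z ∈ Metric.ball c R, ‖f z‖ ≤ ‖f c‖ * Real.exp M) {z : ℂ} (hz : z ∈ Metric.ball c R) :
    ‖f c‖ * Real.exp (-(2 * M * ‖z - c‖ / (R - ‖z - c‖))) ≤ ‖f z‖ := by
  obtain ⟨g, hgd, hgc, hg⟩ := exists_log_of_differentiableOn_ball hR hf h0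
  have hmap : ∀ w ∈ Metric.ball (0 : ℂ) R, c + w ∈ Metric.ball c R := by
    intro w hw
    simpa using hw
  have hfc : 0 < ‖f c‖ := norm_pos_iff.2 (h0 c (Metric.mem_ball_self hR))
  have hbc := borelCaratheodory_zero (f := fun w => g (c + w)) (M := M) (R := R) (z := z - c) hM
    (hgd.comp (by fun_prop) hmap) (by
      intro w hw
      have h1 := hb _ (hmap w hw)
      rw [hg _ (hmap w hw), norm_mul, norm_exp] at h1
      exact Real.exp_le_exp.1 (le_of_mul_le_mul_left h1 hfc)) hR
    (by simpa [dist_eq_norm] using hz) (by simp [hgc])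
  simp only [add_sub_cancel] at hbc
  rw [hg z hz, norm_mul, norm_exp]
  gcongr
  have := (abs_le.1 (abs_re_le_norm (g z))).1
  linarith

lemma riemannZeta₁_eq_mul {s : ℂ} (hs : s ≠ 1) : riemannZeta₁ s = (s - 1) * riemannZeta s := by
  rw [riemannZeta_eq_inv_sub_mul hs, mul_inv_cancel_left₀ (sub_ne_zero.2 hs)]

lemma norm_riemannZeta_sub_one_le {s : ℂ} (hs : 2 ≤ s.re) : ‖riemannZeta s - 1‖ ≤ 3 / 4 := by
  have hz : riemannZeta s - 1 = ∑' n : ℕ, 1 / ((n + 1 : ℕ) + 1 : ℂ) ^ s := by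
    have hsum : Summable fun n : ℕ => 1 / (n + 1 : ℂ) ^ s := by
      have := (summable_nat_add_iff 1).2 (Complex.summable_one_div_nat_cpow.2
        (by linarith : 1 < s.re))
      simpa using this
    rw [zeta_eq_tsum_one_div_nat_add_one_cpow (by linarith), hsum.tsum_eq_zero_add]
    simp
  have h2 : ‖riemannZeta s - 1‖ ≤ Real.pi ^ 2 / 6 - 1 := by
    rw [hz]
    have hs2 : HasSum (fun n : ℕ => 1 / ((n + 2 : ℕ) : ℝ) ^ 2) (Real.pi ^ 2 / 6 - 1) := by
      have := (hasSum_nat_add_iff' 2).2 hasSum_zeta_two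
      simpa [Finset.sum_range_succ] using this
    refine tsum_of_norm_bounded hs2 fun n => ?_
    have e1 : (((n + 1 : ℕ) : ℂ) + 1) = (((n + 2 : ℕ) : ℝ) : ℂ) := by push_cast; ring
    have hn2 : (1 : ℝ) ≤ ((n + 2 : ℕ) : ℝ) := by exact_mod_cast (by omega : 1 ≤ n + 2)
    rw [e1, norm_div, norm_one, norm_cpow_eq_rpow_re_of_pos (by positivity)]
    refine one_div_le_one_div_of_le (by positivity) ?_
    rw [← Real.rpow_natCast]
    exact Real.rpow_le_rpow_of_exponent_le hn2 (by simpa using hs)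
  have := Real.pi_lt_d2
  have := Real.pi_pos
  nlinarith

lemma norm_sub_one_div_four_le_norm_riemannZeta₁ {s : ℂ} (hs : 2 ≤ s.re) :
    ‖s - 1‖ / 4 ≤ ‖riemannZeta₁ s‖ := by
  have hs1 : s ≠ 1 := by rintro rfl; norm_num at hs
  have h4 := norm_sub_norm_le (1 : ℂ) (1 - riemannZeta s)
  rw [norm_sub_rev 1 (riemannZeta s)] at h4
  simp only [norm_one, sub_sub_cancel] at h4
  have := norm_riemannZeta_sub_one_le hs
  rw [riemannZeta₁_eq_mul hs1, norm_mul]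
  nlinarith [norm_nonneg (s - 1)]

lemma norm_riemannZeta₁_le_two_mul {s : ℂ} (hs : 2 ≤ s.re) :
    ‖riemannZeta₁ s‖ ≤ 2 * ‖s - 1‖ := by
  have hs1 : s ≠ 1 := by rintro rfl; norm_num at hs
  have h4 := norm_le_norm_sub_add (riemannZeta s) 1
  have := norm_riemannZeta_sub_one_le hs
  rw [norm_one] at h4
  rw [riemannZeta₁_eq_mul hs1, norm_mul]
  nlinarith [norm_nonneg (s - 1)]

lemma one_fourth_le_norm_riemannZeta₁ {s : ℂ} (hs : 2 ≤ s.re) : 1 / 4 ≤ ‖riemannZeta₁ s‖ := by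
  have h1 : 1 ≤ ‖s - 1‖ := by
    have := (le_abs_self _).trans (abs_re_le_norm (s - 1))
    simp at this
    linarith
  linarith [norm_sub_one_div_four_le_norm_riemannZeta₁ hs]

lemma exists_norm_riemannZeta₁_le_exp :
    ∃ C : ℝ, 0 < C ∧ ∀ s : ℂ, 1 / 4 ≤ s.re → ‖riemannZeta₁ s‖ ≤ Real.exp (C + 2 * ‖s‖) := by
  obtain ⟨C, hC, h⟩ := exists_norm_riemannZeta₁_le
  refine ⟨C + 2, by linarith, fun s hs => (h s hs).trans ?_⟩
  have h1 : ‖s - 1‖ ≤ ‖s‖ + 1 := (norm_sub_le _ _).trans (by simp)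
  have h0 := norm_nonneg s
  have h2 : ‖s - 1‖ * ‖s‖ ≤ (‖s‖ + 2) ^ 2 := by nlinarith [norm_nonneg (s - 1)]
  have h3 : ‖s‖ + 2 ≤ Real.exp (‖s‖ + 1) := by linarith [Real.add_one_le_exp (‖s‖ + 1)]
  have h4 : C + 1 ≤ Real.exp C := Real.add_one_le_exp C
  calc 1 + ‖s - 1‖ * ‖s‖ * C ≤ (C + 1) * (‖s‖ + 2) ^ 2 := by nlinarith
    _ ≤ Real.exp C * Real.exp (‖s‖ + 1) ^ 2 := by gcongr
    _ = Real.exp (C + 2 + 2 * ‖s‖) := by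
      rw [← Real.exp_nat_mul, ← Real.exp_add]; congr 1; push_cast; ring

lemma exists_exp_neg_le_norm_riemannZeta₁ (hRH : RiemannHypothesis) {δ : ℝ} (hδ : 0 < δ) :
    ∃ K : ℝ, 0 < K ∧ ∀ s : ℂ, 1 / 2 + δ ≤ s.re →
      Real.exp (-(K * (1 + ‖s‖))) ≤ ‖riemannZeta₁ s‖ := by
  obtain ⟨C, hC, hup⟩ := exists_norm_riemannZeta₁_le_exp
  have he2 : Real.exp (-2) ≤ 1 / 4 := by
    have h1 : (2 : ℝ) ≤ Real.exp 1 := by linarith [Real.add_one_le_exp (1 : ℝ)]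
    have h2 : Real.exp 2 = Real.exp 1 * Real.exp 1 := by rw [← Real.exp_add]; norm_num
    rw [Real.exp_neg, inv_eq_one_div]
    exact one_div_le_one_div_of_le (by norm_num) (by nlinarith)
  refine ⟨2 + 3 * (C + 20) / δ, by positivity, fun s hs => ?_⟩
  have hn := norm_nonneg s
  have hq : 0 ≤ 3 * (C + 20) / δ := by positivity
  rcases le_or_gt 2 s.re with h2 | h2
  · refine (Real.exp_le_exp.2 ?_).trans (he2.trans (one_fourth_le_norm_riemannZeta₁ h2))
    nlinarith
  set c : ℂ := s + ((2 - s.re : ℝ) : ℂ) with hc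
  have hcre : c.re = 2 := by simp [hc]
  have hsc : ‖s - c‖ = 2 - s.re := by
    rw [hc, sub_add_cancel_left, norm_neg, norm_real, Real.norm_of_nonneg (by linarith)]
  have hcn : ‖c‖ ≤ ‖s‖ + 3 / 2 := by
    have := norm_sub_norm_le c s
    rw [norm_sub_rev, hsc] at this
    linarith
  have hbre : ∀ z ∈ Metric.ball c (3 / 2), 1 / 2 < z.re := by
    intro z hz
    have h1 : ‖z - c‖ < 3 / 2 := by simpa [dist_eq_norm] using hz
    have h2 := (abs_le.1 (abs_re_le_norm (z - c))).1
    simp only [sub_re, hcre] at h2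
    linarith
  set M : ℝ := C + 2 * ‖s‖ + 20 with hM
  have hMpos : 0 < M := by positivity
  have hfc := one_fourth_le_norm_riemannZeta₁ hcre.ge
  have hsz : s ∈ Metric.ball c (3 / 2) := by
    rw [Metric.mem_ball, dist_eq_norm, hsc]; linarith
  have key := norm_mul_exp_le_of_ne_zero (f := riemannZeta₁) (c := c) (R := 3 / 2) (M := M)
    (by norm_num) hMpos differentiable_riemannZeta₁.differentiableOn
    (fun z hz => riemannZeta₁_ne_zero_of_RH hRH (hbre z hz)) (fun z hz => by
      have h1 : ‖z - c‖ < 3 / 2 := by simpa [dist_eq_norm] using hz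
      have h2 := norm_sub_norm_le z c
      calc ‖riemannZeta₁ z‖ ≤ Real.exp (C + 2 * ‖z‖) := hup z (by linarith [hbre z hz])
        _ ≤ Real.exp (-2 + M) := Real.exp_le_exp.2 (by rw [hM]; linarith)
        _ = Real.exp (-2) * Real.exp M := Real.exp_add _ _
        _ ≤ ‖riemannZeta₁ c‖ * Real.exp M := by gcongr; exact he2.trans hfc) hsz
  refine le_trans ?_ key
  calc Real.exp (-((2 + 3 * (C + 20) / δ) * (1 + ‖s‖)))
      ≤ Real.exp (-2 + -(2 * M * ‖s - c‖ / (3 / 2 - ‖s - c‖))) := by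
        apply Real.exp_le_exp.2
        have h5 : 2 * M * ‖s - c‖ / (3 / 2 - ‖s - c‖) ≤ 3 * M / δ := by
          apply div_le_div₀ (by positivity) _ hδ (by rw [hsc]; linarith)
          rw [hsc]
          nlinarith
        have h6 : 3 * M / δ ≤ 3 * (C + 20) / δ * (1 + ‖s‖) := by
          rw [div_mul_eq_mul_div]
          refine div_le_div_of_nonneg_right ?_ hδ.le
          nlinarith
        nlinarith
    _ = Real.exp (-2) * Real.exp (-(2 * M * ‖s - c‖ / (3 / 2 - ‖s - c‖))) := Real.exp_add _ _
    _ ≤ _ := by gcongr; exact he2.trans hfc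

end BorelCaratheodory

section XiFunction

open Complex

/-- The archimedean factor of the entire function `ξ`. -/
noncomputable def xiGamma (s : ℂ) : ℂ := (Real.pi : ℂ) ^ (-s / 2) * Gamma (1 + s / 2)

/-- Riemann's `ξ`-function, normalized by `ξ(1) = 1 / 2`. -/
noncomputable def riemannXi (s : ℂ) : ℂ := riemannZeta₁ s * xiGamma s

lemma xiGamma_ne_zero {s : ℂ} (hs : 0 < s.re) : xiGamma s ≠ 0 := by
  refine mul_ne_zero ?_ (Gamma_ne_zero_of_re_pos ?_)
  · exact cpow_ne_zero_iff.2 (Or.inl (by exact_mod_cast Real.pi_ne_zero))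
  · simp; linarith

lemma differentiableAt_xiGamma {s : ℂ} (hs : 0 < s.re) : DifferentiableAt ℂ xiGamma s := by
  unfold xiGamma
  refine DifferentiableAt.mul ?_ ?_
  · exact (differentiableAt_id.neg.div_const 2).const_cpow
      (Or.inl (by exact_mod_cast Real.pi_ne_zero))
  · refine (differentiableAt_Gamma _ fun m h => ?_).comp s (by fun_prop)
    have := congrArg re h
    simp at this
    have : (0 : ℝ) ≤ m := Nat.cast_nonneg m
    linarith

lemma differentiableAt_riemannXi {s : ℂ} (hs : 0 < s.re) : DifferentiableAt ℂ riemannXi s :=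
  (differentiable_riemannZeta₁ s).mul (differentiableAt_xiGamma hs)

lemma riemannXi_ne_zero_of_RH (hRH : RiemannHypothesis) {s : ℂ} (hs : 1 / 2 < s.re) :
    riemannXi s ≠ 0 :=
  mul_ne_zero (riemannZeta₁_ne_zero_of_RH hRH hs) (xiGamma_ne_zero (by linarith))

lemma riemannXi_eq_completedRiemannZeta {s : ℂ} (hs : 0 < s.re) (hs1 : s ≠ 1) :
    riemannXi s = s * (s - 1) / 2 * completedRiemannZeta s := by
  have h0 : s ≠ 0 := by rintro rfl; simp at hs
  have hG : Gammaℝ s ≠ 0 := Gammaℝ_ne_zero_of_re_pos hs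
  have h1 : completedRiemannZeta s = riemannZeta s * Gammaℝ s := by
    rw [riemannZeta_def_of_ne_zero h0, div_mul_cancel₀ _ hG]
  have h2 := riemannZeta₁_eq_mul hs1
  have h3 : Gamma (1 + s / 2) = s / 2 * Gamma (s / 2) := by
    rw [add_comm, Gamma_add_one _ (div_ne_zero h0 two_ne_zero)]
  rw [riemannXi, xiGamma, h1, h2, h3, Gammaℝ]
  ring

lemma riemannXi_one_sub {s : ℂ} (h0 : 0 < s.re) (h1 : s.re < 1) :
    riemannXi (1 - s) = riemannXi s := by
  have hs1 : s ≠ 1 := by rintro rfl; simp at h1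
  have hs0 : 1 - s ≠ 1 := by
    intro h
    have : s = 0 := by simpa using h
    rw [this] at h0; simp at h0
  rw [riemannXi_eq_completedRiemannZeta h0 hs1,
    riemannXi_eq_completedRiemannZeta (by simpa using h1) hs0, completedRiemannZeta_one_sub]
  ring

lemma riemannZeta₁_conj (s : ℂ) :
    riemannZeta₁ (starRingEnd ℂ s) = starRingEnd ℂ (riemannZeta₁ s) := by
  by_cases h : s = 1
  · simp [h]
  have h' : starRingEnd ℂ s ≠ 1 := by
    intro h2
    apply h
    simpa using congrArg (starRingEnd ℂ) h2
  rw [riemannZeta₁_eq_mul h, riemannZeta₁_eq_mul h', riemannZeta_conj]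
  simp

lemma xiGamma_conj (s : ℂ) : xiGamma (starRingEnd ℂ s) = starRingEnd ℂ (xiGamma s) := by
  have c2 : starRingEnd ℂ 2 = 2 := map_ofNat (starRingEnd ℂ) 2
  have h1 : (Real.pi : ℂ) ^ (-(starRingEnd ℂ s) / 2) =
      starRingEnd ℂ ((Real.pi : ℂ) ^ (-s / 2)) := by
    have := cpow_conj (Real.pi : ℂ) (-s / 2) (by
      rw [arg_ofReal_of_nonneg Real.pi_pos.le]; exact Real.pi_ne_zero.symm)
    simpa [conj_ofReal, c2] using this
  have h2 : Gamma (1 + starRingEnd ℂ s / 2) = starRingEnd ℂ (Gamma (1 + s / 2)) := by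
    rw [← Gamma_conj]; simp [c2]
  rw [xiGamma, xiGamma, h1, h2, map_mul]

lemma riemannXi_conj (s : ℂ) : riemannXi (starRingEnd ℂ s) = starRingEnd ℂ (riemannXi s) := by
  rw [riemannXi, riemannXi, riemannZeta₁_conj, xiGamma_conj, map_mul]

lemma norm_betaIntegral_le {a : ℂ} {δ : ℝ} (ha : 1 ≤ a.re) (hδ : 0 < δ) :
    ‖betaIntegral a δ‖ ≤ 1 / δ := by
  have hint : IntervalIntegrable (fun x : ℝ => (1 - x) ^ (δ - 1)) MeasureTheory.volume 0 1 := by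
    have := (intervalIntegral.intervalIntegrable_rpow' (a := 0) (b := 1) (r := δ - 1)
      (by linarith)).comp_sub_left 1
    simpa using this.symm
  have hval : ∫ x : ℝ in (0 : ℝ)..1, (1 - x) ^ (δ - 1) = 1 / δ := by
    rw [intervalIntegral.integral_comp_sub_left (fun x : ℝ => x ^ (δ - 1)) 1,
      integral_rpow (Or.inl (by linarith))]
    simp [Real.zero_rpow hδ.ne']
  rw [betaIntegral, ← hval]
  refine intervalIntegral.norm_integral_le_of_norm_le zero_le_one ?_ hint
  have hae : ∀ᵐ x : ℝ, x ≠ 1 := by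
    simp [MeasureTheory.ae_iff, MeasureTheory.measure_singleton]
  filter_upwards [hae] with x hx1 hx
  have hx' : 0 < 1 - x := sub_pos.2 (lt_of_le_of_ne hx.2 hx1)
  rw [norm_mul, norm_cpow_eq_rpow_re_of_pos hx.1]
  have : ‖((1 : ℂ) - x) ^ ((δ : ℂ) - 1)‖ = (1 - x) ^ (δ - 1) := by
    rw [show (1 : ℂ) - x = ((1 - x : ℝ) : ℂ) by push_cast; ring, norm_cpow_eq_rpow_re_of_pos hx']
    simp
  rw [this]
  refine mul_le_of_le_one_left (by positivity) ?_
  exact Real.rpow_le_one hx.1.le hx.2 (by simpa using ha)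

lemma exists_norm_xiGamma_le {h : ℝ} (hh : 0 < h) :
    ∃ D : ℝ, 0 < D ∧ ∀ s : ℂ, 0 < s.re → ‖xiGamma s‖ ≤ D * ‖xiGamma (s + h)‖ := by
  have hδ : 0 < h / 2 := by linarith
  have hGd : 0 < ‖Gamma ((h / 2 : ℝ) : ℂ)‖ :=
    norm_pos_iff.2 (Gamma_ne_zero_of_re_pos (by simpa using hh))
  refine ⟨Real.pi ^ (h / 2) * (1 / (h / 2) / ‖Gamma ((h / 2 : ℝ) : ℂ)‖), by positivity,
    fun s hs => ?_⟩
  have ha : 1 ≤ (1 + s / 2).re := by simp; linarith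
  have hB := Gamma_mul_Gamma_eq_betaIntegral (s := 1 + s / 2) (t := ((h / 2 : ℝ) : ℂ))
    (by linarith) (by simpa using hh)
  have hB2 : ‖Gamma (1 + s / 2)‖ * ‖Gamma ((h / 2 : ℝ) : ℂ)‖
      ≤ ‖Gamma (1 + (s + h) / 2)‖ * (1 / (h / 2)) := by
    rw [← norm_mul, hB, norm_mul]
    have : 1 + s / 2 + ((h / 2 : ℝ) : ℂ) = 1 + (s + h) / 2 := by push_cast; ring
    rw [this]
    gcongr
    exact norm_betaIntegral_le ha hδ
  have hB3 : ‖Gamma (1 + s / 2)‖ ≤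
      ‖Gamma (1 + (s + h) / 2)‖ * (1 / (h / 2) / ‖Gamma ((h / 2 : ℝ) : ℂ)‖) := by
    rw [← mul_div_assoc, le_div_iff₀ hGd]
    exact hB2
  have hp : Real.pi ^ (-s.re / 2) = Real.pi ^ (h / 2) * Real.pi ^ (-(s.re + h) / 2) := by
    rw [← Real.rpow_add Real.pi_pos]; congr 1; ring
  have e1 : ∀ z : ℂ, ‖(Real.pi : ℂ) ^ (-z / 2)‖ = Real.pi ^ (-z.re / 2) := by
    intro z
    rw [norm_cpow_eq_rpow_re_of_pos Real.pi_pos]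
    simp
  rw [xiGamma, xiGamma, norm_mul, norm_mul, e1, e1]
  simp only [add_re, ofReal_re]
  rw [hp]
  calc _ ≤ Real.pi ^ (h / 2) * Real.pi ^ (-(s.re + h) / 2) *
        (‖Gamma (1 + (s + h) / 2)‖ * (1 / (h / 2) / ‖Gamma ((h / 2 : ℝ) : ℂ)‖)) := by gcongr
    _ = _ := by ring

end XiFunction

section XiMonotone

open Complex Filter Asymptotics

lemma norm_riemannXi_eq_of_re {h y : ℝ} (h0 : 0 < h) (h1 : h < 1) :
    ‖riemannXi (((1 / 2 - h / 2 : ℝ) : ℂ) + y * I)‖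
      = ‖riemannXi (((1 / 2 - h / 2 : ℝ) : ℂ) + y * I + h)‖ := by
  set s : ℂ := ((1 / 2 - h / 2 : ℝ) : ℂ) + y * I with hs
  have hre : s.re = 1 / 2 - h / 2 := by simp [hs]
  have e : s + h = 1 - starRingEnd ℂ s := by
    apply Complex.ext
    · rw [sub_re, conj_re, add_re, hre, ofReal_re, one_re]; ring
    · rw [sub_im, conj_im, add_im, ofReal_im, one_im]; ring
  rw [e, riemannXi_one_sub (by rw [conj_re, hre]; linarith) (by rw [conj_re, hre]; linarith),
    riemannXi_conj, norm_conj]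

/-- Under RH, `|ξ|` increases with the real part to the right of the critical line. -/
lemma norm_riemannXi_le_of_RH (hRH : RiemannHypothesis) {h : ℝ} (h0 : 0 < h) (h1 : h < 1 / 2)
    {s : ℂ} (hs : 1 / 2 < s.re) : ‖riemannXi s‖ ≤ ‖riemannXi (s + h)‖ := by
  obtain ⟨C, hC, hup⟩ := exists_norm_riemannZeta₁_le_exp
  obtain ⟨K, hK, hlow⟩ := exists_exp_neg_le_norm_riemannZeta₁ hRH (δ := h / 2) (by linarith)
  obtain ⟨D, hD, hA⟩ := exists_norm_xiGamma_le h0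
  set σ : ℝ := 1 / 2 - h / 2 with hσ
  set F : ℂ → ℂ := fun z => riemannXi (σ + z) / riemannXi (σ + z + h) with hF
  have hne : ∀ z : ℂ, 0 ≤ z.re → riemannXi (σ + z + h) ≠ 0 := fun z hz =>
    riemannXi_ne_zero_of_RH hRH (by simp [hσ]; linarith)
  have hdiff : ∀ z : ℂ, 0 ≤ z.re → DifferentiableAt ℂ F z := by
    intro z hz
    refine DifferentiableAt.div ?_ ?_ (hne z hz)
    · exact (differentiableAt_riemannXi (by simp [hσ]; linarith)).comp z (by fun_prop)
    · exact (differentiableAt_riemannXi (by simp [hσ]; linarith)).comp z (by fun_prop)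
  have hFle : ∀ z : ℂ, 0 ≤ z.re →
      ‖F z‖ ≤ ‖riemannZeta₁ (σ + z)‖ / ‖riemannZeta₁ (σ + z + h)‖ * D := by
    intro z hz
    have hA1 := hA (σ + z) (by simp [hσ]; linarith)
    have hA2 : 0 < ‖xiGamma (σ + z + h)‖ :=
      norm_pos_iff.2 (xiGamma_ne_zero (by simp [hσ]; linarith))
    simp only [hF, riemannXi, norm_div, norm_mul]
    rw [mul_div_mul_comm]
    gcongr
    rwa [div_le_iff₀ hA2]
  have hmain : ∀ z : ℂ, 0 ≤ z.re → ‖F z‖ ≤ 1 := by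
    intro z hz
    refine PhragmenLindelof.right_half_plane_of_bounded_on_real (f := F) (C := 1) ?_ ?_ ?_ ?_ hz
    · refine ⟨fun z hz => (hdiff z (le_of_lt hz)).differentiableWithinAt, fun z hz => ?_⟩
      have hz' : 0 ≤ z.re := by
        have := closure_setOfPred_lt_re 0
        rw [this] at hz
        exact hz
      exact (hdiff z hz').continuousAt.continuousWithinAt
    · refine ⟨1, by norm_num, 2 + K, IsBigO.of_bound (Real.exp (C + 2 + 3 * K) * D) ?_⟩
      refine eventually_inf_principal.2 (Eventually.of_forall fun z hz => ?_)
      have hz' : 0 < z.re := hz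
      refine (hFle z hz'.le).trans ?_
      have hn1 : ‖(σ : ℂ) + z‖ ≤ ‖z‖ + 1 := by
        refine (norm_add_le _ _).trans ?_
        rw [norm_real, Real.norm_of_nonneg (by rw [hσ]; linarith)]
        rw [hσ]; linarith
      have hn2 : ‖(σ : ℂ) + z + h‖ ≤ ‖z‖ + 2 := by
        refine (norm_add_le _ _).trans ?_
        rw [norm_real, Real.norm_of_nonneg h0.le]
        linarith
      have hu := hup (σ + z) (by simp [hσ]; linarith)
      have hl := hlow (σ + z + h) (by simp [hσ]; linarith)
      rw [Real.norm_of_nonneg (Real.exp_pos _).le, Real.rpow_one]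
      calc ‖riemannZeta₁ (σ + z)‖ / ‖riemannZeta₁ (σ + z + h)‖ * D
          ≤ Real.exp (C + 2 * ‖(σ : ℂ) + z‖) / Real.exp (-(K * (1 + ‖(σ : ℂ) + z + h‖))) * D := by
            gcongr
        _ ≤ Real.exp (C + 2 + 3 * K + (2 + K) * ‖z‖) * D := by
            rw [← Real.exp_sub]
            gcongr
            nlinarith
        _ = _ := by rw [Real.exp_add]; ring
    · refine ⟨8 * D, ?_⟩
      simp only [eventually_map]
      filter_upwards [eventually_ge_atTop 2] with x hx
      refine (hFle x (by simp; linarith)).trans ?_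
      gcongr
      have hu := norm_riemannZeta₁_le_two_mul (s := σ + x) (by simp [hσ]; linarith)
      have hl := norm_sub_one_div_four_le_norm_riemannZeta₁ (s := σ + x + h)
        (by simp [hσ]; linarith)
      have e1 : ‖(σ : ℂ) + x - 1‖ = σ + x - 1 := by
        rw [show (σ : ℂ) + x - 1 = ((σ + x - 1 : ℝ) : ℂ) by push_cast; ring, norm_real,
          Real.norm_of_nonneg (by rw [hσ]; linarith)]
      have e2 : ‖(σ : ℂ) + x + h - 1‖ = σ + x + h - 1 := by
        rw [show (σ : ℂ) + x + h - 1 = ((σ + x + h - 1 : ℝ) : ℂ) by push_cast; ring, norm_real,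
          Real.norm_of_nonneg (by rw [hσ]; linarith)]
      rw [e1] at hu
      rw [e2] at hl
      have h3 : 0 < σ + x + h - 1 := by rw [hσ]; linarith
      rw [div_le_iff₀ (by linarith)]
      linarith
    · intro y
      have := norm_riemannXi_eq_of_re (h := h) (y := y) h0 (by linarith)
      have hp : 0 < ‖riemannXi (σ + y * I + h)‖ := norm_pos_iff.2 (hne _ (by simp))
      simp only [hF, norm_div]
      rw [div_le_one hp]
      exact this.le
  have h2 := hmain (s - σ) (by simp [hσ]; linarith)
  have hp : 0 < ‖riemannXi (s + h)‖ :=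
    norm_pos_iff.2 (riemannXi_ne_zero_of_RH hRH (by simp; linarith))
  simp only [hF, add_sub_cancel, norm_div] at h2
  rwa [div_le_one hp] at h2

lemma re_logDeriv_nonneg_of_norm_le {f : ℂ → ℂ} {s : ℂ} (hf : DifferentiableAt ℂ f s)
    (hmono : ∀ h : ℝ, 0 < h → h < 1 / 2 → ‖f s‖ ≤ ‖f (s + h)‖) : 0 ≤ (logDeriv f s).re := by
  have hd : HasDerivAt (fun h : ℝ => f (s + h)) (deriv f s) 0 := by
    have h1 : HasDerivAt f (deriv f s) (s + ((0 : ℝ) : ℂ)) := by simpa using hf.hasDerivAt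
    have h2 : HasDerivAt (fun z : ℂ => f (s + z)) (deriv f s) ((0 : ℝ) : ℂ) := by
      have := HasDerivAt.comp (((0 : ℝ) : ℂ)) h1 ((hasDerivAt_id (((0 : ℝ) : ℂ))).const_add s)
      rw [mul_one] at this
      exact this
    exact h2.comp_ofReal
  have hn := hd.norm_sq
  have hnn : 0 ≤ 2 * inner ℝ (f (s + ((0 : ℝ) : ℂ))) (deriv f s) := by
    refine ge_of_tendsto (hn.tendsto_slope.mono_left
      (nhdsWithin_mono 0 (show Set.Ioi (0 : ℝ) ⊆ {0}ᶜ from fun x hx => ne_of_gt hx))) ?_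
    filter_upwards [Ioo_mem_nhdsGT (show (0 : ℝ) < 1 / 2 by norm_num)] with h hh
    rw [slope_def_field]
    have := hmono h hh.1 hh.2
    refine div_nonneg ?_ (by linarith [hh.1])
    have h3 : ‖f s‖ ^ 2 ≤ ‖f (s + h)‖ ^ 2 := by gcongr
    simpa using h3
  simp only [ofReal_zero, add_zero, Complex.inner] at hnn
  rw [logDeriv_apply, div_eq_mul_inv, inv_def, ← mul_assoc, re_mul_ofReal]
  have h5 : (0 : ℝ) ≤ (normSq (f s))⁻¹ := inv_nonneg.2 (normSq_nonneg _)
  refine mul_nonneg ?_ h5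
  linarith

/-- Under RH, `Re (ξ'/ξ) ≥ 0` to the right of the critical line. -/
lemma re_logDeriv_riemannXi_nonneg (hRH : RiemannHypothesis) {s : ℂ} (hs : 1 / 2 < s.re) :
    0 ≤ (logDeriv riemannXi s).re :=
  re_logDeriv_nonneg_of_norm_le (differentiableAt_riemannXi (by linarith))
    fun _ h0 h1 => norm_riemannXi_le_of_RH hRH h0 h1 hs

lemma differentiableAt_logDeriv_riemannXi (hRH : RiemannHypothesis) {s : ℂ}
    (hs : 1 / 2 < s.re) : DifferentiableAt ℂ (logDeriv riemannXi) s := by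
  have hU : IsOpen {z : ℂ | 1 / 2 < z.re} := isOpen_lt continuous_const continuous_re
  have hd : DifferentiableOn ℂ riemannXi {z : ℂ | 1 / 2 < z.re} := fun z hz =>
    (differentiableAt_riemannXi (lt_trans (by norm_num) hz)).differentiableWithinAt
  have := (hd.deriv hU).div hd fun z hz => riemannXi_ne_zero_of_RH hRH hz
  exact this.differentiableAt (hU.mem_nhds hs)

end XiMonotone

section ContourPairing

open Complex Metric

lemma circleAverage_conj (f : ℂ → ℂ) (c : ℂ) (R : ℝ) :
    Real.circleAverage (fun z => starRingEnd ℂ (f z)) c R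
      = starRingEnd ℂ (Real.circleAverage f c R) := by
  rw [Real.circleAverage_def, Real.circleAverage_def,
    intervalIntegral.integral_of_le (by positivity),
    intervalIntegral.integral_of_le (by positivity), integral_conj, real_smul, real_smul,
    map_mul, conj_ofReal]

lemma norm_circleAverage_le {f : ℂ → ℂ} {g : ℂ → ℝ} {c : ℂ} {R : ℝ} (hR : 0 ≤ R)
    (hg : CircleIntegrable g c R) (h : ∀ z ∈ sphere c R, ‖f z‖ ≤ g z) :
    ‖Real.circleAverage f c R‖ ≤ Real.circleAverage g c R := by
  rw [Real.circleAverage_def, Real.circleAverage_def, norm_smul, smul_eq_mul,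
    Real.norm_of_nonneg (by positivity)]
  gcongr
  refine intervalIntegral.norm_integral_le_of_norm_le (by positivity)
    (Filter.Eventually.of_forall fun θ _ => h _ (circleMap_mem_sphere _ hR _)) hg

/-- Antiholomorphic functions pair to zero with `(z - c)⁻ⁿ (z - p)⁻ᵏ` when `k ≥ 1`. -/
lemma circleAverage_conj_div_eq_zero {g : ℂ → ℂ} {c p : ℂ} {R : ℝ} (hp : p ∈ ball c R)
    (hg : DiffContOnCl ℂ g (ball c R)) (n : ℕ) {k : ℕ} (hk : k ≠ 0) :
    Real.circleAverage (fun z => starRingEnd ℂ (g z) / ((z - c) ^ n * (z - p) ^ k)) c R = 0 := by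
  have hR : 0 < R := pos_of_mem_ball hp
  have hpa : ‖p - c‖ < R := by simpa [dist_eq_norm] using hp
  set a : ℂ := starRingEnd ℂ (c - p) with ha
  have hane : ∀ z ∈ closedBall c R, (R : ℂ) ^ 2 + a * (z - c) ≠ 0 := by
    intro z hz h0
    have hz' : ‖z - c‖ ≤ R := by simpa [dist_eq_norm] using hz
    have h1 : a * (z - c) = -((R ^ 2 : ℝ) : ℂ) := by
      push_cast
      linear_combination h0
    have h2 := congrArg norm h1
    rw [norm_neg, norm_real, norm_mul, ha, norm_conj, norm_sub_rev c p,
      Real.norm_of_nonneg (by positivity)] at h2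
    nlinarith [norm_nonneg (p - c), norm_nonneg (z - c)]
  set F : ℂ → ℂ := fun z =>
    g z * ((z - c) ^ (n + k) / (((R : ℂ) ^ 2) ^ n * ((R : ℂ) ^ 2 + a * (z - c)) ^ k)) with hF
  have hR2 : ((R : ℂ) ^ 2) ^ n ≠ 0 :=
    pow_ne_zero _ (pow_ne_zero _ (by exact_mod_cast hR.ne'))
  have hFd : DiffContOnCl ℂ F (ball c R) := by
    refine DiffContOnCl.mk_ball (hg.1.mul fun z hz => ?_) (hg.continuousOn_ball.mul fun z hz => ?_)
    · have hz' := hane z (ball_subset_closedBall hz)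
      refine DifferentiableAt.differentiableWithinAt (DifferentiableAt.div (by fun_prop)
        (by fun_prop) (mul_ne_zero hR2 (pow_ne_zero _ hz')))
    · have hz' := hane z hz
      refine ContinuousAt.continuousWithinAt (ContinuousAt.div (by fun_prop)
        (by fun_prop) (mul_ne_zero hR2 (pow_ne_zero _ hz')))
  have hF0 : Real.circleAverage F c R = 0 := by
    have := (show DiffContOnCl ℂ F (ball c |R|) by rwa [abs_of_pos hR]).circleAverage
    rw [this]
    simp [hF, hk]
  have : Real.circleAverage (fun z => starRingEnd ℂ (g z) / ((z - c) ^ n * (z - p) ^ k)) c R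
      = Real.circleAverage (fun z => starRingEnd ℂ (F z)) c R := by
    refine Real.circleAverage_congr_sphere fun z hz => ?_
    rw [abs_of_pos hR] at hz
    have hzn : ‖z - c‖ = R := by simpa [dist_eq_norm] using hz
    have hzc : z - c ≠ 0 := by
      rw [← norm_pos_iff, hzn]; exact hR
    have hconj : starRingEnd ℂ (z - c) * (z - c) = (R : ℂ) ^ 2 := by
      rw [mul_comm, mul_conj, normSq_eq_norm_sq, hzn]; push_cast; ring
    have hc' : starRingEnd ℂ (z - c) ≠ 0 := (map_ne_zero _).2 hzc
    have hden : starRingEnd ℂ ((R : ℂ) ^ 2 + a * (z - c)) = starRingEnd ℂ (z - c) * (z - p) := by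
      simp only [ha, map_add, map_mul, map_pow, conj_ofReal, conj_conj]
      rw [← hconj, map_sub]
      ring
    simp only [hF]
    rw [map_mul, map_div₀, map_mul, map_pow, map_pow, map_pow, map_pow, hden, conj_ofReal, ← hconj]
    have hzp : z - p ≠ 0 := by
      intro h0
      have := hane z (sphere_subset_closedBall hz)
      apply this
      have := congrArg (starRingEnd ℂ) hden
      simpa [h0] using this
    generalize starRingEnd ℂ (z - c) = v at hc'
    generalize z - c = x at hzc
    generalize z - p = y at hzp
    rw [mul_pow, mul_pow, pow_add]
    field_simp
  rw [this, circleAverage_conj, hF0, map_zero]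

lemma norm_iteratedDeriv_mul_le_of_re_nonneg {G Q : ℂ → ℂ} {U : Set ℂ} {c p A B : ℂ} {R : ℝ}
    (hp : p ∈ ball c R) (hU : closedBall c R ⊆ U) (hG : DifferentiableOn ℂ G U)
    (hQ : DifferentiableOn ℂ Q U) (hre : ∀ z ∈ U, 0 ≤ (G z).re)
    (hQG : ∀ z ∈ U, (z - p) ^ 2 * Q z = G z - A - (z - p) * B) (n : ℕ) :
    ‖iteratedDeriv n Q c‖ / n.factorial * R ^ n * (R ^ 2 - ‖p - c‖ ^ 2) ≤ 2 * (G p).re := by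
  have hR : 0 < R := pos_of_mem_ball hp
  have hpa : ‖p - c‖ < R := by simpa [dist_eq_norm] using hp
  have hGd := hG.diffContOnCl_ball hU
  have hQd := hQ.diffContOnCl_ball hU
  have hsU : sphere c R ⊆ U := sphere_subset_closedBall.trans hU
  have hzc : ∀ z ∈ sphere c R, z - c ≠ 0 := fun z hz => by
    have hzn : ‖z - c‖ = R := by simpa [dist_eq_norm] using hz
    rw [← norm_pos_iff, hzn]; exact hR
  have hzp : ∀ z ∈ sphere c R, z - p ≠ 0 := fun z hz h0 => by
    have hzn : ‖z - c‖ = R := by simpa [dist_eq_norm] using hz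
    rw [sub_eq_zero.1 h0] at hzn
    linarith
  have hGc : ContinuousOn G (sphere c R) := hG.continuousOn.mono hsU
  have hQc : ContinuousOn Q (sphere c R) := hQ.continuousOn.mono hsU
  have hcauchy : Real.circleAverage (fun z => Q z / (z - c) ^ n) c R
      = iteratedDeriv n Q c / n.factorial := by
    rw [Real.circleAverage_eq_circleIntegral hR.ne']
    have h1 := hQd.circleIntegral_one_div_sub_center_pow_smul hR n
    have h2 : (∮ z in C(c, R), (z - c)⁻¹ • (Q z / (z - c) ^ n))
        = ∮ z in C(c, R), (1 / (z - c) ^ (n + 1)) • Q z := by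
      refine circleIntegral.integral_congr hR.le fun z hz => ?_
      have := hzc z hz
      simp only [smul_eq_mul]
      field_simp
      ring
    rw [h2, h1, smul_eq_mul, smul_eq_mul]
    have := two_pi_I_ne_zero
    field_simp
  have hpn : ∀ z ∈ sphere c R, ∀ k m : ℕ, (z - c) ^ k * (z - p) ^ m ≠ 0 := fun z hz k m =>
    mul_ne_zero (pow_ne_zero _ (hzc z hz)) (pow_ne_zero _ (hzp z hz))
  have hci : ∀ f : ℂ → ℂ, ContinuousOn f (sphere c R) → ∀ m : ℕ,
      CircleIntegrable (fun z => f z / ((z - c) ^ n * (z - p) ^ m)) c R := by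
    intro f hf m
    refine ContinuousOn.circleIntegrable hR.le (hf.div (by fun_prop) fun z hz => hpn z hz n m)
  have hconjG : ContinuousOn (fun z => starRingEnd ℂ (G z)) (sphere c R) :=
    continuous_conj.comp_continuousOn hGc
  have hreG : ContinuousOn (fun z => (2 * (G z).re : ℂ)) (sphere c R) :=
    continuousOn_const.mul (continuous_ofReal.comp_continuousOn
      (continuous_re.comp_continuousOn hGc))
  have v1 := circleAverage_conj_div_eq_zero (k := 2) hp hGd n two_ne_zero
  have v2 := circleAverage_conj_div_eq_zero (g := fun _ => starRingEnd ℂ A) (k := 2) hp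
    diffContOnCl_const n two_ne_zero
  have v3 := circleAverage_conj_div_eq_zero (g := fun _ => starRingEnd ℂ B) (k := 1) hp
    diffContOnCl_const n one_ne_zero
  simp only [conj_conj] at v2 v3
  have hmain : Real.circleAverage (fun z => Q z / (z - c) ^ n) c R
      = Real.circleAverage (fun z => (2 * (G z).re : ℂ) / ((z - c) ^ n * (z - p) ^ 2)) c R := by
    have e : Real.circleAverage (fun z => Q z / (z - c) ^ n) c R = Real.circleAverage (fun z =>
        (((2 * (G z).re : ℂ) / ((z - c) ^ n * (z - p) ^ 2)
          - starRingEnd ℂ (G z) / ((z - c) ^ n * (z - p) ^ 2))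
          - A / ((z - c) ^ n * (z - p) ^ 2)) - B / ((z - c) ^ n * (z - p) ^ 1)) c R := by
      refine Real.circleAverage_congr_sphere fun z hz => ?_
      rw [abs_of_pos hR] at hz
      have h1 := hzc z hz
      have h2 := hzp z hz
      have h3 : Q z = (G z - A - (z - p) * B) / (z - p) ^ 2 := by
        rw [← hQG z (hsU hz)]; field_simp
      have h4 : (2 * (G z).re : ℂ) = G z + starRingEnd ℂ (G z) := by
        rw [add_conj]; push_cast; ring
      simp only [h3, h4]
      field_simp
      ring
    rw [e, Real.circleAverage_fun_sub, Real.circleAverage_fun_sub, Real.circleAverage_fun_sub,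
      v1, v2, v3]
    · simp
    · exact hci _ hreG 2
    · exact hci _ hconjG 2
    · exact (hci _ hreG 2).sub (hci _ hconjG 2)
    · exact hci _ continuousOn_const 2
    · exact ((hci _ hreG 2).sub (hci _ hconjG 2)).sub (hci _ continuousOn_const 2)
    · exact hci _ continuousOn_const 1
  set T : ℝ := R ^ 2 - ‖p - c‖ ^ 2 with hT
  have hTpos : 0 < T := by rw [hT]; nlinarith [norm_nonneg (p - c)]
  have hpoisson := hGd.circleAverage_poissonKernel_smul hp
  have hPi : CircleIntegrable (poissonKernel c p • G) c R := by
    refine ContinuousOn.circleIntegrable hR.le (ContinuousOn.smul ?_ hGc)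
    refine ContinuousOn.div (by fun_prop) (by fun_prop) fun z hz => ?_
    have := hzp z hz
    simpa using this
  have hpre : Real.circleAverage (fun z => (poissonKernel c p z * (G z).re)) c R = (G p).re := by
    rw [← hpoisson]
    have := ContinuousLinearMap.circleAverage_comp_comm reCLM hPi
    refine Eq.trans ?_ this
    congr 1
    ext z
    simp
  have hbound : ‖Real.circleAverage (fun z => (2 * (G z).re : ℂ) / ((z - c) ^ n * (z - p) ^ 2)) c R‖
      ≤ Real.circleAverage ((2 / (R ^ n * T)) • fun z => (poissonKernel c p z * (G z).re)) c R := by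
    refine norm_circleAverage_le hR.le ?_ fun z hz => ?_
    · refine ContinuousOn.circleIntegrable hR.le (ContinuousOn.const_smul (ContinuousOn.mul ?_
        (continuous_re.comp_continuousOn hGc)) _)
      refine ContinuousOn.div (by fun_prop) (by fun_prop) fun z hz => ?_
      have := hzp z hz
      simpa using this
    · have hzn : ‖z - c‖ = R := by simpa [dist_eq_norm] using hz
      have h2 := norm_pos_iff.2 (hzp z hz)
      have e1 : ‖(2 * (G z).re : ℂ)‖ = 2 * (G z).re := by
        rw [show (2 * (G z).re : ℂ) = ((2 * (G z).re : ℝ) : ℂ) by push_cast; ring, norm_real,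
          Real.norm_of_nonneg (by have := hre z (hsU hz); linarith)]
      rw [norm_div, e1, norm_mul, norm_pow, norm_pow, hzn]
      simp only [Pi.smul_apply, smul_eq_mul, poissonKernel, hzn, sub_sub_sub_cancel_right, ← hT]
      refine le_of_eq ?_
      field_simp
  rw [Real.circleAverage_smul, hpre, ← hmain, hcauchy, norm_div, Complex.norm_natCast,
    smul_eq_mul] at hbound
  have h5 : 0 < R ^ n * T := by positivity
  calc ‖iteratedDeriv n Q c‖ / n.factorial * R ^ n * T
      = ‖iteratedDeriv n Q c‖ / n.factorial * (R ^ n * T) := by ring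
    _ ≤ 2 / (R ^ n * T) * (G p).re * (R ^ n * T) := by gcongr
    _ = 2 * (G p).re := by field_simp


lemma norm_iteratedDeriv_mul_le_of_re_nonneg_halfPlane {G Q : ℂ → ℂ} {A B : ℂ}
    (hG : DifferentiableOn ℂ G {z | 0 < z.re}) (hQ : DifferentiableOn ℂ Q {z | 0 < z.re})
    (hre : ∀ z : ℂ, 0 < z.re → 0 ≤ (G z).re)
    (hQG : ∀ z : ℂ, 0 < z.re → (z - 1 / 2) ^ 2 * Q z = G z - A - (z - 1 / 2) * B) (n : ℕ)
    {x : ℝ} (hx : 1 / 2 < x) :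
    ‖iteratedDeriv n Q x‖ / n.factorial * x ^ n * (x - 1 / 4) ≤ 2 * (G (1 / 2)).re := by
  have hlim : Filter.Tendsto (fun R : ℝ => ‖iteratedDeriv n Q x‖ / n.factorial * R ^ n *
      (R ^ 2 - ‖(1 / 2 : ℂ) - x‖ ^ 2)) (nhdsWithin x (Set.Iio x))
      (nhds (‖iteratedDeriv n Q x‖ / n.factorial * x ^ n * (x ^ 2 - ‖(1 / 2 : ℂ) - x‖ ^ 2))) := by
    refine (Continuous.tendsto ?_ x).mono_left nhdsWithin_le_nhds
    fun_prop
  have hnorm : ‖(1 / 2 : ℂ) - x‖ = x - 1 / 2 := by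
    rw [show (1 / 2 : ℂ) - x = ((1 / 2 - x : ℝ) : ℂ) by push_cast; ring, norm_real,
      Real.norm_eq_abs,
      abs_sub_comm, abs_of_pos (by linarith)]
  rw [hnorm] at hlim
  have e : x ^ 2 - (x - 1 / 2) ^ 2 = x - 1 / 4 := by ring
  rw [e] at hlim
  refine le_of_tendsto hlim ?_
  filter_upwards [Ioo_mem_nhdsLT (show x - 1 / 2 < x by linarith)] with R hR
  have := norm_iteratedDeriv_mul_le_of_re_nonneg (c := x) (p := 1 / 2) (R := R)
    (U := {z | 0 < z.re}) ?_ ?_ hG hQ hre hQG n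
  · rwa [hnorm] at this
  · rw [mem_ball, dist_eq_norm, hnorm]; exact hR.1
  · intro z hz
    have h1 : ‖z - x‖ ≤ R := by simpa [dist_eq_norm] using hz
    have h2 := (abs_le.1 ((abs_re_le_norm _).trans h1)).1
    simp only [sub_re, ofReal_re] at h2
    simp only [Set.mem_ofPred_eq]
    linarith [hR.2]

end ContourPairing

section PostWidder

open Complex MeasureTheory Set Filter Topology

lemma integrableOn_pow_mul_exp_neg (n : ℕ) {r : ℝ} (hr : 0 < r) :
    IntegrableOn (fun u : ℝ => u ^ n * Real.exp (-(r * u))) (Ioi 0) := by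
  have := integrableOn_rpow_mul_exp_neg_mul_rpow (s := n) (p := 1) (b := r)
    (by have : (0 : ℝ) ≤ n := n.cast_nonneg
        linarith) one_pos hr
  refine this.congr_fun (fun u _ => ?_) measurableSet_Ioi
  simp

lemma integral_pow_mul_exp_neg (n : ℕ) {r : ℝ} (hr : 0 < r) :
    ∫ u in Ioi (0 : ℝ), u ^ n * Real.exp (-(r * u)) = n.factorial / r ^ (n + 1) := by
  have := Real.integral_rpow_mul_exp_neg_mul_Ioi (a := n + 1) (r := r) (by positivity) hr
  rw [Real.Gamma_nat_eq_factorial] at this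
  rw [show (n.factorial : ℝ) / r ^ (n + 1) = (1 / r) ^ ((n : ℝ) + 1) * n.factorial by
    rw [show ((n : ℝ) + 1) = ((n + 1 : ℕ) : ℝ) by push_cast; ring, Real.rpow_natCast]
    rw [div_pow, one_pow]; field_simp, ← this]
  refine setIntegral_congr_fun measurableSet_Ioi fun u _ => ?_
  simp

section Laplace

variable {E : ℝ → ℂ} {C a : ℝ}

lemma norm_laplace_integrand_le (hb : ∀ u, 0 ≤ u → ‖E u‖ ≤ C * Real.exp (a * u)) (n : ℕ) {z : ℂ}
    {b u : ℝ} (hbz : b ≤ z.re) (hu : 0 ≤ u) :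
    ‖(u : ℂ) ^ n * E u * exp (-(z * u))‖ ≤ C * (u ^ n * Real.exp (-((b - a) * u))) := by
  have hC : 0 ≤ C := by simpa using (norm_nonneg _).trans (hb 0 le_rfl)
  rw [norm_mul, norm_mul, norm_pow, norm_real, Real.norm_of_nonneg hu, norm_exp]
  have e1 : (-(z * u)).re ≤ -(b * u) := by
    rw [neg_re, re_mul_ofReal]
    nlinarith
  calc u ^ n * ‖E u‖ * Real.exp (-(z * u)).re
      ≤ u ^ n * (C * Real.exp (a * u)) * Real.exp (-(b * u)) := by
        have := hb u hu
        gcongr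
    _ = C * (u ^ n * Real.exp (-((b - a) * u))) := by
        rw [show -((b - a) * u) = a * u + -(b * u) by ring, Real.exp_add]; ring

lemma aestronglyMeasurable_laplace_integrand (hc : ContinuousOn E (Ici 0)) (n : ℕ) (z : ℂ) :
    AEStronglyMeasurable (fun u : ℝ => (u : ℂ) ^ n * E u * exp (-(z * u)))
      (volume.restrict (Ioi 0)) := by
  refine ContinuousOn.aestronglyMeasurable ?_ measurableSet_Ioi
  have := hc.mono Ioi_subset_Ici_self
  fun_prop

lemma integrableOn_laplace_integrand (hc : ContinuousOn E (Ici 0))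
    (hb : ∀ u, 0 ≤ u → ‖E u‖ ≤ C * Real.exp (a * u)) (n : ℕ) {z : ℂ} (hz : a < z.re) :
    IntegrableOn (fun u : ℝ => (u : ℂ) ^ n * E u * exp (-(z * u))) (Ioi 0) := by
  refine Integrable.mono' ((integrableOn_pow_mul_exp_neg n (sub_pos.2 hz)).const_mul C)
    (aestronglyMeasurable_laplace_integrand hc n z) ?_
  filter_upwards [ae_restrict_mem measurableSet_Ioi] with u hu
  exact norm_laplace_integrand_le hb n le_rfl (le_of_lt hu)

lemma hasDerivAt_laplace (hc : ContinuousOn E (Ici 0))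
    (hb : ∀ u, 0 ≤ u → ‖E u‖ ≤ C * Real.exp (a * u)) (n : ℕ) {z : ℂ} (hz : a < z.re) :
    HasDerivAt (fun w : ℂ => ∫ u in Ioi (0 : ℝ), (u : ℂ) ^ n * E u * exp (-(w * u)))
      (-∫ u in Ioi (0 : ℝ), (u : ℂ) ^ (n + 1) * E u * exp (-(z * u))) z := by
  set b := (a + z.re) / 2 with hbdef
  have hbz : b < z.re := by rw [hbdef]; linarith
  have hab : a < b := by rw [hbdef]; linarith
  rw [← integral_neg]
  refine (hasDerivAt_integral_of_dominated_loc_of_deriv_le (s := {w : ℂ | b < w.re})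
    (F := fun (w : ℂ) (u : ℝ) => (u : ℂ) ^ n * E u * exp (-(w * u)))
    (F' := fun (w : ℂ) (u : ℝ) => -((u : ℂ) ^ (n + 1) * E u * exp (-(w * u))))
    (bound := fun u => C * (u ^ (n + 1) * Real.exp (-((b - a) * u))))
    ((isOpen_lt continuous_const continuous_re).mem_nhds hbz)
    (Eventually.of_forall fun w => aestronglyMeasurable_laplace_integrand hc n w)
    (integrableOn_laplace_integrand hc hb n hz)
    (aestronglyMeasurable_laplace_integrand hc (n + 1) z).neg ?_
    ((integrableOn_pow_mul_exp_neg (n + 1) (sub_pos.2 hab)).const_mul C) ?_).2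
  · filter_upwards [ae_restrict_mem measurableSet_Ioi] with u hu w hw
    rw [norm_neg]
    exact norm_laplace_integrand_le hb (n + 1) (le_of_lt hw) (le_of_lt hu)
  · filter_upwards with u w _
    have h1 : HasDerivAt (fun w : ℂ => -(w * u)) (-(1 * (u : ℂ))) w :=
      ((hasDerivAt_id w).mul_const (u : ℂ)).neg
    exact (h1.cexp.const_mul ((u : ℂ) ^ n * E u)).congr_deriv (by ring)

lemma iteratedDeriv_laplace (hc : ContinuousOn E (Ici 0))
    (hb : ∀ u, 0 ≤ u → ‖E u‖ ≤ C * Real.exp (a * u)) (n : ℕ) :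
    ∀ z : ℂ, a < z.re →
    iteratedDeriv n (fun w : ℂ => ∫ u in Ioi (0 : ℝ), E u * exp (-(w * u))) z
      = (-1) ^ n * ∫ u in Ioi (0 : ℝ), (u : ℂ) ^ n * E u * exp (-(z * u)) := by
  induction n with
  | zero => intro z _; simp
  | succ n ih =>
    intro z hz
    rw [iteratedDeriv_succ]
    have : iteratedDeriv n (fun w : ℂ => ∫ u in Ioi (0 : ℝ), E u * exp (-(w * u))) =ᶠ[𝓝 z]
        fun z => (-1) ^ n * ∫ u in Ioi (0 : ℝ), (u : ℂ) ^ n * E u * exp (-(z * u)) := by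
      filter_upwards [(isOpen_lt continuous_const continuous_re).mem_nhds hz] with w hw
      exact ih w hw
    rw [this.deriv_eq, ((hasDerivAt_laplace hc hb n hz).const_mul _).deriv]
    ring

lemma norm_sub_le_of_continuous_of_exp_bound (hc : ContinuousOn E (Ici 0)) (ha : 0 ≤ a)
    (hb : ∀ u, 0 ≤ u → ‖E u‖ ≤ C * Real.exp (a * u)) {u₀ : ℝ} (hu₀ : 0 < u₀) {ε : ℝ} (hε : 0 < ε) :
    ∃ K, 0 ≤ K ∧ ∀ u, 0 ≤ u → ‖E u - E u₀‖ ≤ ε + K * ((u - u₀) ^ 2 * Real.exp (a * u)) := by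
  have hC : 0 ≤ C := by simpa using (norm_nonneg _).trans (hb 0 le_rfl)
  obtain ⟨δ, hδ, h⟩ := Metric.continuousWithinAt_iff.1 (hc u₀ hu₀.le) ε hε
  refine ⟨2 * C * Real.exp (a * u₀) / δ ^ 2, by positivity, fun u hu => ?_⟩
  rcases lt_or_ge (dist u u₀) δ with hd | hd
  · have := h hu hd
    rw [dist_eq_norm] at this
    have h0 : 0 ≤ 2 * C * Real.exp (a * u₀) / δ ^ 2 * ((u - u₀) ^ 2 * Real.exp (a * u)) := by
      positivity
    linarith
  · rw [Real.dist_eq] at hd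
    have h1 : δ ^ 2 ≤ (u - u₀) ^ 2 := by
      rw [← sq_abs (u - u₀)]; gcongr
    have h2 : ‖E u - E u₀‖ ≤ C * Real.exp (a * u) + C * Real.exp (a * u₀) :=
      (norm_sub_le _ _).trans (add_le_add (hb u hu) (hb u₀ hu₀.le))
    have h3 : 1 ≤ Real.exp (a * u) := Real.one_le_exp (by positivity)
    have h4 : 1 ≤ Real.exp (a * u₀) := Real.one_le_exp (by positivity)
    have h5 : C * Real.exp (a * u) + C * Real.exp (a * u₀)
        ≤ 2 * C * Real.exp (a * u₀) * Real.exp (a * u) := by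
      have e1 : C * Real.exp (a * u) * 1 ≤ C * Real.exp (a * u) * Real.exp (a * u₀) := by gcongr
      have e2 : C * Real.exp (a * u₀) * 1 ≤ C * Real.exp (a * u₀) * Real.exp (a * u) := by gcongr
      linarith
    calc ‖E u - E u₀‖ ≤ 2 * C * Real.exp (a * u₀) * Real.exp (a * u) * 1 := by linarith
      _ ≤ 2 * C * Real.exp (a * u₀) * Real.exp (a * u) * ((u - u₀) ^ 2 / δ ^ 2) := by
          gcongr
          rwa [one_le_div (by positivity)]
      _ = 2 * C * Real.exp (a * u₀) / δ ^ 2 * ((u - u₀) ^ 2 * Real.exp (a * u)) := by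
          field_simp
      _ ≤ _ := by linarith

/-- The Post–Widder inversion formula. -/
lemma tendsto_postWidder (hc : ContinuousOn E (Ici 0)) (ha : 0 ≤ a)
    (hb : ∀ u, 0 ≤ u → ‖E u‖ ≤ C * Real.exp (a * u)) {u₀ : ℝ} (hu₀ : 0 < u₀) :
    Tendsto (fun n : ℕ => (((n / u₀ : ℝ) ^ (n + 1) / n.factorial : ℝ) : ℂ) *
      ∫ u in Ioi (0 : ℝ), (u : ℂ) ^ n * E u * exp (-((n / u₀ : ℝ) * u))) atTop (𝓝 (E u₀)) := by
  have hmom : Tendsto (fun n : ℕ => (n / u₀ / (n / u₀ - a)) ^ (n + 1) *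
      ((n + 2) * (n + 1) / (n / u₀ - a) ^ 2 - 2 * u₀ * (n + 1) / (n / u₀ - a) + u₀ ^ 2))
      atTop (𝓝 0) := by
    have hn : Tendsto (fun n : ℕ => (n : ℝ)⁻¹) atTop (𝓝 0) := tendsto_inv_atTop_nhds_zero_nat
    have h1 : Tendsto (fun n : ℕ => (1 + -(a * u₀) / (n : ℝ)) ^ n) atTop
        (𝓝 (Real.exp (-(a * u₀)))) := Real.tendsto_one_add_div_pow_exp _
    have h2 : Tendsto (fun n : ℕ => 1 + -(a * u₀) * (n : ℝ)⁻¹) atTop (𝓝 (1 + -(a * u₀) * 0)) :=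
      tendsto_const_nhds.add (hn.const_mul _)
    have h3 : Tendsto (fun n : ℕ => (1 + 2 * (n : ℝ)⁻¹) * (1 + (n : ℝ)⁻¹)) atTop
        (𝓝 ((1 + 2 * 0) * (1 + 0))) :=
      (tendsto_const_nhds.add (hn.const_mul _)).mul (tendsto_const_nhds.add hn)
    have h4 : Tendsto (fun n : ℕ => 1 + (n : ℝ)⁻¹) atTop (𝓝 (1 + 0)) :=
      tendsto_const_nhds.add hn
    have h5 : Tendsto (fun n : ℕ => ((1 + -(a * u₀) / (n : ℝ)) ^ n)⁻¹ *
        (1 + -(a * u₀) * (n : ℝ)⁻¹)⁻¹ * (u₀ ^ 2 *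
        ((1 + 2 * (n : ℝ)⁻¹) * (1 + (n : ℝ)⁻¹) / (1 + -(a * u₀) * (n : ℝ)⁻¹) ^ 2
        - 2 * (1 + (n : ℝ)⁻¹) / (1 + -(a * u₀) * (n : ℝ)⁻¹) + 1))) atTop
        (𝓝 ((Real.exp (-(a * u₀)))⁻¹ * (1 + -(a * u₀) * 0)⁻¹ * (u₀ ^ 2 *
        ((1 + 2 * 0) * (1 + 0) / (1 + -(a * u₀) * 0) ^ 2
        - 2 * (1 + 0) / (1 + -(a * u₀) * 0) + 1)))) := by
      refine ((h1.inv₀ (Real.exp_pos _).ne').mul (h2.inv₀ (by simp))).mul (((((h3.div (h2.pow 2)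
        (by simp)).sub ((h4.const_mul 2).div h2 (by simp))).add_const 1)).const_mul _)
    convert h5.congr' ?_ using 2
    · norm_num
    · filter_upwards [eventually_gt_atTop 0, (tendsto_natCast_atTop_atTop (R := ℝ)).eventually
        (eventually_gt_atTop (a * u₀))] with n hn0 hna
      have hn0' : (0 : ℝ) < n := by exact_mod_cast hn0
      have e1 : (n : ℝ) / u₀ - a = (n - a * u₀) / u₀ := by field_simp
      have e2 : (1 : ℝ) + -(a * u₀) / n = (n - a * u₀) / n := by field_simp; ring
      have e3 : (1 : ℝ) + -(a * u₀) * (n : ℝ)⁻¹ = (n - a * u₀) / n := by field_simp; ring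
      have hd : (0 : ℝ) < n - a * u₀ := by linarith
      rw [e1, e2, e3, pow_succ _ n, div_div_div_cancel_right₀ hu₀.ne']
      generalize (n : ℝ) - a * u₀ = d at hd
      rw [← inv_pow, inv_div]
      field_simp
  rw [Metric.tendsto_atTop']
  intro ε hε
  obtain ⟨K, hK0, hK⟩ := norm_sub_le_of_continuous_of_exp_bound hc ha hb hu₀ (half_pos hε)
  have hev : ∀ᶠ n : ℕ in atTop, K * ((n / u₀ / (n / u₀ - a)) ^ (n + 1) *
      ((n + 2) * (n + 1) / (n / u₀ - a) ^ 2 - 2 * u₀ * (n + 1) / (n / u₀ - a) + u₀ ^ 2)) <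
        ε / 2 := by
    have := hmom.const_mul K
    rw [mul_zero] at this
    exact this.eventually (gt_mem_nhds (half_pos hε))
  obtain ⟨N, hN⟩ := eventually_atTop.1 (hev.and ((eventually_gt_atTop 0).and
    ((tendsto_natCast_atTop_atTop (R := ℝ)).eventually (eventually_gt_atTop (a * u₀)))))
  refine ⟨N, fun n hnN => ?_⟩
  obtain ⟨h1, hn0, hna⟩ := hN n hnN.le
  have hn0' : (0 : ℝ) < n := by exact_mod_cast hn0
  set x : ℝ := n / u₀ with hx
  have hx0 : 0 < x := by positivity
  have hxa : a < x := by rw [hx, lt_div_iff₀ hu₀]; linarith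
  have hxa' : 0 < x - a := by linarith
  set w : ℝ := x ^ (n + 1) / n.factorial with hw
  have hw0 : 0 < w := by positivity
  have hint := integral_pow_mul_exp_neg n hx0
  have hEint := integrableOn_laplace_integrand hc hb n (z := x) (by simpa using hxa)
  have hconst := (integrableOn_pow_mul_exp_neg n hx0)
  have hconst' : IntegrableOn (fun u : ℝ => (u : ℂ) ^ n * E u₀ * exp (-((x : ℂ) * u))) (Ioi 0) := by
    have : IntegrableOn (fun u : ℝ => E u₀ * ((u ^ n * Real.exp (-(x * u)) : ℝ) : ℂ)) (Ioi 0) :=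
      (hconst.ofReal (𝕜 := ℂ)).const_mul (E u₀)
    refine this.congr_fun (fun u _ => ?_) measurableSet_Ioi
    push_cast
    ring
  have hE0 : E u₀ = (w : ℂ) * ∫ u in Ioi (0 : ℝ), (u : ℂ) ^ n * E u₀ * exp (-((x : ℂ) * u)) := by
    have e : ∫ u in Ioi (0 : ℝ), (u : ℂ) ^ n * E u₀ * exp (-((x : ℂ) * u))
        = E u₀ * ((∫ u in Ioi (0 : ℝ), u ^ n * Real.exp (-(x * u)) : ℝ) : ℂ) := by
      rw [← integral_complex_ofReal, ← integral_const_mul]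
      refine setIntegral_congr_fun measurableSet_Ioi fun u _ => ?_
      push_cast
      ring
    rw [e, hint]
    have : w * (n.factorial / x ^ (n + 1)) = 1 := by rw [hw]; field_simp
    rw [mul_left_comm, ← ofReal_mul, this]; simp
  have hm2 := integrableOn_pow_mul_exp_neg (n + 2) hxa'
  have hm1 := integrableOn_pow_mul_exp_neg (n + 1) hxa'
  have hm0 := integrableOn_pow_mul_exp_neg n hxa'
  have hquad : ∀ u : ℝ, u ^ n * ((u - u₀) ^ 2 * Real.exp (a * u)) * Real.exp (-(x * u))
      = u ^ (n + 2) * Real.exp (-((x - a) * u)) - 2 * u₀ * (u ^ (n + 1) * Real.exp (-((x - a) * u)))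
        + u₀ ^ 2 * (u ^ n * Real.exp (-((x - a) * u))) := by
    intro u
    rw [show -((x - a) * u) = a * u + -(x * u) by ring, Real.exp_add]
    ring
  have hI : ∫ u in Ioi (0 : ℝ), u ^ n * ((u - u₀) ^ 2 * Real.exp (a * u)) * Real.exp (-(x * u))
      = (n + 2).factorial / (x - a) ^ (n + 3) - 2 * u₀ * ((n + 1).factorial / (x - a) ^ (n + 2))
        + u₀ ^ 2 * (n.factorial / (x - a) ^ (n + 1)) := by
    have hs : IntegrableOn (fun u : ℝ => u ^ (n + 2) * Real.exp (-((x - a) * u))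
        - 2 * u₀ * (u ^ (n + 1) * Real.exp (-((x - a) * u)))) (Ioi 0) := hm2.sub (hm1.const_mul _)
    simp only [hquad]
    rw [integral_add hs (hm0.const_mul _),
      integral_sub hm2 (hm1.const_mul _), integral_const_mul, integral_const_mul,
      integral_pow_mul_exp_neg _ hxa', integral_pow_mul_exp_neg _ hxa',
      integral_pow_mul_exp_neg _ hxa']
  have hquadint : IntegrableOn
      (fun u : ℝ => u ^ n * ((u - u₀) ^ 2 * Real.exp (a * u)) * Real.exp (-(x * u))) (Ioi 0) := by
    simp only [hquad]
    exact (hm2.sub (hm1.const_mul _)).add (hm0.const_mul _)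
  have hbd : ‖∫ u in Ioi (0 : ℝ), ((u : ℂ) ^ n * E u * exp (-((x : ℂ) * u))
      - (u : ℂ) ^ n * E u₀ * exp (-((x : ℂ) * u)))‖
      ≤ ∫ u in Ioi (0 : ℝ), (ε / 2 * (u ^ n * Real.exp (-(x * u)))
        + K * (u ^ n * ((u - u₀) ^ 2 * Real.exp (a * u)) * Real.exp (-(x * u)))) := by
    refine norm_integral_le_of_norm_le ((hconst.const_mul _).add (hquadint.const_mul _)) ?_
    filter_upwards [ae_restrict_mem measurableSet_Ioi] with u hu
    have hu' : (0 : ℝ) ≤ u := le_of_lt hu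
    rw [← sub_mul, ← mul_sub, norm_mul, norm_mul, norm_pow, norm_real, Real.norm_of_nonneg hu',
      norm_exp, neg_re, re_mul_ofReal, ofReal_re]
    calc u ^ n * ‖E u - E u₀‖ * Real.exp (-(x * u))
        ≤ u ^ n * (ε / 2 + K * ((u - u₀) ^ 2 * Real.exp (a * u))) * Real.exp (-(x * u)) := by
          have := hK u hu'
          gcongr
      _ = _ := by ring
  have hdist : (w : ℂ) * (∫ u in Ioi (0 : ℝ), (u : ℂ) ^ n * E u * exp (-((x : ℂ) * u))) - E u₀
      = w * (∫ u in Ioi (0 : ℝ), (u : ℂ) ^ n * E u * exp (-((x : ℂ) * u)))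
        - w * ∫ u in Ioi (0 : ℝ), (u : ℂ) ^ n * E u₀ * exp (-((x : ℂ) * u)) := by rw [← hE0]
  rw [dist_eq_norm, hdist, ← mul_sub, ← integral_sub hEint hconst', norm_mul, norm_real,
    Real.norm_of_nonneg hw0.le]
  rw [integral_add (hconst.const_mul _) (hquadint.const_mul _), integral_const_mul,
    integral_const_mul, hI, hint] at hbd
  calc w * ‖∫ u in Ioi (0 : ℝ), ((u : ℂ) ^ n * E u * exp (-((x : ℂ) * u))
          - (u : ℂ) ^ n * E u₀ * exp (-((x : ℂ) * u)))‖
      ≤ w * (ε / 2 * (n.factorial / x ^ (n + 1)) + K * ((n + 2).factorial / (x - a) ^ (n + 3)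
          - 2 * u₀ * ((n + 1).factorial / (x - a) ^ (n + 2))
          + u₀ ^ 2 * (n.factorial / (x - a) ^ (n + 1)))) := by gcongr
    _ = ε / 2 + K * ((x / (x - a)) ^ (n + 1) *
      ((n + 2) * (n + 1) / (x - a) ^ 2 - 2 * u₀ * (n + 1) / (x - a) + u₀ ^ 2)) := by
        rw [hw, Nat.factorial_succ (n + 1), Nat.factorial_succ n]
        push_cast
        generalize x - a = y at hxa'
        clear_value x
        rw [div_pow]
        field_simp
        ring
    _ < ε := by linarith

/-- A function whose Laplace transform extends to one with Taylor coefficients of geometric decay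
is bounded. -/
lemma norm_le_of_laplace_of_iteratedDeriv_le (hc : ContinuousOn E (Ici 0)) (ha : 0 ≤ a)
    (hb : ∀ u, 0 ≤ u → ‖E u‖ ≤ C * Real.exp (a * u)) {Q : ℂ → ℂ} {B : ℝ}
    (hQ : ∀ z : ℂ, a < z.re → Q z = ∫ u in Ioi (0 : ℝ), E u * exp (-(z * u)))
    (hB : ∀ (n : ℕ) (x : ℝ), 1 / 2 < x →
      ‖iteratedDeriv n Q x‖ / n.factorial * x ^ n * (x - 1 / 4) ≤ B) {u₀ : ℝ} (hu₀ : 0 < u₀) :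
    ‖E u₀‖ ≤ B := by
  have hx : Tendsto (fun n : ℕ => (n : ℝ) / u₀) atTop atTop :=
    tendsto_natCast_atTop_atTop.atTop_div_const hu₀
  have hlim := (tendsto_postWidder hc ha hb hu₀).norm
  have hlim2 : Tendsto (fun n : ℕ => B * (1 + 1 / 4 / ((n : ℝ) / u₀ - 1 / 4))) atTop (𝓝 B) := by
    have h1 : Tendsto (fun n : ℕ => (n : ℝ) / u₀ - 1 / 4) atTop atTop :=
      tendsto_atTop_add_const_right _ _ hx
    have h2 := (h1.const_div_atTop (1 / 4)).const_add 1 |>.const_mul B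
    simpa using h2
  refine le_of_tendsto_of_tendsto hlim hlim2 ?_
  filter_upwards [hx.eventually (eventually_gt_atTop a),
    hx.eventually (eventually_gt_atTop (1 / 2))] with n hna hn2
  set x : ℝ := n / u₀
  have h1 := hB n x hn2
  have h2 : iteratedDeriv n Q x
      = (-1) ^ n * ∫ u in Ioi (0 : ℝ), (u : ℂ) ^ n * E u * exp (-((x : ℂ) * u)) := by
    rw [← iteratedDeriv_laplace hc hb n x (by simpa using hna)]
    refine Filter.EventuallyEq.iteratedDeriv_eq n ?_
    filter_upwards [(isOpen_lt continuous_const continuous_re).mem_nhds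
      (show a < (x : ℂ).re by simpa using hna)] with w hw
    exact hQ w hw
  have hx0 : 0 < x := by linarith
  have hx4 : 0 < x - 1 / 4 := by linarith
  rw [h2, norm_mul, norm_pow, norm_neg, norm_one, one_pow, one_mul] at h1
  rw [norm_mul, norm_real, Real.norm_of_nonneg (by positivity)]
  generalize ‖∫ u in Ioi (0 : ℝ), (u : ℂ) ^ n * E u * exp (-((x : ℂ) * u))‖ = Y at h1 ⊢
  have h3 : x ^ (n + 1) / n.factorial * Y
      = (Y / n.factorial * x ^ n * (x - 1 / 4)) * (1 + 1 / 4 / (x - 1 / 4)) := by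
    obtain ⟨y, hy⟩ : ∃ y, y = x - 1 / 4 := ⟨_, rfl⟩
    rw [← hy] at hx4 ⊢
    rw [show x = y + 1 / 4 by rw [hy]; ring, pow_succ]
    field_simp
  rw [h3]
  gcongr

end Laplace

end PostWidder

section DigammaAsymptotics

open Set Filter Topology

section DigammaSeries
open Real

lemma differentiableAt_log_Gamma {x : ℝ} (hx : 0 < x) : DifferentiableAt ℝ (log ∘ Gamma) x :=
  (differentiableAt_Gamma fun m => ne_of_gt (by have : (0 : ℝ) ≤ m := m.cast_nonneg
                                                linarith)).log
    (Gamma_pos_of_pos hx).ne'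

lemma log_Gamma_add_one {x : ℝ} (hx : 0 < x) :
    (log ∘ Gamma) (x + 1) = (log ∘ Gamma) x + log x := by
  simp only [Function.comp_apply, Gamma_add_one hx.ne', log_mul hx.ne' (Gamma_pos_of_pos hx).ne',
    add_comm]

lemma deriv_log_Gamma_add_one {x : ℝ} (hx : 0 < x) :
    deriv (log ∘ Gamma) (x + 1) = deriv (log ∘ Gamma) x + 1 / x := by
  rw [← deriv_comp_add_const, one_div, ← deriv_log,
    ← deriv_add (differentiableAt_log_Gamma hx) (differentiableAt_log hx.ne')]
  apply EventuallyEq.deriv_eq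
  filter_upwards [eventually_gt_nhds hx] with y hy using log_Gamma_add_one hy

lemma deriv_log_Gamma_le {x : ℝ} (hx : 0 < x) : deriv (log ∘ Gamma) x ≤ log x := by
  refine (convexOn_log_Gamma.deriv_le_slope hx (show (0 : ℝ) < x + 1 by positivity) (by linarith)
    (differentiableAt_log_Gamma hx)).trans (le_of_eq ?_)
  rw [slope_def_field, add_sub_cancel_left, div_one, log_Gamma_add_one hx, add_sub_cancel_left]

lemma log_sub_inv_le_deriv_log_Gamma {x : ℝ} (hx : 0 < x) :
    log x - 1 / x ≤ deriv (log ∘ Gamma) x := by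
  have h := convexOn_log_Gamma.slope_le_deriv hx (show (0 : ℝ) < x + 1 by positivity) (by linarith)
    (differentiableAt_log_Gamma (by positivity))
  rw [slope_def_field, add_sub_cancel_left, div_one, log_Gamma_add_one hx, add_sub_cancel_left,
    deriv_log_Gamma_add_one hx] at h
  linarith

lemma deriv_log_Gamma_add_nat {x : ℝ} (hx : 0 < x) (N : ℕ) :
    deriv (log ∘ Gamma) (x + N) = deriv (log ∘ Gamma) x + ∑ n ∈ Finset.range N, 1 / (x + n) := by
  induction N with
  | zero => simp
  | succ N ih =>
    rw [Finset.sum_range_succ, ← add_assoc, ← ih, ← deriv_log_Gamma_add_one (by positivity)]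
    push_cast
    rw [add_assoc]

lemma tendsto_deriv_log_Gamma_sub_log :
    Tendsto (fun x => deriv (log ∘ Gamma) x - log x) atTop (𝓝 0) := by
  have h : Tendsto (fun x : ℝ => -(1 / x)) atTop (𝓝 0) := by
    simpa using (tendsto_inv_atTop_zero (𝕜 := ℝ)).neg
  refine tendsto_of_tendsto_of_tendsto_of_le_of_le' h tendsto_const_nhds ?_ ?_
  · filter_upwards [eventually_gt_atTop 0] with x hx
    linarith [log_sub_inv_le_deriv_log_Gamma hx]
  · filter_upwards [eventually_gt_atTop 0] with x hx
    linarith [deriv_log_Gamma_le hx]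

lemma hasSum_deriv_log_Gamma_sub {x y : ℝ} (hx : 0 < x) (hxy : x ≤ y) :
    HasSum (fun n : ℕ => 1 / (x + n) - 1 / (y + n))
      (deriv (log ∘ Gamma) y - deriv (log ∘ Gamma) x) := by
  have hy : 0 < y := hx.trans_le hxy
  rw [hasSum_iff_tendsto_nat_of_nonneg]
  · have t : ∀ z : ℝ, Tendsto (fun N : ℕ => z + N) atTop atTop := fun z =>
      tendsto_atTop_add_const_left _ _ tendsto_natCast_atTop_atTop
    have h1 := tendsto_deriv_log_Gamma_sub_log.comp (t x)
    have h2 := tendsto_deriv_log_Gamma_sub_log.comp (t y)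
    have h3 : Tendsto (fun N : ℕ => log (x + N) - log (y + N)) atTop (𝓝 0) := by
      have h4 : Tendsto (fun N : ℕ => (x + N) / (y + N)) atTop (𝓝 1) := by
        have h5 : Tendsto (fun N : ℕ => 1 + (x - y) / (y + N)) atTop (𝓝 (1 + 0)) :=
          ((t y).const_div_atTop (x - y)).const_add 1
        rw [add_zero] at h5
        refine h5.congr fun N => ?_
        have : y + N ≠ 0 := by positivity
        field_simp
        ring
      have h6 := h4.log one_ne_zero
      rw [log_one] at h6
      refine h6.congr fun N => ?_
      rw [log_div (by positivity) (by positivity)]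
    have h := ((h1.sub h2).add h3).const_add (deriv (log ∘ Gamma) y - deriv (log ∘ Gamma) x)
    simp only [sub_zero, add_zero] at h
    refine h.congr fun N => ?_
    simp only [Function.comp_def]
    have e1 := deriv_log_Gamma_add_nat hx N
    have e2 := deriv_log_Gamma_add_nat hy N
    simp only [Function.comp_def] at e1 e2
    rw [e1, e2, Finset.sum_sub_distrib]
    ring
  · intro n
    have : 1 / (y + n) ≤ 1 / (x + n) := by gcongr
    linarith

lemma digamma_ofReal {x : ℝ} (hx : 0 < x) :
    Complex.digamma x = (deriv (log ∘ Gamma) x : ℝ) := by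
  have hG : DifferentiableAt ℂ Complex.Gamma x :=
    Complex.differentiableAt_Gamma _ fun m => by
      rw [← Complex.ofReal_natCast, ← Complex.ofReal_neg, Ne, Complex.ofReal_inj]
      have : (0 : ℝ) ≤ m := m.cast_nonneg
      linarith
  have h1 : HasDerivAt (fun y : ℝ => ((Gamma y : ℝ) : ℂ)) (deriv Complex.Gamma x) x := by
    refine hG.hasDerivAt.comp_ofReal.congr_of_eventuallyEq (Eventually.of_forall fun y => ?_)
    exact (Complex.Gamma_ofReal y).symm
  have hGr : DifferentiableAt ℝ Gamma x :=
    differentiableAt_Gamma fun m => ne_of_gt (by have : (0 : ℝ) ≤ m := m.cast_nonneg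
                                                 linarith)
  have h2 := h1.unique hGr.hasDerivAt.ofReal_comp
  have h3 : deriv (log ∘ Gamma) x = deriv Gamma x / Gamma x :=
    deriv.log hGr (Gamma_pos_of_pos hx).ne'
  rw [Complex.digamma_def, logDeriv_apply, h2, h3, Complex.Gamma_ofReal]
  push_cast
  rfl

lemma deriv_log_Gamma_three_halves :
    deriv (log ∘ Gamma) (3 / 2) = 2 - 2 * log 2 - eulerMascheroniConstant := by
  have h := digamma_ofReal (x := 1 / 2) (by norm_num)
  have h2 := Complex.digamma_one_half
  rw [show ((1 / 2 : ℝ) : ℂ) = 1 / 2 by push_cast; rfl, h2] at h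
  have h3 := deriv_log_Gamma_add_one (x := 1 / 2) (by norm_num)
  rw [show (1 / 2 + 1 : ℝ) = 3 / 2 by norm_num] at h3
  have h4 : deriv (log ∘ Gamma) (1 / 2) = - 2 * log 2 - eulerMascheroniConstant := by
    have : Complex.log 2 = ((log 2 : ℝ) : ℂ) := by
      rw [Complex.ofReal_log (by norm_num)]; norm_num
    rw [this] at h
    generalize log 2 = t at h ⊢
    exact_mod_cast h.symm
  rw [h3, h4]
  ring

end DigammaSeries

end DigammaAsymptotics

section RampSums

open Set Filter Topology MeasureTheory Real

/-- The piecewise linear function with slope increments `a n` at `log n`. -/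
noncomputable def ramp (a : ℕ → ℝ) (u : ℝ) : ℝ := ∑' n, a n * max (u - log n) 0

lemma ramp_term_eq_zero (a : ℕ → ℝ) {u : ℝ} {n : ℕ} (h : exp u ≤ n) :
    a n * max (u - log n) 0 = 0 := by
  have : u ≤ log n := by rwa [le_log_iff_exp_le ((exp_pos u).trans_le h)]
  rw [max_eq_right (by linarith), mul_zero]

lemma ramp_eq_sum (a : ℕ → ℝ) {u : ℝ} {N : ℕ} (hN : exp u ≤ N) :
    ramp a u = ∑ n ∈ Finset.range N, a n * max (u - log n) 0 :=
  tsum_eq_sum fun n hn => ramp_term_eq_zero a (hN.trans (by simpa using hn))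

lemma continuous_ramp (a : ℕ → ℝ) : Continuous (ramp a) := by
  refine continuous_iff_continuousAt.2 fun u => ?_
  have h : ramp a =ᶠ[𝓝 u] fun v => ∑ n ∈ Finset.range ⌈exp (u + 1)⌉₊,
      a n * max (v - log n) 0 := by
    filter_upwards [gt_mem_nhds (show u < u + 1 by linarith)] with v hv
    exact ramp_eq_sum a ((exp_le_exp.2 hv.le).trans (Nat.le_ceil _))
  refine ContinuousAt.congr ?_ h.symm
  exact Continuous.continuousAt (by fun_prop)

lemma ramp_nonneg {a : ℕ → ℝ} (ha : ∀ n, 0 ≤ a n) (u : ℝ) : 0 ≤ ramp a u :=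
  tsum_nonneg fun n => mul_nonneg (ha n) (le_max_right _ _)

lemma ramp_le {a : ℕ → ℝ} (ha : ∀ n, 0 ≤ a n) (ha1 : ∀ n, a n ≤ 1) {u : ℝ} (hu : 0 ≤ u) :
    ramp a u ≤ 2 * exp (2 * u) := by
  rw [ramp_eq_sum a (Nat.le_ceil (exp u))]
  have h1 : ∀ n ∈ Finset.range ⌈exp u⌉₊, a n * max (u - log n) 0 ≤ u := fun n _ => by
    have : max (u - log n) 0 ≤ u := max_le (by linarith [log_natCast_nonneg n]) hu
    nlinarith [ha n, ha1 n, le_max_right (u - log n) 0]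
  have h2 : (⌈exp u⌉₊ : ℝ) ≤ 2 * exp u := by
    linarith [Nat.ceil_lt_add_one (exp_pos u).le, one_le_exp hu]
  calc _ ≤ ∑ n ∈ Finset.range ⌈exp u⌉₊, u := Finset.sum_le_sum h1
    _ = ⌈exp u⌉₊ * u := by simp
    _ ≤ 2 * exp u * exp u := by
        have := add_one_le_exp u
        gcongr
        linarith
    _ = 2 * exp (2 * u) := by rw [two_mul u, exp_add]; ring

lemma integral_max_sub_mul_exp_neg {s v : ℝ} (hs : 0 < s) (hv : 0 ≤ v) :
    IntegrableOn (fun u => max (u - v) 0 * exp (-(s * u))) (Ioi 0) ∧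
    ∫ u in Ioi (0 : ℝ), max (u - v) 0 * exp (-(s * u)) = exp (-(s * v)) / s ^ 2 := by
  set g : ℝ → ℝ := (Ioi 0).indicator fun t => t ^ 1 * exp (-(s * t)) with hg
  have hgi : Integrable g := (integrable_indicator_iff measurableSet_Ioi).2
    (integrableOn_pow_mul_exp_neg 1 hs)
  have hgv : ∫ t, g t = 1 / s ^ 2 := by
    rw [integral_indicator measurableSet_Ioi, integral_pow_mul_exp_neg 1 hs]
    simp
  have e : (Ioi (0 : ℝ)).indicator (fun u => max (u - v) 0 * exp (-(s * u)))
      = fun u => exp (-(s * v)) * g (u - v) := by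
    ext u
    by_cases h : v < u
    · have h0 : 0 < u := hv.trans_lt h
      have h1 : 0 < u - v := by linarith
      simp only [hg, indicator_of_mem (mem_Ioi.2 h0), indicator_of_mem (mem_Ioi.2 h1), pow_one]
      rw [max_eq_left h1.le, mul_left_comm, ← exp_add]
      ring_nf
    · have h1 : ¬ 0 < u - v := by linarith
      have h2 : max (u - v) 0 = 0 := max_eq_right (by linarith)
      simp only [hg, indicator_of_notMem (show u - v ∉ Ioi (0 : ℝ) from h1), mul_zero]
      by_cases h0 : u ∈ Ioi (0 : ℝ)
      · rw [indicator_of_mem h0, h2, zero_mul]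
      · rw [indicator_of_notMem h0]
  constructor
  · rw [← integrable_indicator_iff measurableSet_Ioi, e]
    exact (hgi.comp_sub_right v).const_mul _
  · rw [← integral_indicator measurableSet_Ioi, e, integral_const_mul, integral_sub_right_eq_self g,
      hgv, mul_one_div]

lemma exp_neg_mul_log_natCast {s : ℝ} {n : ℕ} (hn : n ≠ 0) :
    exp (-(s * log n)) = (n : ℝ) ^ (-s) := by
  rw [rpow_def_of_pos (by positivity)]
  ring_nf

lemma laplace_ramp {a : ℕ → ℝ} (ha : ∀ n, 0 ≤ a n) (ha0 : a 0 = 0) {s : ℝ} (hs : 0 < s)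
    (hsum : Summable fun n => a n * (n : ℝ) ^ (-s)) :
    IntegrableOn (fun u => ramp a u * exp (-(s * u))) (Ioi 0) ∧
    ∫ u in Ioi (0 : ℝ), ramp a u * exp (-(s * u)) = (∑' n, a n * (n : ℝ) ^ (-s)) / s ^ 2 := by
  set F : ℕ → ℝ → ℝ := fun n u => a n * (max (u - log n) 0 * exp (-(s * u))) with hF
  have hi : ∀ n, IntegrableOn (F n) (Ioi 0) := fun n =>
    (integral_max_sub_mul_exp_neg hs (log_natCast_nonneg n)).1.const_mul _
  have hv : ∀ n, ∫ u in Ioi (0 : ℝ), F n u = a n * (n : ℝ) ^ (-s) / s ^ 2 := fun n => by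
    rw [integral_const_mul, (integral_max_sub_mul_exp_neg hs (log_natCast_nonneg n)).2]
    rcases eq_or_ne n 0 with rfl | hn
    · simp [ha0]
    · rw [exp_neg_mul_log_natCast hn, mul_div_assoc]
  have hn : ∀ n, ∫ u in Ioi (0 : ℝ), ‖F n u‖ = a n * (n : ℝ) ^ (-s) / s ^ 2 := fun n => by
    rw [← hv n]
    refine setIntegral_congr_fun measurableSet_Ioi fun u _ => ?_
    exact norm_of_nonneg (mul_nonneg (ha n) (mul_nonneg (le_max_right _ _) (exp_pos _).le))
  have h := hasSum_integral_of_summable_integral_norm hi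
    (by simpa only [hn] using hsum.div_const (s ^ 2))
  have hramp : (fun u => ∑' n, F n u) = fun u => ramp a u * exp (-(s * u)) := by
    ext u
    rw [ramp, ← tsum_mul_right]
    simp only [hF, mul_assoc]
  rw [hramp] at h
  simp only [hv] at h
  have hval := h.unique (hsum.hasSum.div_const (s ^ 2))
  refine ⟨?_, hval⟩
  by_cases h0 : ∀ n, a n = 0
  · have : (fun u => ramp a u * exp (-(s * u))) = fun _ => 0 := by
      ext u
      simp [ramp, h0]
    rw [this]
    exact integrableOn_zero
  · push Not at h0
    obtain ⟨n, hn0⟩ := h0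
    have hn00 : n ≠ 0 := fun h => hn0 (h ▸ ha0)
    by_contra hni
    rw [integral_undef hni] at hval
    have hpos : 0 < ∑' n, a n * (n : ℝ) ^ (-s) := hsum.tsum_pos
      (fun n => mul_nonneg (ha n) (by positivity)) n
      (mul_pos ((ha n).lt_of_ne' hn0) (by positivity))
    have : 0 < (∑' n, a n * (n : ℝ) ^ (-s)) / s ^ 2 := by positivity
    linarith

end RampSums

section ArchimedeanTerm

open Set Filter Topology MeasureTheory Real

lemma hasSum_one_div_mul_succ :
    HasSum (fun j : ℕ => 1 / 4 * (1 / ((j : ℝ) + 1) - 1 / ((j : ℝ) + 2))) (1 / 4) := by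
  rw [hasSum_iff_tendsto_nat_of_nonneg]
  · have h : ∀ N : ℕ, ∑ j ∈ Finset.range N, 1 / 4 * (1 / ((j : ℝ) + 1) - 1 / ((j : ℝ) + 2))
        = 1 / 4 * (1 - 1 / ((N : ℝ) + 1)) := by
      intro N
      induction N with
      | zero => simp
      | succ N ih =>
        rw [Finset.sum_range_succ, ih]
        push_cast
        ring
    simp only [h]
    have h2 : Tendsto (fun N : ℕ => 1 / ((N : ℝ) + 1)) atTop (𝓝 0) :=
      tendsto_one_div_add_atTop_nhds_zero_nat
    have h3 := (h2.const_sub 1).const_mul (1 / 4 : ℝ)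
    rwa [sub_zero, mul_one] at h3
  · intro j
    have : 1 / ((j : ℝ) + 2) ≤ 1 / ((j : ℝ) + 1) := by gcongr; norm_num
    linarith

lemma one_div_odd_sq_le (j : ℕ) :
    1 / (2 * (j : ℝ) + 3) ^ 2 ≤ 1 / 4 * (1 / ((j : ℝ) + 1) - 1 / ((j : ℝ) + 2)) := by
  have : 1 / 4 * (1 / ((j : ℝ) + 1) - 1 / ((j : ℝ) + 2)) = 1 / (4 * ((j + 1) * (j + 2))) := by
    field_simp; ring
  rw [this]
  gcongr
  nlinarith

lemma summable_one_div_odd_sq : Summable fun j : ℕ => 1 / (2 * (j : ℝ) + 3) ^ 2 :=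
  hasSum_one_div_mul_succ.summable.of_nonneg_of_le (fun j => by positivity) one_div_odd_sq_le

lemma tsum_one_div_odd_sq_le : ∑' j : ℕ, 1 / (2 * (j : ℝ) + 3) ^ 2 ≤ 1 / 4 := by
  rw [← hasSum_one_div_mul_succ.tsum_eq]
  exact summable_one_div_odd_sq.tsum_le_tsum one_div_odd_sq_le hasSum_one_div_mul_succ.summable

/-- The inverse Laplace transform of the archimedean term in the explicit formula. -/
noncomputable def archKernel (u : ℝ) : ℝ :=
  ∑' j : ℕ, 1 / (2 * (j : ℝ) + 3) ^ 2 * exp (-((2 * j + 5 / 2) * u))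

lemma archKernel_term_le {u : ℝ} (hu : 0 ≤ u) (j : ℕ) :
    1 / (2 * (j : ℝ) + 3) ^ 2 * exp (-((2 * j + 5 / 2) * u))
      ≤ 1 / (2 * (j : ℝ) + 3) ^ 2 * exp (-(5 / 2 * u)) := by
  have : (0 : ℝ) ≤ j := j.cast_nonneg
  gcongr
  linarith

lemma archKernel_nonneg (u : ℝ) : 0 ≤ archKernel u := tsum_nonneg fun j => by positivity

lemma archKernel_le {u : ℝ} (hu : 0 ≤ u) : archKernel u ≤ 1 / 4 * exp (-(5 / 2 * u)) := by
  have hs := summable_one_div_odd_sq.mul_right (exp (-(5 / 2 * u)))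
  calc archKernel u ≤ ∑' j : ℕ, 1 / (2 * (j : ℝ) + 3) ^ 2 * exp (-(5 / 2 * u)) :=
        (hs.of_nonneg_of_le (fun j => by positivity)
          (archKernel_term_le hu)).tsum_le_tsum (archKernel_term_le hu) hs
    _ = (∑' j : ℕ, 1 / (2 * (j : ℝ) + 3) ^ 2) * exp (-(5 / 2 * u)) := tsum_mul_right
    _ ≤ 1 / 4 * exp (-(5 / 2 * u)) := by
        have := tsum_one_div_odd_sq_le
        gcongr

lemma continuousOn_archKernel : ContinuousOn archKernel (Ici 0) := by
  refine continuousOn_tsum (fun j => by fun_prop) summable_one_div_odd_sq fun j u hu => ?_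
  rw [norm_of_nonneg (by positivity)]
  refine (archKernel_term_le hu j).trans ?_
  have h1 : exp (-(5 / 2 * u)) ≤ 1 := by
    have : (0 : ℝ) ≤ u := hu
    rw [exp_le_one_iff]
    linarith
  have : 0 ≤ 1 / (2 * (j : ℝ) + 3) ^ 2 := by positivity
  nlinarith

lemma laplace_archKernel {w : ℝ} (hw : 0 < w) :
    IntegrableOn (fun u => archKernel u * exp (-(w * u))) (Ioi 0) ∧
    ∫ u in Ioi (0 : ℝ), archKernel u * exp (-(w * u))
      = ∑' j : ℕ, 1 / (2 * (j : ℝ) + 3) ^ 2 / (w + (2 * j + 5 / 2)) := by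
  have hwj : ∀ j : ℕ, 0 < w + (2 * (j : ℝ) + 5 / 2) := fun j => by positivity
  set F : ℕ → ℝ → ℝ := fun j u =>
    1 / (2 * (j : ℝ) + 3) ^ 2 * (u ^ 0 * exp (-((w + (2 * j + 5 / 2)) * u))) with hF
  have hi : ∀ j, IntegrableOn (F j) (Ioi 0) := fun j =>
    (integrableOn_pow_mul_exp_neg 0 (hwj j)).const_mul _
  have hv : ∀ j, ∫ u in Ioi (0 : ℝ), F j u
      = 1 / (2 * (j : ℝ) + 3) ^ 2 / (w + (2 * j + 5 / 2)) := fun j => by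
    rw [integral_const_mul, integral_pow_mul_exp_neg 0 (hwj j)]
    simp [div_eq_mul_inv]
  have hn : ∀ j, ∫ u in Ioi (0 : ℝ), ‖F j u‖
      = 1 / (2 * (j : ℝ) + 3) ^ 2 / (w + (2 * j + 5 / 2)) := fun j => by
    rw [← hv j]
    refine setIntegral_congr_fun measurableSet_Ioi fun u _ => ?_
    exact norm_of_nonneg (by simp only [hF, pow_zero]; positivity)
  have hsum : Summable fun j : ℕ => 1 / (2 * (j : ℝ) + 3) ^ 2 / (w + (2 * j + 5 / 2)) := by
    refine (summable_one_div_odd_sq.mul_right (1 / w)).of_nonneg_of_le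
      (fun j => div_nonneg (by positivity) (hwj j).le) fun j => ?_
    rw [mul_one_div]
    gcongr
    have : (0 : ℝ) ≤ j := j.cast_nonneg
    linarith
  have h := hasSum_integral_of_summable_integral_norm hi (by simpa only [hn] using hsum)
  have hk : (fun u => ∑' j, F j u) = fun u => archKernel u * exp (-(w * u)) := by
    ext u
    rw [archKernel, ← tsum_mul_right]
    refine tsum_congr fun j => ?_
    simp only [hF, pow_zero, one_mul]
    rw [mul_assoc, ← exp_add]
    ring_nf
  rw [hk] at h
  simp only [hv] at h
  have hval := h.unique hsum.hasSum
  refine ⟨?_, hval⟩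
  by_contra hni
  rw [integral_undef hni] at hval
  have hpos := hsum.tsum_pos (fun j => div_nonneg (by positivity) (hwj j).le) 0
    (div_pos (by positivity) (hwj 0))
  linarith

lemma deriv_log_Gamma_eq_tsum {s : ℝ} (hs : 0 ≤ s) :
    deriv (log ∘ Gamma) (3 / 2 + s / 2) = deriv (log ∘ Gamma) (3 / 2)
      + 2 * s * ∑' j : ℕ, 1 / (2 * (j : ℝ) + 3) ^ 2
      - 2 * s ^ 2 * ∑' j : ℕ, 1 / (2 * (j : ℝ) + 3) ^ 2 / (s + 1 / 2 + (2 * j + 5 / 2)) := by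
  have h := hasSum_deriv_log_Gamma_sub (x := 3 / 2) (y := 3 / 2 + s / 2) (by norm_num)
    (by linarith)
  have hsum : Summable fun j : ℕ => 1 / (2 * (j : ℝ) + 3) ^ 2 / (s + 1 / 2 + (2 * j + 5 / 2)) := by
    refine summable_one_div_odd_sq.of_nonneg_of_le
      (fun j => by positivity) fun j => ?_
    have : (0 : ℝ) ≤ j := j.cast_nonneg
    exact div_le_self (by positivity) (by linarith)
  have h2 := (summable_one_div_odd_sq.hasSum.mul_left (2 * s)).sub
    (hsum.hasSum.mul_left (2 * s ^ 2))
  have h3 : (fun n : ℕ => 1 / (3 / 2 + (n : ℝ)) - 1 / (3 / 2 + s / 2 + n)) = fun j : ℕ =>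
      2 * s * (1 / (2 * (j : ℝ) + 3) ^ 2)
        - 2 * s ^ 2 * (1 / (2 * (j : ℝ) + 3) ^ 2 / (s + 1 / 2 + (2 * j + 5 / 2))) := by
    ext j
    have : (0 : ℝ) ≤ j := j.cast_nonneg
    have e1 : (3 / 2 + (j : ℝ)) = (2 * j + 3) / 2 := by ring
    have e2 : 3 / 2 + s / 2 + (j : ℝ) = (2 * j + 3 + s) / 2 := by ring
    have e3 : s + 1 / 2 + (2 * (j : ℝ) + 5 / 2) = 2 * j + 3 + s := by ring
    rw [e1, e2, e3]
    have : (2 * (j : ℝ) + 3) ≠ 0 := by positivity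
    have : (2 * (j : ℝ) + 3 + s) ≠ 0 := by positivity
    field_simp
    ring
  rw [h3] at h
  have := h.unique h2
  linarith

end ArchimedeanTerm

section LogDerivXi

open Set Filter Topology MeasureTheory Complex

local notation "γ" => Real.eulerMascheroniConstant
local notation "Λ" => ArithmeticFunction.vonMangoldt

lemma logDeriv_xiGamma {s : ℂ} (hs : 0 < s.re) :
    logDeriv xiGamma s = -(Real.log Real.pi : ℝ) / 2 + digamma (1 + s / 2) / 2 := by
  have hpi : (Real.pi : ℂ) ≠ 0 := by exact_mod_cast Real.pi_ne_zero
  have hre : 0 < (1 + s / 2).re := by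
    have : (s / 2).re = s.re / 2 := by simp
    rw [add_re, one_re, this]; linarith
  have hΓ : DifferentiableAt ℂ Gamma (1 + s / 2) :=
    differentiableAt_Gamma _ fun m h => by
      have := congrArg re h
      simp only [neg_re, natCast_re] at this
      have : (0 : ℝ) ≤ m := m.cast_nonneg
      linarith
  have h1 : HasDerivAt (fun s : ℂ => 1 + s / 2) (1 / 2) s := by
    simpa using ((hasDerivAt_id s).div_const 2).const_add 1
  have h2 : HasDerivAt (fun s : ℂ => -s / 2) (-1 / 2) s := by
    simpa using ((hasDerivAt_id s).neg.div_const 2)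
  have h3 := hΓ.hasDerivAt.comp s h1
  have h4 := h2.const_cpow (c := (Real.pi : ℂ)) (Or.inl hpi)
  have h5 := h4.mul h3
  have h6 : HasDerivAt xiGamma _ s := h5
  rw [logDeriv_apply, h6.deriv, digamma_def, logDeriv_apply, xiGamma]
  have e1 : (Real.pi : ℂ) ^ (-s / 2) ≠ 0 := by simp [cpow_eq_zero_iff, hpi]
  have e2 : Gamma (1 + s / 2) ≠ 0 := Gamma_ne_zero_of_re_pos hre
  rw [Complex.ofReal_log Real.pi_pos.le]
  simp only [Function.comp_apply]
  generalize Gamma (1 + s / 2) = g at e2 ⊢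
  generalize deriv Gamma (1 + s / 2) = g'
  generalize (Real.pi : ℂ) ^ (-s / 2) = q at e1 ⊢
  field_simp

lemma summable_vonMangoldt_rpow {s : ℝ} (hs : 0 < s) :
    Summable (fun n : ℕ => Λ n / n * (n : ℝ) ^ (-s)) ∧
    LSeries (fun n => (Λ n : ℂ)) (1 + s) = ((∑' n : ℕ, Λ n / n * (n : ℝ) ^ (-s) : ℝ) : ℂ) := by
  have h1 : LSeriesSummable (fun n => (Λ n : ℂ)) (1 + s) :=
    ArithmeticFunction.LSeriesSummable_vonMangoldt (by simpa using hs)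
  have h2 : ∀ n : ℕ, LSeries.term (fun n => (Λ n : ℂ)) (1 + s) n
      = ((Λ n / n * (n : ℝ) ^ (-s) : ℝ) : ℂ) := by
    intro n
    rcases eq_or_ne n 0 with rfl | hn
    · simp
    · have hn' : (n : ℂ) ≠ 0 := by exact_mod_cast hn
      rw [LSeries.term_of_ne_zero hn, cpow_add _ _ hn', cpow_one, ofReal_mul,
        ofReal_cpow n.cast_nonneg]
      push_cast
      rw [cpow_neg, div_mul_eq_div_div]
      ring
  constructor
  · rw [LSeriesSummable] at h1
    simp only [funext h2] at h1
    exact summable_ofReal.1 h1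
  · rw [LSeries, ofReal_tsum]
    exact tsum_congr h2

lemma logDeriv_riemannZeta₁ {s : ℝ} (hs : 0 < s) :
    logDeriv riemannZeta₁ (1 + s) = ((1 / s - ∑' n : ℕ, Λ n / n * (n : ℝ) ^ (-s) : ℝ) : ℂ) := by
  have hs' : (s : ℂ) ≠ 0 := by exact_mod_cast hs.ne'
  have hne : (1 + s : ℂ) ≠ 1 := by simpa using hs'
  have hre : 1 < (1 + s : ℂ).re := by simpa using hs
  have he : riemannZeta₁ =ᶠ[𝓝 (1 + s : ℂ)] fun z => (z - 1) * riemannZeta z := by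
    filter_upwards [isOpen_ne.mem_nhds hne] with z hz using riemannZeta₁_eq_mul hz
  have hL := ArithmeticFunction.LSeries_vonMangoldt_eq_deriv_riemannZeta_div hre
  rw [(summable_vonMangoldt_rpow hs).2] at hL
  have hζ : riemannZeta (1 + s) ≠ 0 := riemannZeta_ne_zero_of_one_lt_re hre
  have hd := ((hasDerivAt_id (1 + s : ℂ)).sub_const 1).mul
    (differentiableAt_riemannZeta hne).hasDerivAt
  have hd' : HasDerivAt (fun z => (z - 1) * riemannZeta z) _ (1 + s : ℂ) := hd
  rw [logDeriv_apply, he.deriv_eq, he.eq_of_nhds, hd'.deriv, ofReal_sub, hL]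
  simp only [id, add_sub_cancel_left]
  push_cast
  field_simp
  ring

lemma logDeriv_riemannXi {s : ℂ} (hs : 0 < s.re) (hz : riemannZeta₁ s ≠ 0) :
    logDeriv riemannXi s = logDeriv riemannZeta₁ s
      + (-(Real.log Real.pi : ℝ) / 2 + digamma (1 + s / 2) / 2) := by
  rw [← logDeriv_xiGamma hs]
  exact logDeriv_mul s hz (xiGamma_ne_zero hs) (differentiable_riemannZeta₁ s)
    (differentiableAt_xiGamma hs)

lemma riemannZeta₁_one_add_ne_zero {s : ℝ} (hs : 0 ≤ s) : riemannZeta₁ (1 + s) ≠ 0 := by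
  rcases hs.eq_or_lt with rfl | hs
  · simp
  · have hs' : (s : ℂ) ≠ 0 := by exact_mod_cast hs.ne'
    rw [riemannZeta₁_eq_mul (by simpa using hs'), add_sub_cancel_left]
    exact mul_ne_zero hs' (riemannZeta_ne_zero_of_one_lt_re (by simpa using hs))

lemma digamma_three_halves_add {s : ℝ} (hs : 0 ≤ s) :
    digamma (1 + (1 + s : ℂ) / 2)
      = (deriv (Real.log ∘ Real.Gamma) (3 / 2 + s / 2) : ℝ) := by
  rw [← digamma_ofReal (by linarith)]
  congr 1
  push_cast
  ring

lemma logDeriv_riemannXi_one_add {s : ℝ} (hs : 0 < s) :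
    logDeriv riemannXi (1 + s) = ((1 / s - ∑' n : ℕ, Λ n / n * (n : ℝ) ^ (-s)
      - Real.log Real.pi / 2 + deriv (Real.log ∘ Real.Gamma) (3 / 2 + s / 2) / 2 : ℝ) : ℂ) := by
  rw [logDeriv_riemannXi (by simp; linarith) (riemannZeta₁_one_add_ne_zero hs.le),
    logDeriv_riemannZeta₁ hs, digamma_three_halves_add hs.le]
  push_cast
  ring

lemma logDeriv_riemannXi_one :
    logDeriv riemannXi 1 = ((γ - Real.log Real.pi / 2
      + deriv (Real.log ∘ Real.Gamma) (3 / 2) / 2 : ℝ) : ℂ) := by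
  have h := digamma_three_halves_add le_rfl
  simp only [ofReal_zero, add_zero, zero_div] at h
  rw [logDeriv_riemannXi (by simp) (by simp), h, logDeriv_apply, deriv_riemannZeta₁_one,
    riemannZeta₁_one]
  push_cast
  ring

lemma two_mul_logDeriv_riemannXi_one :
    2 * (logDeriv riemannXi 1).re = 2 + γ - Real.log (4 * Real.pi) := by
  rw [logDeriv_riemannXi_one, ofReal_re, deriv_log_Gamma_three_halves,
    Real.log_mul (by norm_num) Real.pi_ne_zero, show (4 : ℝ) = 2 ^ 2 by norm_num, Real.log_pow]
  push_cast
  ring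

end LogDerivXi

section ExplicitConsequence

open Set Filter Topology MeasureTheory

local notation "γ" => Real.eulerMascheroniConstant
local notation "Λ" => ArithmeticFunction.vonMangoldt

lemma vonMangoldt_div_nonneg (n : ℕ) : 0 ≤ Λ n / (n : ℝ) :=
  div_nonneg ArithmeticFunction.vonMangoldt_nonneg n.cast_nonneg

lemma vonMangoldt_div_le_one (n : ℕ) : Λ n / (n : ℝ) ≤ 1 := by
  refine div_le_one_of_le₀ (ArithmeticFunction.vonMangoldt_le_log.trans ?_) n.cast_nonneg
  exact Real.log_le_self n.cast_nonneg

/-- The difference between the Chebyshev-type ramp sum and its main terms. -/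
noncomputable def chebyshevError (K : ℂ) (u : ℝ) : ℂ :=
  K * (Real.exp (u / 2) : ℝ) + ((Real.exp (u / 2)
    * (u ^ 2 / 2 - γ * u - ramp (fun n => Λ n / n) u) - archKernel u : ℝ) : ℂ)

lemma continuousOn_chebyshevError (K : ℂ) : ContinuousOn (chebyshevError K) (Ici 0) := by
  have h1 : Continuous (ramp fun n => Λ n / (n : ℝ)) := continuous_ramp _
  have h2 : ContinuousOn (fun u : ℝ => Real.exp (u / 2)
    * (u ^ 2 / 2 - γ * u - ramp (fun n => Λ n / n) u) - archKernel u) (Ici 0) :=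
    ContinuousOn.sub (by fun_prop) continuousOn_archKernel
  refine ContinuousOn.add (by fun_prop) ?_
  exact Complex.continuous_ofReal.comp_continuousOn h2

lemma norm_chebyshevError_le (K : ℂ) {u : ℝ} (hu : 0 ≤ u) :
    ‖chebyshevError K u‖ ≤ (‖K‖ + γ + 4) * Real.exp (5 / 2 * u) := by
  have hr := ramp_le vonMangoldt_div_nonneg vonMangoldt_div_le_one hu
  have hr0 := ramp_nonneg vonMangoldt_div_nonneg u
  have hk := archKernel_le hu
  have hk0 := archKernel_nonneg u
  have hγ := Real.one_half_lt_eulerMascheroniConstant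
  have e1 : u ≤ Real.exp (2 * u) := by
    have := Real.add_one_le_exp (2 * u); linarith
  have e2 : u ^ 2 / 2 ≤ Real.exp (2 * u) := by
    have := Real.quadratic_le_exp_of_nonneg (by linarith : 0 ≤ 2 * u); nlinarith
  have e3 : Real.exp (5 / 2 * u) = Real.exp (u / 2) * Real.exp (2 * u) := by
    rw [← Real.exp_add]; ring_nf
  have e4 : Real.exp (-(5 / 2 * u)) ≤ 1 := Real.exp_le_one_iff.2 (by linarith)
  have e5 : 1 ≤ Real.exp (2 * u) := Real.one_le_exp (by linarith)
  have e6 : 1 ≤ Real.exp (u / 2) := Real.one_le_exp (by linarith)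
  have e7 : Real.exp (u / 2) ≤ Real.exp (5 / 2 * u) := Real.exp_le_exp.2 (by linarith)
  have h1 : |u ^ 2 / 2 - γ * u - ramp (fun n => Λ n / n) u| ≤ (γ + 3) * Real.exp (2 * u) := by
    rw [abs_le]
    constructor <;> nlinarith [sq_nonneg u]
  have h2 : |Real.exp (u / 2) * (u ^ 2 / 2 - γ * u - ramp (fun n => Λ n / n) u) - archKernel u|
      ≤ (γ + 4) * Real.exp (5 / 2 * u) := by
    refine (abs_sub _ _).trans ?_
    rw [abs_mul, abs_of_pos (Real.exp_pos _), abs_of_nonneg hk0]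
    have := mul_le_mul_of_nonneg_left h1 (Real.exp_pos (u / 2)).le
    have : (1 : ℝ) ≤ Real.exp (5 / 2 * u) := Real.one_le_exp (by linarith)
    nlinarith
  refine (norm_add_le _ _).trans ?_
  rw [norm_mul, Complex.norm_real, Complex.norm_real, Real.norm_eq_abs, Real.norm_eq_abs,
    abs_of_pos (Real.exp_pos _)]
  have := mul_le_mul_of_nonneg_left e7 (norm_nonneg K)
  linarith

lemma laplace_chebyshevError (K : ℂ) {s : ℝ} (hs : 0 < s) :
    ∫ u in Ioi (0 : ℝ), chebyshevError K u * Complex.exp (-((s + 1 / 2 : ℝ) * u))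
      = K / s + ((1 / s ^ 3 - γ / s ^ 2 - (∑' n : ℕ, Λ n / n * (n : ℝ) ^ (-s)) / s ^ 2
        - ∑' j : ℕ, 1 / (2 * (j : ℝ) + 3) ^ 2 / (s + 1 / 2 + (2 * j + 5 / 2)) : ℝ) : ℂ) := by
  have i0 := integrableOn_pow_mul_exp_neg 0 hs
  have i1 := integrableOn_pow_mul_exp_neg 1 hs
  have i2 := integrableOn_pow_mul_exp_neg 2 hs
  have v0 := integral_pow_mul_exp_neg 0 hs
  have v1 := integral_pow_mul_exp_neg 1 hs
  have v2 := integral_pow_mul_exp_neg 2 hs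
  obtain ⟨i3, v3⟩ := laplace_ramp vonMangoldt_div_nonneg (by simp) hs
    (summable_vonMangoldt_rpow hs).1
  obtain ⟨i4, v4⟩ := laplace_archKernel (by linarith : 0 < s + 1 / 2)
  simp only [pow_zero, one_mul] at i0 v0
  simp only [pow_one] at i1 v1
  have hpt : ∀ u : ℝ, chebyshevError K u * Complex.exp (-((s + 1 / 2 : ℝ) * u))
      = K * (Real.exp (-(s * u)) : ℝ) + ((1 / 2 * (u ^ 2 * Real.exp (-(s * u)))
        - γ * (u * Real.exp (-(s * u))) - ramp (fun n => Λ n / n) u * Real.exp (-(s * u))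
        - archKernel u * Real.exp (-((s + 1 / 2) * u)) : ℝ) : ℂ) := by
    intro u
    have h1 : Complex.exp (-((s + 1 / 2 : ℝ) * u)) = (Real.exp (-((s + 1 / 2) * u)) : ℝ) := by
      push_cast; ring_nf
    have h2 : Real.exp (-((s + 1 / 2) * u)) * Real.exp (u / 2) = Real.exp (-(s * u)) := by
      rw [← Real.exp_add]; ring_nf
    rw [chebyshevError, h1, ← h2]
    push_cast
    ring
  simp only [hpt]
  have j2 : IntegrableOn (fun u : ℝ => 1 / 2 * (u ^ 2 * Real.exp (-(s * u)))) (Ioi 0) :=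
    i2.const_mul _
  have j1 : IntegrableOn (fun u : ℝ => γ * (u * Real.exp (-(s * u)))) (Ioi 0) := i1.const_mul _
  have j21 : IntegrableOn (fun u : ℝ => 1 / 2 * (u ^ 2 * Real.exp (-(s * u)))
    - γ * (u * Real.exp (-(s * u)))) (Ioi 0) := j2.sub j1
  have j3 : IntegrableOn (fun u : ℝ => 1 / 2 * (u ^ 2 * Real.exp (-(s * u)))
    - γ * (u * Real.exp (-(s * u))) - ramp (fun n => Λ n / n) u * Real.exp (-(s * u)))
    (Ioi 0) := j21.sub i3
  have j4 : IntegrableOn (fun u : ℝ => 1 / 2 * (u ^ 2 * Real.exp (-(s * u)))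
    - γ * (u * Real.exp (-(s * u))) - ramp (fun n => Λ n / n) u * Real.exp (-(s * u))
    - archKernel u * Real.exp (-((s + 1 / 2) * u))) (Ioi 0) := j3.sub i4
  have j0 : IntegrableOn (fun u : ℝ => K * (Real.exp (-(s * u)) : ℝ)) (Ioi 0) :=
    i0.ofReal.const_mul K
  have j5 : IntegrableOn (fun u : ℝ => ((1 / 2 * (u ^ 2 * Real.exp (-(s * u)))
    - γ * (u * Real.exp (-(s * u))) - ramp (fun n => Λ n / n) u * Real.exp (-(s * u))
    - archKernel u * Real.exp (-((s + 1 / 2) * u)) : ℝ) : ℂ)) (Ioi 0) := j4.ofReal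
  rw [integral_add j0 j5, integral_const_mul, integral_complex_ofReal,
    integral_complex_ofReal, integral_sub j3 i4, integral_sub j21 i3, integral_sub j2 j1,
    integral_const_mul, integral_const_mul, v0, v1, v2, v3, v4]
  simp only [Nat.factorial]
  push_cast
  ring

/-- Explicit consequence of RH for the logarithmically weighted prime-power sums. -/
theorem exists_abs_ramp_sub_le_of_RH (hRH : RiemannHypothesis) :
    ∃ κ₀ : ℝ, ∀ u : ℝ, 0 < u →
      |Real.exp (u / 2) * (κ₀ - γ * u + u ^ 2 / 2 - ramp (fun n => Λ n / n) u) - archKernel u|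
        ≤ 2 + γ - Real.log (4 * Real.pi) := by
  set G : ℂ → ℂ := fun w => logDeriv riemannXi (1 / 2 + w) with hGdef
  set Q : ℂ → ℂ := dslope (dslope G (1 / 2)) (1 / 2) with hQdef
  have hopen : IsOpen {z : ℂ | 0 < z.re} := isOpen_lt continuous_const Complex.continuous_re
  have hmem : {z : ℂ | 0 < z.re} ∈ 𝓝 (1 / 2 : ℂ) := hopen.mem_nhds (by norm_num)
  have hre2 : ∀ z : ℂ, 0 < z.re → 1 / 2 < (1 / 2 + z).re := by
    intro z hz
    have : (1 / 2 : ℂ).re = 1 / 2 := by norm_num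
    rw [Complex.add_re, this]; linarith
  have hG : DifferentiableOn ℂ G {z | 0 < z.re} := by
    intro z hz
    have h1 := differentiableAt_logDeriv_riemannXi hRH (hre2 z hz)
    exact (h1.comp z
      (by fun_prop : DifferentiableAt ℂ (fun w : ℂ => 1 / 2 + w) z)).differentiableWithinAt
  have hQ : DifferentiableOn ℂ Q {z | 0 < z.re} :=
    (Complex.differentiableOn_dslope hmem).2 ((Complex.differentiableOn_dslope hmem).2 hG)
  have hre : ∀ z : ℂ, 0 < z.re → 0 ≤ (G z).re := fun z hz =>
    re_logDeriv_riemannXi_nonneg hRH (hre2 z hz)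
  set A := G (1 / 2) with hA
  set B := dslope G (1 / 2) (1 / 2) with hB
  have hQG : ∀ z : ℂ, (z - 1 / 2) ^ 2 * Q z = G z - A - (z - 1 / 2) * B := by
    intro z
    have h1 := sub_smul_dslope G (1 / 2) z
    have h2 := sub_smul_dslope (dslope G (1 / 2)) (1 / 2) z
    rw [smul_eq_mul] at h1 h2
    rw [pow_two, mul_assoc, hQdef, h2, mul_sub, h1]
  have hbound := norm_iteratedDeriv_mul_le_of_re_nonneg_halfPlane hG hQ hre fun z _ => hQG z
  set σ : ℝ := ∑' j : ℕ, 1 / (2 * (j : ℝ) + 3) ^ 2 with hσ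
  set K : ℂ := σ - B with hK
  have hA1 : A = logDeriv riemannXi 1 := by
    rw [hA]; simp only [hGdef]; norm_num
  have hreal : ∀ s : ℝ, 0 < s → Q ((s + 1 / 2 : ℝ) : ℂ)
      = ∫ u in Ioi (0 : ℝ), chebyshevError K u * Complex.exp (-((s + 1 / 2 : ℝ) * u)) := by
    intro s hs
    have hs' : (s : ℂ) ≠ 0 := by exact_mod_cast hs.ne'
    rw [laplace_chebyshevError K hs]
    have h1 := hQG ((s + 1 / 2 : ℝ) : ℂ)
    have h2 : G ((s + 1 / 2 : ℝ) : ℂ) = logDeriv riemannXi (1 + s) := by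
      simp only [hGdef]; congr 1; push_cast; ring
    have h3 : ((s + 1 / 2 : ℝ) : ℂ) - 1 / 2 = s := by push_cast; ring
    rw [h2, h3, logDeriv_riemannXi_one_add hs, hA1, logDeriv_riemannXi_one,
      deriv_log_Gamma_eq_tsum hs.le, ← hσ] at h1
    generalize (∑' n : ℕ, Λ n / n * (n : ℝ) ^ (-s)) = S at h1 ⊢
    generalize (∑' j : ℕ, 1 / (2 * (j : ℝ) + 3) ^ 2 / (s + 1 / 2 + (2 * j + 5 / 2))) = T at h1 ⊢
    generalize deriv (Real.log ∘ Real.Gamma) (3 / 2) = D at h1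
    refine mul_left_cancel₀ (pow_ne_zero 2 hs') (h1.trans ?_)
    rw [hK]
    push_cast
    field_simp
    ring
  have hQE : ∀ z : ℂ, 5 / 2 < z.re →
      Q z = ∫ u in Ioi (0 : ℝ), chebyshevError K u * Complex.exp (-(z * u)) := by
    have hopen2 : IsOpen {z : ℂ | 5 / 2 < z.re} :=
      isOpen_lt continuous_const Complex.continuous_re
    have hF : DifferentiableOn ℂ (fun z : ℂ => ∫ u in Ioi (0 : ℝ),
        chebyshevError K u * Complex.exp (-(z * u))) {z | 5 / 2 < z.re} := by
      intro z hz
      have := hasDerivAt_laplace (continuousOn_chebyshevError K)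
        (fun u hu => norm_chebyshevError_le K hu) 0 hz
      simp only [pow_zero, one_mul] at this
      exact this.differentiableAt.differentiableWithinAt
    have hQ' : DifferentiableOn ℂ Q {z | 5 / 2 < z.re} := hQ.mono fun z hz => by
      have : 5 / 2 < z.re := hz
      show 0 < z.re
      linarith
    have hconn : IsPreconnected {z : ℂ | 5 / 2 < z.re} :=
      (convex_halfSpace_re_gt _).isPreconnected
    refine (hQ'.analyticOnNhd hopen2).eqOn_of_preconnected_of_frequently_eq
      (hF.analyticOnNhd hopen2) hconn (z₀ := 3) (by norm_num) ?_
    have ht : Tendsto (fun n : ℕ => (((5 / 2 + 1 / ((n : ℝ) + 1)) + 1 / 2 : ℝ) : ℂ))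
        atTop (𝓝[≠] 3) := by
      refine tendsto_nhdsWithin_iff.2 ⟨?_, Eventually.of_forall fun n h => ?_⟩
      · have h1 : Tendsto (fun n : ℕ => (5 / 2 + 1 / ((n : ℝ) + 1)) + 1 / 2) atTop
            (𝓝 ((5 / 2 + 0) + 1 / 2)) :=
          (tendsto_one_div_add_atTop_nhds_zero_nat.const_add _).add_const _
        have h2 := (Complex.continuous_ofReal.tendsto _).comp h1
        rwa [show ((((5 / 2 + 0) + 1 / 2 : ℝ)) : ℂ) = 3 by push_cast; norm_num] at h2
      · have h3 : ((5 / 2 + 1 / ((n : ℝ) + 1)) + 1 / 2 : ℝ) = 3 := by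
          have h' : (((5 / 2 + 1 / ((n : ℝ) + 1)) + 1 / 2 : ℝ) : ℂ) = ((3 : ℝ) : ℂ) := by
            rw [Complex.ofReal_ofNat]; exact h
          exact Complex.ofReal_injective h'
        have : 0 < 1 / ((n : ℝ) + 1) := by positivity
        linarith
    refine ht.frequently (Eventually.frequently (Eventually.of_forall fun n => ?_))
    exact hreal _ (by positivity)
  refine ⟨K.re, fun u hu => ?_⟩
  have hfin := norm_le_of_laplace_of_iteratedDeriv_le (continuousOn_chebyshevError K)
    (by norm_num : (0 : ℝ) ≤ 5 / 2) (fun u hu => norm_chebyshevError_le K hu) hQE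
    (fun n x hx => hbound n hx) hu
  rw [← hA, hA1, two_mul_logDeriv_riemannXi_one] at hfin
  refine le_trans (le_of_eq ?_) ((Complex.abs_re_le_norm _).trans hfin)
  congr 1
  rw [chebyshevError, Complex.add_re, Complex.re_mul_ofReal, Complex.ofReal_re]
  ring

end ExplicitConsequence

section SmoothedMertens

open Set Filter Topology MeasureTheory

local notation "γ" => Real.eulerMascheroniConstant
local notation "Λ" => ArithmeticFunction.vonMangoldt

lemma integral_mul_log_mul_exp_neg :
    ∫ t in Ioi (0 : ℝ), t * Real.log t * Real.exp (-t) = 1 - γ := by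
  have h2 : (0 : ℝ) < (2 : ℂ).re := by norm_num
  have h := Complex.hasDerivAt_GammaIntegral h2
  have he : Complex.GammaIntegral =ᶠ[𝓝 2] Complex.Gamma := by
    filter_upwards [(isOpen_lt continuous_const Complex.continuous_re).mem_nhds h2] with z hz
    exact (Complex.Gamma_eq_integral hz).symm
  have hd := he.deriv_eq
  rw [h.deriv] at hd
  have hn := Complex.deriv_Gamma_nat 1
  rw [show ((1 : ℕ) : ℂ) + 1 = 2 by norm_num] at hn
  rw [hn] at hd
  apply Complex.ofReal_injective
  rw [← integral_complex_ofReal]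
  refine Eq.trans (setIntegral_congr_fun measurableSet_Ioi fun t _ => ?_) (hd.trans ?_)
  · rw [show (2 : ℂ) - 1 = 1 by norm_num, Complex.cpow_one]
    push_cast
    ring
  · simp
    ring

lemma integrableOn_mul_log_mul_exp_neg :
    IntegrableOn (fun t : ℝ => t * Real.log t * Real.exp (-t)) (Ioi 0) := by
  by_contra hni
  have h := integral_mul_log_mul_exp_neg
  rw [integral_undef hni] at h
  linarith [Real.eulerMascheroniConstant_lt_two_thirds]

lemma laplace_mul_log {s : ℝ} (hs : 0 < s) :
    IntegrableOn (fun t : ℝ => t * Real.log t * Real.exp (-(s * t))) (Ioi 0) ∧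
      ∫ t in Ioi (0 : ℝ), t * Real.log t * Real.exp (-(s * t)) = (1 - γ - Real.log s) / s ^ 2 := by
  have i1 := integrableOn_pow_mul_exp_neg 1 hs
  have v1 := integral_pow_mul_exp_neg 1 hs
  simp only [pow_one] at i1 v1
  have i2 : IntegrableOn (fun t : ℝ => s * t * Real.log (s * t) * Real.exp (-(s * t))) (Ioi 0) := by
    have := (integrableOn_Ioi_comp_mul_left_iff (fun t : ℝ => t * Real.log t * Real.exp (-t)) 0
      hs).2 (by simpa using integrableOn_mul_log_mul_exp_neg)
    exact this
  have v2 := integral_comp_mul_left_Ioi (fun t : ℝ => t * Real.log t * Real.exp (-t)) 0 hs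
  rw [mul_zero, integral_mul_log_mul_exp_neg, smul_eq_mul] at v2
  have hpt : ∀ t ∈ Ioi (0 : ℝ), s⁻¹ * (s * t * Real.log (s * t) * Real.exp (-(s * t)))
      - Real.log s * (t * Real.exp (-(s * t))) = t * Real.log t * Real.exp (-(s * t)) := by
    intro t ht
    rw [Real.log_mul hs.ne' (ne_of_gt ht)]
    field_simp
    ring
  have j2 : IntegrableOn (fun t : ℝ => s⁻¹ * (s * t * Real.log (s * t) * Real.exp (-(s * t))))
    (Ioi 0) := i2.const_mul _
  have j1 : IntegrableOn (fun t : ℝ => Real.log s * (t * Real.exp (-(s * t)))) (Ioi 0) :=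
    i1.const_mul _
  constructor
  · exact IntegrableOn.congr_fun (j2.sub j1) hpt measurableSet_Ioi
  · rw [← setIntegral_congr_fun measurableSet_Ioi hpt, integral_sub j2 j1, integral_const_mul,
      integral_const_mul, v1, v2]
    simp only [Nat.factorial]
    push_cast
    field_simp

lemma vonMangoldt_div_mul_log_nonneg (n : ℕ) : 0 ≤ Λ n / (n * Real.log n) :=
  div_nonneg ArithmeticFunction.vonMangoldt_nonneg
    (mul_nonneg n.cast_nonneg (Real.log_natCast_nonneg n))

lemma summable_vonMangoldt_div_mul_log_rpow {s : ℝ} (hs : 0 < s) :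
    Summable fun n : ℕ => Λ n / (n * Real.log n) * (n : ℝ) ^ (-s) := by
  refine Summable.of_nonneg_of_le (fun n => mul_nonneg (vonMangoldt_div_mul_log_nonneg n)
    (Real.rpow_nonneg n.cast_nonneg _)) (fun n => ?_)
    ((summable_vonMangoldt_rpow hs).1.mul_left (1 / Real.log 2))
  rcases Nat.lt_or_ge n 2 with hn | hn
  · interval_cases n <;> simp
  · have h2 : 0 < Real.log 2 := Real.log_pos one_lt_two
    have hl : Real.log 2 ≤ Real.log n := Real.log_le_log two_pos (by exact_mod_cast hn)
    have hn0 : (0 : ℝ) < n := by positivity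
    rw [← mul_assoc]
    refine mul_le_mul_of_nonneg_right ?_ (Real.rpow_nonneg n.cast_nonneg _)
    rw [div_mul_div_comm, one_mul, mul_comm (n : ℝ)]
    exact div_le_div_of_nonneg_left ArithmeticFunction.vonMangoldt_nonneg (by positivity)
      (mul_le_mul_of_nonneg_right hl hn0.le)

lemma tsum_vonMangoldt_div_mul_log_rpow {s : ℝ} (hs : 0 < s) :
    ∑' n : ℕ, Λ n / (n * Real.log n) * (n : ℝ) ^ (-s)
      = Real.log (riemannZeta ((1 + s : ℝ) : ℂ)).re := by
  rw [log_riemannZeta_eq (by linarith)]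
  refine tsum_congr fun n => ?_
  rcases n.eq_zero_or_pos with rfl | hn
  · simp
  · have hn' : (0 : ℝ) < n := by exact_mod_cast hn
    rw [Real.rpow_add hn', Real.rpow_one, Real.rpow_neg hn'.le]
    ring

/-- The error term in the smoothed form of Mertens' theorem. -/
noncomputable def mertensError (l : ℝ) : ℝ :=
  l * Real.log l + (γ - 1) * l + γ - ramp (fun n => Λ n / (n * Real.log n)) l

lemma laplace_mertensError {s : ℝ} (hs : 0 < s) :
    IntegrableOn (fun t => mertensError t * Real.exp (-(s * t))) (Ioi 0) ∧
      s ^ 2 * ∫ t in Ioi (0 : ℝ), mertensError t * Real.exp (-(s * t))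
        = γ * s - (Real.log (riemannZeta ((1 + s : ℝ) : ℂ)).re + Real.log s) := by
  have i0 := integrableOn_pow_mul_exp_neg 0 hs
  have i1 := integrableOn_pow_mul_exp_neg 1 hs
  have v0 := integral_pow_mul_exp_neg 0 hs
  have v1 := integral_pow_mul_exp_neg 1 hs
  obtain ⟨i2, v2⟩ := laplace_mul_log hs
  obtain ⟨i3, v3⟩ := laplace_ramp vonMangoldt_div_mul_log_nonneg (by simp) hs
    (summable_vonMangoldt_div_mul_log_rpow hs)
  rw [tsum_vonMangoldt_div_mul_log_rpow hs] at v3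
  simp only [pow_zero, one_mul] at i0 v0
  simp only [pow_one] at i1 v1
  have hpt : ∀ t : ℝ, mertensError t * Real.exp (-(s * t))
      = t * Real.log t * Real.exp (-(s * t)) + (γ - 1) * (t * Real.exp (-(s * t)))
        + γ * Real.exp (-(s * t))
        - ramp (fun n => Λ n / (n * Real.log n)) t * Real.exp (-(s * t)) := by
    intro t
    rw [mertensError]
    ring
  simp only [hpt]
  have j1 : IntegrableOn (fun t : ℝ => (γ - 1) * (t * Real.exp (-(s * t)))) (Ioi 0) :=
    i1.const_mul _
  have j0 : IntegrableOn (fun t : ℝ => γ * Real.exp (-(s * t))) (Ioi 0) := i0.const_mul _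
  have j21 : IntegrableOn (fun t : ℝ => t * Real.log t * Real.exp (-(s * t))
    + (γ - 1) * (t * Real.exp (-(s * t)))) (Ioi 0) := i2.add j1
  have j210 : IntegrableOn (fun t : ℝ => t * Real.log t * Real.exp (-(s * t))
    + (γ - 1) * (t * Real.exp (-(s * t))) + γ * Real.exp (-(s * t))) (Ioi 0) := j21.add j0
  refine ⟨j210.sub i3, ?_⟩
  rw [integral_sub j210 i3, integral_add j21 j0, integral_add i2 j1, integral_const_mul,
    integral_const_mul, v0, v1, v2, v3]
  simp only [Nat.factorial]
  push_cast
  field_simp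
  ring

lemma continuousOn_mertensError : ContinuousOn mertensError (Ici 0) := by
  have h : Continuous (ramp fun n => Λ n / ((n : ℝ) * Real.log n)) := continuous_ramp _
  have h2 : Continuous fun l : ℝ => l * Real.log l := Real.continuous_mul_log
  have : Continuous mertensError := by
    show Continuous fun l => l * Real.log l + (γ - 1) * l + γ
      - ramp (fun n => Λ n / (n * Real.log n)) l
    fun_prop
  exact this.continuousOn

/-- The smoothed Mertens error term is not eventually below a negative multiple of the identity. -/
lemma exists_lt_mertensError {η : ℝ} (hη : 0 < η) (T : ℝ) :
    ∃ t ≥ T, -η * t < mertensError t := by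
  by_contra hcon
  push Not at hcon
  set T' := max T 0 with hT'
  have hT0 : 0 ≤ T' := le_max_right _ _
  obtain ⟨M, hM⟩ := (isCompact_Icc (a := 0) (b := T')).exists_bound_of_continuousOn
    (continuousOn_mertensError.mono fun t ht => ht.1)
  have hM0 : 0 ≤ M := (norm_nonneg _).trans (hM 0 ⟨le_rfl, hT0⟩)
  have hbound : ∀ t : ℝ, 0 < t → mertensError t ≤ -η * t + (M + η * T') * Real.exp (T' - t) := by
    intro t ht
    rcases le_total t T' with h | h
    · have h1 := (abs_le.1 (hM t ⟨ht.le, h⟩)).2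
      have h2 : 1 ≤ Real.exp (T' - t) := Real.one_le_exp (by linarith)
      have h3 : 0 ≤ M + η * T' := by positivity
      nlinarith
    · have h1 := hcon t ((le_max_left _ _).trans h)
      have : 0 ≤ (M + η * T') * Real.exp (T' - t) := by positivity
      linarith
  have hle : ∀ s : ℝ, 0 < s → γ * s - (Real.log (riemannZeta ((1 + s : ℝ) : ℂ)).re + Real.log s)
      ≤ -η + s ^ 2 * ((M + η * T') * Real.exp T') := by
    intro s hs
    obtain ⟨iW, vW⟩ := laplace_mertensError hs
    have i1 := integrableOn_pow_mul_exp_neg 1 hs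
    have v1 := integral_pow_mul_exp_neg 1 hs
    have i0 := integrableOn_pow_mul_exp_neg 0 (by linarith : 0 < 1 + s)
    have v0 := integral_pow_mul_exp_neg 0 (by linarith : 0 < 1 + s)
    simp only [pow_zero, one_mul] at i0 v0
    simp only [pow_one] at i1 v1
    have j1 : IntegrableOn (fun t : ℝ => -η * (t * Real.exp (-(s * t)))) (Ioi 0) := i1.const_mul _
    have j0 : IntegrableOn (fun t : ℝ => (M + η * T') * Real.exp T' * Real.exp (-((1 + s) * t)))
      (Ioi 0) := i0.const_mul _
    have hmono := setIntegral_mono_on iW (j1.add j0) measurableSet_Ioi fun t ht => by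
      have h1 := mul_le_mul_of_nonneg_right (hbound t ht) (Real.exp_pos (-(s * t))).le
      refine h1.trans (le_of_eq ?_)
      have h2 : Real.exp T' * Real.exp (-((1 + s) * t))
          = Real.exp (T' - t) * Real.exp (-(s * t)) := by
        rw [← Real.exp_add, ← Real.exp_add]; ring_nf
      simp only [Pi.add_apply]
      rw [mul_assoc (M + η * T'), h2]
      ring
    rw [show (∫ t in Ioi (0 : ℝ), ((fun t : ℝ => -η * (t * Real.exp (-(s * t)))) +
      fun t : ℝ => (M + η * T') * Real.exp T' * Real.exp (-((1 + s) * t))) t) = _ from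
      integral_add j1 j0, integral_const_mul, integral_const_mul, v0, v1] at hmono
    have h2 := mul_le_mul_of_nonneg_left hmono (sq_nonneg s)
    rw [vW] at h2
    refine h2.trans ?_
    have h3 : 0 ≤ (M + η * T') * Real.exp T' := by positivity
    have h4 : 1 / (1 + s) ≤ 1 := by rw [div_le_one (by linarith)]; linarith
    have h5 : s ^ 2 * ((M + η * T') * Real.exp T' * (1 / (1 + s)))
        ≤ s ^ 2 * ((M + η * T') * Real.exp T') :=
      mul_le_mul_of_nonneg_left (mul_le_of_le_one_right h3 h4) (sq_nonneg s)
    have h6 : s ^ 2 * (-η * (1 / s ^ 2)) = -η := by field_simp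
    simp only [Nat.factorial]
    norm_num only [pow_one, zero_add, Nat.cast_one, one_add_one_eq_two]
    linarith
  have hlim1 : Tendsto (fun s : ℝ => γ * s
      - (Real.log (riemannZeta ((1 + s : ℝ) : ℂ)).re + Real.log s)) (𝓝[>] 0) (𝓝 (γ * 0 - 0)) := by
    refine Tendsto.sub ((tendsto_id.const_mul γ).mono_left nhdsWithin_le_nhds) ?_
    have h1 := log_riemannZeta_add_log_sub_isLittleO_ofReal.tendsto_div_nhds_zero
    have h2 : Tendsto (fun s : ℝ => 1 + s) (𝓝[>] 0) (𝓝[>] 1) := by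
      refine tendsto_nhdsWithin_iff.2 ⟨?_, ?_⟩
      · have : Tendsto (fun s : ℝ => 1 + s) (𝓝 0) (𝓝 (1 + 0)) := tendsto_id.const_add 1
        rw [add_zero] at this
        exact this.mono_left nhdsWithin_le_nhds
      · filter_upwards [self_mem_nhdsWithin] with s hs
        have : (0 : ℝ) < s := hs
        show 1 < 1 + s
        linarith
    have h3 := h1.comp h2
    refine h3.congr fun s => ?_
    simp
  have hlim2 : Tendsto (fun s : ℝ => -η + s ^ 2 * ((M + η * T') * Real.exp T')) (𝓝[>] 0)
      (𝓝 (-η + 0 ^ 2 * ((M + η * T') * Real.exp T'))) :=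
    (Continuous.tendsto (by fun_prop) 0).mono_left nhdsWithin_le_nhds
  have := le_of_tendsto_of_tendsto hlim1 hlim2 (by
    filter_upwards [self_mem_nhdsWithin] with s hs using hle s hs)
  norm_num at this
  linarith

end SmoothedMertens

section PrimeRemainder

open Set Filter Topology MeasureTheory

local notation "γ" => Real.eulerMascheroniConstant
local notation "Λ" => ArithmeticFunction.vonMangoldt

lemma hasDerivAt_max_zero_sq (x : ℝ) :
    HasDerivAt (fun y : ℝ => max y 0 ^ 2) (2 * max x 0) x := by
  rcases lt_trichotomy x 0 with h | rfl | h
  · rw [max_eq_right h.le, mul_zero]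
    refine (hasDerivAt_const x (0 : ℝ)).congr_of_eventuallyEq ?_
    filter_upwards [gt_mem_nhds h] with y hy
    rw [max_eq_right (le_of_lt hy)]; norm_num
  · rw [max_self, mul_zero, hasDerivAt_iff_hasFDerivAt]
    have : HasFDerivAt (fun y : ℝ => max y 0 ^ 2) (0 : ℝ →L[ℝ] ℝ) 0 := by
      refine Asymptotics.IsBigO.hasFDerivAt (n := 2) ?_ one_lt_two
      refine Asymptotics.IsBigO.of_bound 1 (Eventually.of_forall fun y => ?_)
      rw [sub_zero, one_mul, norm_pow, norm_pow, norm_norm]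
      refine pow_le_pow_left₀ (norm_nonneg _) ?_ 2
      rw [Real.norm_eq_abs, Real.norm_eq_abs, abs_of_nonneg (le_max_right _ _)]
      exact max_le (le_abs_self y) (abs_nonneg y)
    rwa [show ContinuousLinearMap.toSpanSingleton ℝ (0 : ℝ) = 0 by ext; simp]
  · rw [max_eq_left h.le]
    have h2 : HasDerivAt (fun y : ℝ => y ^ 2) (2 * x) x := by simpa using hasDerivAt_pow 2 x
    refine h2.congr_of_eventuallyEq ?_
    filter_upwards [lt_mem_nhds h] with y hy
    rw [max_eq_left (le_of_lt hy)]

/-- The remainder in the smoothed form of the prime number theorem. -/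
noncomputable def chebyshevRemainder (κ₀ u : ℝ) : ℝ :=
  κ₀ - γ * u + u ^ 2 / 2 - ramp (fun n => Λ n / n) u

lemma mertensError_sub_chebyshevRemainder (κ₀ : ℝ) {N : ℕ} {u : ℝ} (hu : 0 < u)
    (hN : Real.exp u ≤ N) :
    mertensError u / u - chebyshevRemainder κ₀ u / u ^ 2
      = Real.log u + γ - 1 + γ / u - (κ₀ - γ * u + u ^ 2 / 2) / u ^ 2
        - ∑ n ∈ Finset.range N, Λ n / (n * Real.log n) * (max (u - Real.log n) 0 ^ 2 / u ^ 2) := by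
  have hterm : ∀ n ∈ Finset.range N,
      Λ n / (n * Real.log n) * (max (u - Real.log n) 0 ^ 2 / u ^ 2)
      = Λ n / (n * Real.log n) * max (u - Real.log n) 0 / u
        - Λ n / n * max (u - Real.log n) 0 / u ^ 2 := by
    intro n _
    rcases Nat.lt_or_ge n 2 with hn | hn
    · interval_cases n <;> simp
    · have h2 : 0 < Real.log n := Real.log_pos (by exact_mod_cast hn)
      have hn0 : (0 : ℝ) < n := by positivity
      have h3 : max (u - Real.log n) 0 ^ 2
          = (u - Real.log n) * max (u - Real.log n) 0 := by
        rcases le_total (u - Real.log n) 0 with h | h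
        · rw [max_eq_right h]; ring
        · rw [max_eq_left h]; ring
      rw [h3]
      generalize max (u - Real.log n) 0 = m
      field_simp
  rw [Finset.sum_congr rfl hterm, Finset.sum_sub_distrib, ← Finset.sum_div, ← Finset.sum_div,
    ← ramp_eq_sum (fun n => Λ n / (n * Real.log n)) hN, ← ramp_eq_sum (fun n => Λ n / n) hN,
    mertensError, chebyshevRemainder]
  field_simp
  ring

lemma hasDerivAt_mertensError_sub (κ₀ : ℝ) {t : ℝ} (ht : 0 < t) :
    HasDerivAt (fun u => mertensError u / u - chebyshevRemainder κ₀ u / u ^ 2)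
      (2 * chebyshevRemainder κ₀ t / t ^ 3) t := by
  obtain ⟨N, hN⟩ := exists_nat_ge (Real.exp (t + 1))
  have he : (fun u => mertensError u / u - chebyshevRemainder κ₀ u / u ^ 2) =ᶠ[𝓝 t]
      fun u => Real.log u + γ - 1 + γ / u - (κ₀ - γ * u + u ^ 2 / 2) / u ^ 2
        - ∑ n ∈ Finset.range N,
          Λ n / (n * Real.log n) * (max (u - Real.log n) 0 ^ 2 / u ^ 2) := by
    filter_upwards [Ioo_mem_nhds ht (lt_add_one t)] with u hu
    exact mertensError_sub_chebyshevRemainder κ₀ hu.1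
      ((Real.exp_le_exp.2 hu.2.le).trans hN)
  refine HasDerivAt.congr_of_eventuallyEq ?_ he
  have hsum : HasDerivAt (fun u : ℝ => ∑ n ∈ Finset.range N,
      Λ n / (n * Real.log n) * (max (u - Real.log n) 0 ^ 2 / u ^ 2))
      (∑ n ∈ Finset.range N, 2 * (Λ n / n * max (t - Real.log n) 0) / t ^ 3) t := by
    refine HasDerivAt.fun_sum fun n _ => ?_
    have h1 : HasDerivAt (fun u : ℝ => max (u - Real.log n) 0 ^ 2)
        (2 * max (t - Real.log n) 0 * 1) t :=
      HasDerivAt.comp (h₂ := fun y : ℝ => max y 0 ^ 2) (h := fun u : ℝ => u - Real.log n) t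
        (hasDerivAt_max_zero_sq (t - Real.log n))
        ((hasDerivAt_id t).sub_const (Real.log n))
    have h2 := (h1.div (hasDerivAt_pow 2 t) (pow_ne_zero 2 ht.ne')).const_mul
      (Λ n / (n * Real.log n))
    refine h2.congr_deriv ?_
    rcases Nat.lt_or_ge n 2 with hn | hn
    · interval_cases n <;> simp
    · have h2 : 0 < Real.log n := Real.log_pos (by exact_mod_cast hn)
      have hn0 : (0 : ℝ) < n := by positivity
      rcases le_total (t - Real.log n) 0 with h | h
      · rw [max_eq_right h]; norm_num
      · rw [max_eq_left h]
        push_cast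
        field_simp
        ring
  have hlog := Real.hasDerivAt_log ht.ne'
  have hinv : HasDerivAt (fun u : ℝ => γ / u) (-γ / t ^ 2) t := by
    refine ((hasDerivAt_const t γ).div (hasDerivAt_id t) ht.ne').congr_deriv ?_
    simp
  have hpoly : HasDerivAt (fun u : ℝ => κ₀ - γ * u + u ^ 2 / 2) (-γ + t) t := by
    refine ((((hasDerivAt_id t).const_mul γ).const_sub κ₀).add
      ((hasDerivAt_pow 2 t).div_const 2)).congr_deriv ?_
    push_cast
    ring
  have hquot := hpoly.div (hasDerivAt_pow 2 t) (pow_ne_zero 2 ht.ne')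
  refine (((((hlog.add_const γ).sub_const 1).add hinv).sub hquot).sub hsum).congr_deriv ?_
  have hr : ramp (fun n => Λ n / n) t
      = ∑ n ∈ Finset.range N, Λ n / n * max (t - Real.log n) 0 :=
    ramp_eq_sum _ ((Real.exp_le_exp.2 (by linarith)).trans hN)
  rw [← Finset.sum_div, ← Finset.mul_sum, ← hr, chebyshevRemainder]
  push_cast
  field_simp
  ring

lemma le_mertensError {κ₀ B : ℝ} (hB : 0 ≤ B)
    (hlow : ∀ u : ℝ, 0 < u → -(B * Real.exp (-(u / 2))) ≤ chebyshevRemainder κ₀ u)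
    (hup : ∀ u : ℝ, 0 < u → chebyshevRemainder κ₀ u
      ≤ B * Real.exp (-(u / 2)) + 1 / 4 * Real.exp (-(3 * u))) {l : ℝ} (hl : 0 < l) :
    -(B * Real.exp (-(l / 2)) / l ^ 2
        + (4 * B * Real.exp (-(l / 2)) + Real.exp (-(3 * l)) / 6) / l ^ 3)
      ≤ mertensError l / l := by
  by_contra! hcon
  set δ := B * Real.exp (-(l / 2)) / l ^ 2
        + (4 * B * Real.exp (-(l / 2)) + Real.exp (-(3 * l)) / 6) / l ^ 3 with hδ
  set η := -(mertensError l / l + δ) / 2 with hη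
  have hη0 : 0 < η := by rw [hη]; linarith
  set F : ℝ → ℝ := fun u => mertensError u / u - chebyshevRemainder κ₀ u / u ^ 2 with hF
  set H : ℝ → ℝ := fun u => (4 * B * Real.exp (-(u / 2)) + Real.exp (-(3 * u)) / 6) / l ^ 3 with hH
  have hHd : ∀ t, HasDerivAt H
      (-(2 * (B * Real.exp (-(t / 2)) + 1 / 4 * Real.exp (-(3 * t))) / l ^ 3)) t := by
    intro t
    have h1 := ((((hasDerivAt_id t).div_const 2).neg.exp).const_mul (4 * B)).add
      ((((hasDerivAt_id t).const_mul 3).neg.exp).div_const 6)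
    refine (h1.div_const (l ^ 3)).congr_deriv ?_
    simp only [id, Pi.neg_apply]
    ring
  have hd : ∀ t, l ≤ t → HasDerivAt (fun u => F u + H u) (2 * chebyshevRemainder κ₀ t / t ^ 3
      + -(2 * (B * Real.exp (-(t / 2)) + 1 / 4 * Real.exp (-(3 * t))) / l ^ 3)) t :=
    fun t ht => (hasDerivAt_mertensError_sub κ₀ (hl.trans_le ht)).add (hHd t)
  have hanti : AntitoneOn (fun u => F u + H u) (Ici l) := by
    refine antitoneOn_of_deriv_nonpos (convex_Ici l)
      (fun t ht => (hd t ht).continuousAt.continuousWithinAt)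
      (fun t ht => (hd t (interior_subset ht)).differentiableAt.differentiableWithinAt)
      fun t ht => ?_
    have ht' : l ≤ t := interior_subset ht
    have ht0 := hl.trans_le ht'
    rw [(hd t ht').deriv]
    have h1 : 2 * chebyshevRemainder κ₀ t / t ^ 3
        ≤ 2 * (B * Real.exp (-(t / 2)) + 1 / 4 * Real.exp (-(3 * t))) / t ^ 3 := by
      gcongr
      exact hup t ht0
    have h2 : 2 * (B * Real.exp (-(t / 2)) + 1 / 4 * Real.exp (-(3 * t))) / t ^ 3
        ≤ 2 * (B * Real.exp (-(t / 2)) + 1 / 4 * Real.exp (-(3 * t))) / l ^ 3 := by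
      gcongr
    linarith
  obtain ⟨t, ht, hlt⟩ := exists_lt_mertensError hη0 (max (max l 1) ((B + 1) / η))
  have ht1 : l ≤ t := (le_max_left _ _).trans ((le_max_left _ _).trans ht)
  have ht2 : 1 ≤ t := (le_max_right _ _).trans ((le_max_left _ _).trans ht)
  have ht3 : (B + 1) / η ≤ t := (le_max_right _ _).trans ht
  have ht0 : 0 < t := by linarith
  have h1 : F t + H t ≤ F l + H l := hanti self_mem_Ici ht1 ht1
  have h2 : 0 ≤ H t := by simp only [hH]; positivity
  have h3 : chebyshevRemainder κ₀ t / t ^ 2 ≤ η := by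
    rw [div_le_iff₀ (by positivity)]
    rw [div_le_iff₀ hη0] at ht3
    have e1 : Real.exp (-(t / 2)) ≤ 1 := Real.exp_le_one_iff.2 (by linarith)
    have e2 : Real.exp (-(3 * t)) ≤ 1 := Real.exp_le_one_iff.2 (by linarith)
    have := hup t ht0
    have : η * t ≤ η * t ^ 2 := by
      have : t ≤ t ^ 2 := by nlinarith
      exact mul_le_mul_of_nonneg_left this hη0.le
    nlinarith
  have h4 : -(chebyshevRemainder κ₀ l / l ^ 2) ≤ B * Real.exp (-(l / 2)) / l ^ 2 := by
    rw [← neg_div]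
    gcongr
    linarith [hlow l hl]
  have h5 : mertensError t / t ≤ -η := by
    simp only [hF] at h1
    have : H l = δ - B * Real.exp (-(l / 2)) / l ^ 2 := by simp only [hH, hδ]; ring
    linarith
  rw [div_le_iff₀ ht0] at h5
  linarith

end PrimeRemainder

section Increments

open Set Filter Topology

local notation "γ" => Real.eulerMascheroniConstant
local notation "Λ" => ArithmeticFunction.vonMangoldt

lemma tent_le {m τ : ℝ} (hm : 2 ≤ m) (h0 : 0 ≤ τ) (h1 : τ ≤ 1) {t : ℝ} (ht : t ≤ τ)
    (ht' : t ≤ 1 - τ) :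
    1 / (4 * m ^ 2) * (2 / 3) * t ≤ Real.exp (-τ) * (1 / (2 * m) - 1 / (2 * (m + τ))) := by
  have hm0 : 0 < m := by linarith
  have hmτ : 0 < m + τ := by linarith
  have he : 1 - τ ≤ Real.exp (-τ) := by linarith [Real.add_one_le_exp (-τ)]
  have hd : 1 / (2 * m) - 1 / (2 * (m + τ)) = τ / (2 * m * (m + τ)) := by
    field_simp
    ring
  have hd0 : 0 ≤ τ / (2 * m * (m + τ)) := by positivity
  rw [hd]
  refine le_trans ?_ (mul_le_mul_of_nonneg_right he hd0)
  rw [← mul_div_assoc (1 - τ), le_div_iff₀ (by positivity)]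
  have e1 : 1 / (4 * m ^ 2) * (2 / 3) * t * (2 * m * (m + τ)) = t * (m + τ) / (3 * m) := by
    field_simp
    ring
  rw [e1, div_le_iff₀ (by positivity)]
  have h2 : t ≤ 2 * (τ * (1 - τ)) := by
    rcases le_total τ (1 / 2) with h | h <;> nlinarith
  have h3 : 0 ≤ τ * (1 - τ) := mul_nonneg h0 (by linarith)
  nlinarith

lemma le_sum_vonMangoldt_div_sq {m : ℝ} (hm : 2 ≤ m) {N : ℕ} (hN : Real.exp (m + 1) ≤ N) :
    Real.exp (-m) / (4 * m ^ 2) * (2 / 3) * (ramp (fun n => Λ n / n) (m + 1)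
        - 2 * ramp (fun n => Λ n / n) (m + 1 / 2) + ramp (fun n => Λ n / n) m)
      ≤ ∑ n ∈ (Finset.range N).filter (fun n : ℕ => m < Real.log n ∧ Real.log n ≤ m + 1),
        Λ n / (n : ℝ) ^ 2 * (1 / (2 * m) - 1 / (2 * Real.log n)) := by
  rw [ramp_eq_sum (u := m + 1) _ hN,
    ramp_eq_sum (u := m + 1 / 2) _ ((Real.exp_le_exp.2 (by linarith)).trans hN),
    ramp_eq_sum (u := m) _ ((Real.exp_le_exp.2 (by linarith)).trans hN), Finset.mul_sum,
    ← Finset.sum_sub_distrib, ← Finset.sum_add_distrib, Finset.mul_sum, Finset.sum_filter]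
  refine Finset.sum_le_sum fun n _ => ?_
  have hform : Λ n / n * max (m + 1 - Real.log n) 0 - 2 * (Λ n / n
      * max (m + 1 / 2 - Real.log n) 0) + Λ n / n * max (m - Real.log n) 0
      = Λ n / n * (max (m + 1 - Real.log n) 0 - 2 * max (m + 1 / 2 - Real.log n) 0
        + max (m - Real.log n) 0) := by ring
  rw [hform]
  split_ifs with h
  · obtain ⟨h1, h2⟩ := h
    have hn : 0 < n := Nat.pos_of_ne_zero fun h => by
      rw [h, Nat.cast_zero, Real.log_zero] at h1; linarith
    have hn0 : (0 : ℝ) < n := by exact_mod_cast hn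
    have hinv : 1 / (n : ℝ) = Real.exp (-m) * Real.exp (-(Real.log n - m)) := by
      rw [← Real.exp_add, show -m + -(Real.log n - m) = -Real.log n by ring, Real.exp_neg,
        Real.exp_log hn0, one_div]
    have hA : 0 ≤ Λ n / (n : ℝ) := vonMangoldt_div_nonneg n
    have key := tent_le hm (τ := Real.log n - m) (by linarith) (by linarith)
      (t := max (m + 1 - Real.log n) 0 - 2 * max (m + 1 / 2 - Real.log n) 0
        + max (m - Real.log n) 0) (by
          rw [max_eq_left (by linarith : 0 ≤ m + 1 - Real.log n),
            max_eq_right (by linarith : m - Real.log n ≤ 0)]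
          have := le_max_left (m + 1 / 2 - Real.log n) 0
          linarith) (by
          rw [max_eq_left (by linarith : 0 ≤ m + 1 - Real.log n),
            max_eq_right (by linarith : m - Real.log n ≤ 0)]
          have := le_max_right (m + 1 / 2 - Real.log n) 0
          linarith)
    rw [add_sub_cancel] at key
    have h3 := mul_le_mul_of_nonneg_left key (mul_nonneg hA (Real.exp_pos (-m)).le)
    refine le_trans (le_of_eq ?_) (h3.trans (le_of_eq ?_))
    · ring
    · have : Λ n / (n : ℝ) ^ 2 = Λ n / n * (1 / n) := by ring
      rw [this, hinv]
      ring
  · refine le_of_eq ?_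
    rw [not_and_or, not_lt, not_le] at h
    rcases h with h | h
    · rw [max_eq_left (by linarith), max_eq_left (by linarith), max_eq_left (by linarith)]
      ring
    · rw [max_eq_right (by linarith), max_eq_right (by linarith), max_eq_right (by linarith)]
      ring

lemma hasSum_ite_minFac_eq {F : ℕ → ℝ} (hF : ∀ n, ¬IsPrimePow n → F n = 0) {p : ℕ}
    (hp : p.Prime) {a : ℝ} (h : HasSum (fun k : ℕ => F (p ^ (k + 1))) a) :
    HasSum (fun n : ℕ => if n.minFac = p then F n else 0) a := by
  have hinj : Function.Injective fun k : ℕ => p ^ (k + 1) := fun i j hij =>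
    Nat.succ_injective (Nat.pow_right_injective hp.two_le hij)
  rw [← hinj.hasSum_iff]
  · refine h.congr_fun fun k => ?_
    simp [hp.pow_minFac (Nat.succ_ne_zero k)]
  · intro n hn
    split_ifs with hmin
    · refine hF n fun hpp => hn ?_
      obtain ⟨q, k, hq, hk, rfl⟩ := (isPrimePow_nat_iff n).1 hpp
      rw [hq.pow_minFac hk.ne'] at hmin
      exact ⟨k - 1, by simp only [Nat.sub_add_cancel hk, hmin]⟩
    · rfl

lemma hasSum_ite_minFac_mem {F : ℕ → ℝ} (hF : ∀ n, ¬IsPrimePow n → F n = 0) {P : Finset ℕ}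
    (hP : ∀ p ∈ P, p.Prime) {a : ℕ → ℝ}
    (h : ∀ p ∈ P, HasSum (fun k : ℕ => F (p ^ (k + 1))) (a p)) :
    HasSum (fun n : ℕ => if n.minFac ∈ P then F n else 0) (∑ p ∈ P, a p) := by
  have := hasSum_sum fun p hp => hasSum_ite_minFac_eq hF (hP p hp) (h p hp)
  refine this.congr_fun fun n => ?_
  rw [Finset.sum_ite_eq]

lemma hasSum_vonMangoldt_div {P : Finset ℕ} (hP : ∀ p ∈ P, p.Prime) :
    HasSum (fun n : ℕ => if n.minFac ∈ P then Λ n / (n : ℝ) else 0)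
      (∑ p ∈ P, Real.log p / ((p : ℝ) - 1)) := by
  refine hasSum_ite_minFac_mem (fun n hn => by
    rw [ArithmeticFunction.vonMangoldt_eq_zero_iff.2 hn, zero_div]) hP fun p hp => ?_
  have h1 : (1 : ℝ) < p := by exact_mod_cast (hP p hp).one_lt
  have h2 := (hasSum_geometric_of_lt_one (r := 1 / (p : ℝ)) (by positivity)
    (by rw [div_lt_one (by linarith)]; exact h1)).mul_left (Real.log p / p)
  have e : Real.log p / p * (1 - 1 / (p : ℝ))⁻¹ = Real.log p / ((p : ℝ) - 1) := by
    have : (p : ℝ) - 1 ≠ 0 := by linarith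
    have : (p : ℝ) ≠ 0 := by linarith
    field_simp
  rw [e] at h2
  refine h2.congr_fun fun k => ?_
  rw [ArithmeticFunction.vonMangoldt_apply_pow (Nat.succ_ne_zero k),
    ArithmeticFunction.vonMangoldt_apply_prime (hP p hp)]
  push_cast
  rw [div_pow, one_pow, pow_succ]
  field_simp

lemma hasSum_vonMangoldt_div_mul_log {P : Finset ℕ} (hP : ∀ p ∈ P, p.Prime) :
    HasSum (fun n : ℕ => if n.minFac ∈ P then Λ n / (n * Real.log n) else 0)
      (∑ p ∈ P, -Real.log (1 - 1 / (p : ℝ))) := by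
  refine hasSum_ite_minFac_mem (fun n hn => by
    rw [ArithmeticFunction.vonMangoldt_eq_zero_iff.2 hn, zero_div]) hP fun p hp => ?_
  have h1 : (1 : ℝ) < p := by exact_mod_cast (hP p hp).one_lt
  have h2 := Real.hasSum_pow_div_log_of_abs_lt_one (x := 1 / (p : ℝ)) (by
    rw [abs_of_nonneg (by positivity), div_lt_one (by linarith)]; exact h1)
  refine h2.congr_fun fun k => ?_
  rw [ArithmeticFunction.vonMangoldt_apply_pow (Nat.succ_ne_zero k),
    ArithmeticFunction.vonMangoldt_apply_prime (hP p hp)]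
  have hl : 0 < Real.log p := Real.log_pos h1
  push_cast
  rw [div_pow, one_pow, Real.log_pow]
  push_cast
  field_simp

end Increments

section Comparison

open Set Filter Topology

local notation "γ" => Real.eulerMascheroniConstant
local notation "Λ" => ArithmeticFunction.vonMangoldt

lemma hasSum_ramp (a : ℕ → ℝ) (u : ℝ) :
    HasSum (fun n => a n * max (u - Real.log n) 0) (ramp a u) := by
  obtain ⟨N, hN⟩ := exists_nat_ge (Real.exp u)
  refine (summable_of_ne_finset_zero (s := Finset.range N) fun n hn => ?_).hasSum
  exact ramp_term_eq_zero a (hN.trans (by exact_mod_cast not_lt.1 (Finset.mem_range.not.1 hn)))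

/-- The contribution of `n` to the comparison between a set of primes and an interval. -/
noncomputable def primeSetGap (P : Finset ℕ) (l : ℝ) (n : ℕ) : ℝ :=
  (if n.minFac ∈ P then Λ n / (n : ℝ) else 0) * (1 / l)
    - (if n.minFac ∈ P then Λ n / (n * Real.log n) else 0)
    + Λ n / (n * Real.log n) * max (l - Real.log n) 0 * (1 / l)

lemma hasSum_primeSetGap {P : Finset ℕ} (hP : ∀ p ∈ P, p.Prime) (l : ℝ) :
    HasSum (primeSetGap P l) ((∑ p ∈ P, Real.log p / ((p : ℝ) - 1)) * (1 / l)
      - (∑ p ∈ P, -Real.log (1 - 1 / (p : ℝ)))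
      + ramp (fun n => Λ n / (n * Real.log n)) l * (1 / l)) :=
  (((hasSum_vonMangoldt_div hP).mul_right _).sub (hasSum_vonMangoldt_div_mul_log hP)).add
    ((hasSum_ramp _ l).mul_right _)

lemma primeSetGap_of_mem {P : Finset ℕ} {l : ℝ} (hl : 0 < l) {n : ℕ} (hn : n.minFac ∈ P) :
    primeSetGap P l n = Λ n / n * max (1 / l - 1 / Real.log n) 0 := by
  rw [primeSetGap, if_pos hn, if_pos hn]
  rcases Nat.lt_or_ge n 2 with h | h
  · interval_cases n <;> simp
  · have hlog : 0 < Real.log n := Real.log_pos (by exact_mod_cast h)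
    have hn0 : (0 : ℝ) < n := by positivity
    rcases le_total l (Real.log n) with h1 | h1
    · rw [max_eq_right (by linarith), max_eq_left
        (sub_nonneg.2 (one_div_le_one_div_of_le hl h1))]
      field_simp
      ring
    · rw [max_eq_left (by linarith), max_eq_right
        (sub_nonpos.2 (one_div_le_one_div_of_le hlog h1))]
      field_simp
      ring

lemma primeSetGap_of_notMem {P : Finset ℕ} {l : ℝ} {n : ℕ} (hn : n.minFac ∉ P) :
    primeSetGap P l n = Λ n / (n * Real.log n) * max (l - Real.log n) 0 * (1 / l) := by
  rw [primeSetGap, if_neg hn, if_neg hn]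
  ring

lemma primeSetGap_nonneg (P : Finset ℕ) {l : ℝ} (hl : 0 < l) (n : ℕ) :
    0 ≤ primeSetGap P l n := by
  by_cases hn : n.minFac ∈ P
  · rw [primeSetGap_of_mem hl hn]
    exact mul_nonneg (vonMangoldt_div_nonneg n) (le_max_right _ _)
  · rw [primeSetGap_of_notMem hn]
    exact mul_nonneg (mul_nonneg (vonMangoldt_div_mul_log_nonneg n) (le_max_right _ _))
      (by positivity)

lemma sum_le_of_hasSum_primeSetGap {P : Finset ℕ} {m : ℝ} (hm : 2 ≤ m) (N : ℕ) {a : ℝ}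
    (h : HasSum (primeSetGap P (2 * m)) a) :
    ∑ n ∈ (Finset.range N).filter (fun n : ℕ => m < Real.log n ∧ Real.log n ≤ m + 1),
        Λ n / (n : ℝ) ^ 2 * (1 / (2 * m) - 1 / (2 * Real.log n)) ≤ a := by
  set T := (Finset.range N).filter (fun n : ℕ => m < Real.log n ∧ Real.log n ≤ m + 1) with hT
  set i : ℕ → ℕ := fun n => if n.minFac ∈ P then n ^ 2 else n with hi
  have hmin : ∀ n, (i n).minFac = n.minFac := by
    intro n
    simp only [hi]
    split_ifs
    · exact Nat.pow_minFac two_ne_zero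
    · rfl
  have hinj : Set.InjOn i T := by
    intro x _ y _ hxy
    have h1 : x.minFac = y.minFac := by rw [← hmin x, ← hmin y, hxy]
    simp only [hi, h1] at hxy
    split_ifs at hxy
    · exact Nat.pow_left_injective two_ne_zero hxy
    · exact hxy
  refine le_trans ?_ (sum_le_hasSum (T.image i)
    (fun n _ => primeSetGap_nonneg P (by linarith) n) h)
  rw [Finset.sum_image hinj]
  refine Finset.sum_le_sum fun n hn => ?_
  obtain ⟨h1, h2⟩ := (Finset.mem_filter.1 hn).2
  have hn0 : 0 < n := Nat.pos_of_ne_zero fun h => by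
    rw [h, Nat.cast_zero, Real.log_zero] at h1; linarith
  have hn1 : (1 : ℝ) ≤ n := by exact_mod_cast hn0
  have hlog : 0 < Real.log n := by linarith
  by_cases hp : n.minFac ∈ P
  · have e : i n = n ^ 2 := if_pos hp
    have h3 : (n ^ 2).minFac ∈ P := by rwa [Nat.pow_minFac two_ne_zero]
    rw [e, primeSetGap_of_mem (by linarith) h3,
      ArithmeticFunction.vonMangoldt_apply_pow two_ne_zero, Nat.cast_pow, Real.log_pow]
    exact mul_le_mul_of_nonneg_left (le_max_left _ _)
      (div_nonneg ArithmeticFunction.vonMangoldt_nonneg (by positivity))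
  · have e : i n = n := if_neg hp
    rw [e, primeSetGap_of_notMem hp, max_eq_left (by linarith)]
    have e1 : Λ n / (n : ℝ) ^ 2 * (1 / (2 * m) - 1 / (2 * Real.log n))
        = Λ n / (n * Real.log n) * ((Real.log n - m) / n) * (1 / (2 * m)) := by
      field_simp
    rw [e1]
    refine mul_le_mul_of_nonneg_right ?_ (by positivity)
    refine mul_le_mul_of_nonneg_left ?_ (vonMangoldt_div_mul_log_nonneg n)
    refine (div_le_self (by linarith) hn1).trans ?_
    linarith

lemma log_four_mul_pi_ge (hγ : γ ≤ 0.5786) : 2 + γ - Real.log (4 * Real.pi) ≤ 0.05 := by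
  have h1 : Real.log (4 * Real.pi) = 2 * Real.log 2 + Real.log Real.pi := by
    rw [Real.log_mul (by norm_num) Real.pi_ne_zero, show (4 : ℝ) = 2 ^ 2 by norm_num, Real.log_pow]
    norm_num
  have h2 := Real.log_two_gt_d9
  have h3 : (1.1424 : ℝ) ≤ Real.log Real.pi := by
    rw [Real.le_log_iff_exp_le Real.pi_pos]
    refine le_trans ?_ Real.pi_gt_d2.le
    have h4 : (1.1424 : ℝ) = 1 + 0.1424 := by norm_num
    have h5 := Real.exp_bound' (x := 0.1424) (by norm_num) (by norm_num) (n := 3) (by norm_num)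
    simp only [Finset.sum_range_succ, Finset.sum_range_zero] at h5
    norm_num [Nat.factorial] at h5
    rw [h4, Real.exp_add]
    have h6 := Real.exp_one_lt_d9
    have h7 := Real.exp_pos (1 : ℝ)
    norm_num at h5 h6 ⊢
    nlinarith
  linarith

theorem exp_neg_lt_gammaP_of_RH (hRH : RiemannHypothesis) (hγ : γ ≤ 0.5786) {P : Finset ℕ}
    (hP : ∀ p ∈ P, p.Prime) (hL : 4 ≤ γ + ∑ p ∈ P, Real.log p / ((p : ℝ) - 1)) :
    Real.exp (-γ) < gammaP P := by
  obtain ⟨κ₀, hκ⟩ := exists_abs_ramp_sub_le_of_RH hRH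
  have hB := log_four_mul_pi_ge hγ
  have hκ1 : ∀ u : ℝ, 0 < u →
      |Real.exp (u / 2) * chebyshevRemainder κ₀ u - archKernel u| ≤ 0.05 := fun u hu => by
    have := hκ u hu
    rw [show κ₀ - γ * u + u ^ 2 / 2 - ramp (fun n => Λ n / n) u = chebyshevRemainder κ₀ u
      from rfl] at this
    linarith
  have hexp : ∀ u : ℝ, Real.exp (-(u / 2)) * Real.exp (u / 2) = 1 := fun u => by
    rw [← Real.exp_add]; simp
  have hlow : ∀ u : ℝ, 0 < u → -(0.05 * Real.exp (-(u / 2))) ≤ chebyshevRemainder κ₀ u := by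
    intro u hu
    have h1 := (abs_le.1 (hκ1 u hu)).1
    have h2 := archKernel_nonneg u
    have h3 : -0.05 ≤ Real.exp (u / 2) * chebyshevRemainder κ₀ u := by linarith
    have h4 := mul_le_mul_of_nonneg_left h3 (Real.exp_pos (-(u / 2))).le
    rw [← mul_assoc, hexp, one_mul] at h4
    linarith
  have hup : ∀ u : ℝ, 0 < u → chebyshevRemainder κ₀ u
      ≤ 0.05 * Real.exp (-(u / 2)) + 1 / 4 * Real.exp (-(3 * u)) := by
    intro u hu
    have h1 := (abs_le.1 (hκ1 u hu)).2
    have h2 := archKernel_le hu.le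
    have h3 : Real.exp (u / 2) * chebyshevRemainder κ₀ u
        ≤ 0.05 + 1 / 4 * Real.exp (-(5 / 2 * u)) := by linarith
    have h4 := mul_le_mul_of_nonneg_left h3 (Real.exp_pos (-(u / 2))).le
    have h5 : Real.exp (-(u / 2)) * Real.exp (-(5 / 2 * u)) = Real.exp (-(3 * u)) := by
      rw [← Real.exp_add]; ring_nf
    rw [← mul_assoc, hexp, one_mul] at h4
    linarith
  obtain ⟨m, hm⟩ : ∃ m : ℝ, γ + ∑ p ∈ P, Real.log p / ((p : ℝ) - 1) = 2 * m :=
    ⟨_ / 2, (mul_div_cancel₀ _ two_ne_zero).symm⟩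
  have hm2 : 2 ≤ m := by linarith
  have hm0 : 0 < m := by linarith
  obtain ⟨N, hN⟩ := exists_nat_ge (Real.exp (m + 1))
  have hgain := (le_sum_vonMangoldt_div_sq hm2 hN).trans
    (sum_le_of_hasSum_primeSetGap hm2 N (hasSum_primeSetGap hP (2 * m)))
  have hJ := le_mertensError (by norm_num) hlow hup (by linarith : 0 < 2 * m)
  have hM : Real.log (gammaP P) = Real.log (2 * m) - ∑ p ∈ P, -Real.log (1 - 1 / (p : ℝ)) ∧
      0 < gammaP P := by
    have hpos : ∀ p ∈ P, 0 < 1 - 1 / (p : ℝ) := fun p hp => by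
      have : (1 : ℝ) < p := by exact_mod_cast (hP p hp).one_lt
      rw [sub_pos, div_lt_one (by linarith)]; exact this
    have hprod := Finset.prod_pos hpos
    rw [gammaP, hm]
    refine ⟨?_, by positivity⟩
    rw [Real.log_mul hprod.ne' (by linarith), Real.log_prod fun p hp => (hpos p hp).ne',
      Finset.sum_neg_distrib]
    ring
  rw [← Real.lt_log_iff_exp_lt hM.2, hM.1]
  have hr : ∀ u, ramp (fun n => Λ n / n) u = κ₀ - γ * u + u ^ 2 / 2 - chebyshevRemainder κ₀ u :=
    fun u => by rw [chebyshevRemainder]; ring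
  have hmono : ∀ u, m ≤ u → Real.exp (-(u / 2)) ≤ Real.exp (-1) := fun u hu =>
    Real.exp_le_exp.2 (by linarith)
  have he1 := Real.exp_neg_one_lt_d9
  have he6 : Real.exp (-(3 * m)) ≤ 0.0025 := by
    have : Real.exp (-(3 * m)) ≤ Real.exp (-1) ^ 6 := by
      rw [← Real.exp_nat_mul]; exact Real.exp_le_exp.2 (by push_cast; linarith)
    refine this.trans ((pow_le_pow_left₀ (Real.exp_pos _).le he1.le 6).trans ?_)
    norm_num
  have hdiff : (0.175 : ℝ) ≤ ramp (fun n => Λ n / n) (m + 1)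
      - 2 * ramp (fun n => Λ n / n) (m + 1 / 2) + ramp (fun n => Λ n / n) m := by
    rw [hr, hr, hr]
    have k1 := hup (m + 1) (by linarith)
    have k2 := hup m hm0
    have k3 := hlow (m + 1 / 2) (by linarith)
    have k4 := hmono (m + 1) (by linarith)
    have k5 := hmono m le_rfl
    have k6 := hmono (m + 1 / 2) (by linarith)
    have k7 : Real.exp (-(3 * (m + 1))) ≤ Real.exp (-(3 * m)) :=
      Real.exp_le_exp.2 (by linarith)
    nlinarith
  have hgain2 : Real.exp (-m) / (4 * m ^ 2) * (2 / 3) * 0.175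
      ≤ Real.exp (-m) / (4 * m ^ 2) * (2 / 3) * (ramp (fun n => Λ n / n) (m + 1)
      - 2 * ramp (fun n => Λ n / n) (m + 1 / 2) + ramp (fun n => Λ n / n) m) :=
    mul_le_mul_of_nonneg_left hdiff (by positivity)
  have hsmall : Real.exp (-(3 * (2 * m))) ≤ Real.exp (-m) * 0.0025 := by
    have : Real.exp (-(3 * (2 * m))) ≤ Real.exp (-m) * Real.exp (-(3 * m)) := by
      rw [← Real.exp_add]; exact Real.exp_le_exp.2 (by linarith)
    exact this.trans (mul_le_mul_of_nonneg_left he6 (Real.exp_pos _).le)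
  have hmain : 0.05 * Real.exp (-(2 * m / 2)) / (2 * m) ^ 2
        + (4 * 0.05 * Real.exp (-(2 * m / 2)) + Real.exp (-(3 * (2 * m))) / 6) / (2 * m) ^ 3
      < Real.exp (-m) / (4 * m ^ 2) * (2 / 3) * 0.175 := by
    have hE := Real.exp_pos (-m)
    rw [show 2 * m / 2 = m by ring]
    have h1 : (4 * 0.05 * Real.exp (-m) + Real.exp (-(3 * (2 * m))) / 6) / (2 * m) ^ 3
        ≤ Real.exp (-m) * 0.201 / (2 * m) ^ 3 := by
      gcongr
      linarith
    have h2 : Real.exp (-m) * 0.201 / (2 * m) ^ 3 ≤ Real.exp (-m) / (4 * m ^ 2) * 0.05025 := by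
      rw [show Real.exp (-m) * 0.201 / (2 * m) ^ 3
        = Real.exp (-m) / (4 * m ^ 2) * (0.201 / (2 * m)) by field_simp; ring]
      refine mul_le_mul_of_nonneg_left ?_ (by positivity)
      rw [div_le_iff₀ (by positivity)]
      linarith
    have h3 : 0 < Real.exp (-m) / (4 * m ^ 2) := by positivity
    have h4 : 0.05 * Real.exp (-m) / (2 * m) ^ 2 = Real.exp (-m) / (4 * m ^ 2) * 0.05 := by
      field_simp; ring
    linarith
  have hident : mertensError (2 * m) / (2 * m)
      = Real.log (2 * m) + γ - 1 + γ * (1 / (2 * m))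
        - ramp (fun n => Λ n / (n * Real.log n)) (2 * m) * (1 / (2 * m)) := by
    rw [mertensError]
    field_simp
    ring
  have hsum : (∑ p ∈ P, Real.log p / ((p : ℝ) - 1)) * (1 / (2 * m))
      = 1 - γ * (1 / (2 * m)) := by
    rw [show ∑ p ∈ P, Real.log p / ((p : ℝ) - 1) = 2 * m - γ by linarith]
    field_simp
  rw [hident] at hJ
  rw [hsum] at hgain
  linarith

end Comparison

section GammaNumerics

open Set Filter Topology

private lemma log_one_add_inv_le {n : ℕ} (hn : 0 < n) :
    Real.log (1 + 1 / (n : ℝ)) ≤ (1 / (n : ℝ) + 1 / (n + 1)) / 2 := by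
  have hn' : (0 : ℝ) < n := by exact_mod_cast hn
  have h0 : 0 ≤ Real.log (1 + 1 / (n : ℝ)) := Real.log_nonneg (by simp)
  refine (Real.self_le_sinh_iff.2 h0).trans (le_of_eq ?_)
  rw [Real.sinh_log (by positivity)]
  field_simp
  ring

private lemma le_log_one_add_inv {n : ℕ} (hn : 0 < n) :
    2 / (2 * (n : ℝ) + 1) ≤ Real.log (1 + 1 / (n : ℝ)) := by
  have hn' : (0 : ℝ) < n := by exact_mod_cast hn
  refine le_trans (le_of_eq ?_) (Real.le_log_one_add_of_nonneg (x := 1 / (n : ℝ)) (by positivity))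
  field_simp
  ring

private lemma log_succ_eq {n : ℕ} (hn : 0 < n) :
    Real.log ((n + 1 : ℕ) : ℝ) = Real.log n + Real.log (1 + 1 / (n : ℝ)) := by
  have hn' : (0 : ℝ) < n := by exact_mod_cast hn
  rw [← Real.log_mul (by positivity) (by positivity)]
  congr 1
  push_cast
  field_simp

private lemma tendsto_one_div_mul_atTop_nhds_zero (c : ℝ) :
    Tendsto (fun n : ℕ ↦ c * (1 / (n : ℝ))) atTop (𝓝 0) := by
  simpa using tendsto_one_div_atTop_nhds_zero_nat.const_mul c

/-- Euler–Maclaurin lower bound for Euler's constant. -/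
lemma harmonic_sub_log_sub_le_eulerMascheroniConstant {n : ℕ} (hn : 0 < n) :
    (harmonic n : ℝ) - Real.log n - 1 / 2 * (1 / (n : ℝ)) ≤ Real.eulerMascheroniConstant := by
  have hlim : Tendsto (fun m : ℕ ↦ (harmonic m : ℝ) - Real.log m - 1 / 2 * (1 / (m : ℝ))) atTop
      (𝓝 Real.eulerMascheroniConstant) := by
    simpa using Real.tendsto_harmonic_sub_log.sub (tendsto_one_div_mul_atTop_nhds_zero (1 / 2))
  refine ge_of_tendsto hlim ?_
  filter_upwards [eventually_ge_atTop n] with m hm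
  induction m, hm using Nat.le_induction with
  | base => exact le_rfl
  | succ m hm ih =>
    refine ih.trans ?_
    have hm0 : 0 < m := hn.trans_le hm
    have h := log_one_add_inv_le hm0
    rw [harmonic_succ, log_succ_eq hm0]
    push_cast
    rw [← one_div]
    linarith

/-- Euler–Maclaurin upper bound for Euler's constant. -/
lemma eulerMascheroniConstant_le_harmonic_sub_log_add {n : ℕ} (hn : 0 < n) :
    Real.eulerMascheroniConstant ≤
      (harmonic n : ℝ) - Real.log n - 1 / 2 * (1 / (n : ℝ)) + 1 / 8 * (1 / (n : ℝ)) ^ 2 := by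
  have hlim : Tendsto (fun m : ℕ ↦ (harmonic m : ℝ) - Real.log m - 1 / 2 * (1 / (m : ℝ)) +
      1 / 8 * (1 / (m : ℝ)) ^ 2) atTop (𝓝 Real.eulerMascheroniConstant) := by
    simpa using (Real.tendsto_harmonic_sub_log.sub
      (tendsto_one_div_mul_atTop_nhds_zero (1 / 2))).add
      ((tendsto_one_div_atTop_nhds_zero_nat.pow 2).const_mul (1 / 8 : ℝ))
  refine le_of_tendsto hlim ?_
  filter_upwards [eventually_ge_atTop n] with m hm
  induction m, hm using Nat.le_induction with
  | base => exact le_rfl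
  | succ m hm ih =>
    refine le_trans ?_ ih
    have hm0 : 0 < m := hn.trans_le hm
    have hm' : (0 : ℝ) < m := by exact_mod_cast hm0
    have h := le_log_one_add_inv hm0
    have key : 1 / 2 * (1 / (m : ℝ) + 1 / (m + 1)) + 1 / 8 * (1 / ((m : ℝ) + 1)) ^ 2
        - 1 / 8 * (1 / (m : ℝ)) ^ 2 ≤ 2 / (2 * (m : ℝ) + 1) := by
      have : 2 / (2 * (m : ℝ) + 1) - (1 / 2 * (1 / (m : ℝ) + 1 / (m + 1))
          + 1 / 8 * (1 / ((m : ℝ) + 1)) ^ 2 - 1 / 8 * (1 / (m : ℝ)) ^ 2)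
          = 1 / (8 * (2 * m + 1) * m ^ 2 * (m + 1) ^ 2) := by
        field_simp
        ring
      have h2 : 0 ≤ 1 / (8 * (2 * (m : ℝ) + 1) * m ^ 2 * (m + 1) ^ 2) := by positivity
      linarith
    rw [harmonic_succ, log_succ_eq hm0]
    push_cast
    rw [← one_div]
    linarith

private lemma harmonic_eight : harmonic 8 = 761 / 280 := by
  norm_num [harmonic, Finset.sum_range_succ]

private lemma log_eight : Real.log (8 : ℕ) = 3 * Real.log 2 := by
  rw [show ((8 : ℕ) : ℝ) = 2 ^ 3 by norm_num, Real.log_pow]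
  norm_num

lemma le_eulerMascheroniConstant : 0.5759 ≤ Real.eulerMascheroniConstant := by
  have h := harmonic_sub_log_sub_le_eulerMascheroniConstant (n := 8) (by norm_num)
  rw [harmonic_eight, log_eight] at h
  norm_num at h ⊢
  linarith [Real.log_two_lt_d9]

lemma eulerMascheroniConstant_le : Real.eulerMascheroniConstant ≤ 0.5786 := by
  have h := eulerMascheroniConstant_le_harmonic_sub_log_add (n := 8) (by norm_num)
  rw [harmonic_eight, log_eight] at h
  norm_num at h ⊢
  linarith [Real.log_two_gt_d9]

private lemma exp_neg_eulerMascheroniConstant_lt :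
    Real.exp (-Real.eulerMascheroniConstant) < 0.56223 := by
  have h1 : (1.7787 : ℝ) ≤ Real.exp 0.5759 := by
    refine le_trans ?_ (Real.sum_le_exp_of_nonneg (by norm_num) 7)
    norm_num [Finset.sum_range_succ, Nat.factorial]
  have h2 := Real.exp_le_exp.2 le_eulerMascheroniConstant
  rw [Real.exp_neg]
  calc (Real.exp Real.eulerMascheroniConstant)⁻¹ ≤ (1.7787 : ℝ)⁻¹ :=
        inv_anti₀ (by norm_num) (h1.trans h2)
    _ < 0.56223 := by norm_num

private lemma log_ge_of_two_pow_le {n a b : ℕ} (ha : 0 < a) (h : 2 ^ b ≤ n ^ a) :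
    (b : ℝ) / a * 0.6931 ≤ Real.log n := by
  have ha' : (0 : ℝ) < a := by exact_mod_cast ha
  have h1 : Real.log ((2 : ℝ) ^ b) ≤ Real.log ((n : ℝ) ^ a) :=
    Real.log_le_log (by positivity) (by exact_mod_cast h)
  rw [Real.log_pow, Real.log_pow] at h1
  rw [div_mul_eq_mul_div, div_le_iff₀ ha']
  have h2 : (b : ℝ) * 0.6931 ≤ b * Real.log 2 :=
    mul_le_mul_of_nonneg_left (by linarith [Real.log_two_gt_d9]) (Nat.cast_nonneg b)
  linarith

private lemma nth_prime_injective : Function.Injective (Nat.nth Nat.Prime) :=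
  (Nat.nth_strictMono Nat.infinite_setOfPred_prime).injective

private lemma gammaR_eq (r : ℕ) :
    gammaR r = (∏ i ∈ Finset.range r, (1 - 1 / (Nat.nth Nat.Prime i : ℝ))) *
      (Real.eulerMascheroniConstant +
        ∑ i ∈ Finset.range r,
          Real.log (Nat.nth Nat.Prime i) / ((Nat.nth Nat.Prime i : ℝ) - 1)) := by
  rw [gammaR, gammaP, Finset.prod_image nth_prime_injective.injOn,
    Finset.sum_image nth_prime_injective.injOn]

private lemma nth_prime_values :
    Nat.nth Nat.Prime 5 = 13 ∧ Nat.nth Nat.Prime 6 = 17 ∧ Nat.nth Nat.Prime 7 = 19 ∧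
      Nat.nth Nat.Prime 8 = 23 ∧ Nat.nth Nat.Prime 9 = 29 ∧ Nat.nth Nat.Prime 10 = 31 ∧
      Nat.nth Nat.Prime 11 = 37 ∧ Nat.nth Nat.Prime 12 = 41 ∧ Nat.nth Nat.Prime 13 = 43 ∧
      Nat.nth Nat.Prime 14 = 47 := by
  refine ⟨?_, ?_, ?_, ?_, ?_, ?_, ?_, ?_, ?_, ?_⟩ <;>
    exact (congrArg _ (by decide)).trans (Nat.nth_count (by norm_num))

private lemma log_lower_bounds :
    ((1 : ℕ) : ℝ) / (1 : ℕ) * 0.6931 ≤ Real.log (2 : ℕ) ∧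
    ((19 : ℕ) : ℝ) / (12 : ℕ) * 0.6931 ≤ Real.log (3 : ℕ) ∧
    ((23 : ℕ) : ℝ) / (10 : ℕ) * 0.6931 ≤ Real.log (5 : ℕ) ∧
    ((28 : ℕ) : ℝ) / (10 : ℕ) * 0.6931 ≤ Real.log (7 : ℕ) ∧
    ((38 : ℕ) : ℝ) / (11 : ℕ) * 0.6931 ≤ Real.log (11 : ℕ) ∧
    ((37 : ℕ) : ℝ) / (10 : ℕ) * 0.6931 ≤ Real.log (13 : ℕ) ∧
    ((49 : ℕ) : ℝ) / (12 : ℕ) * 0.6931 ≤ Real.log (17 : ℕ) ∧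
    ((38 : ℕ) : ℝ) / (9 : ℕ) * 0.6931 ≤ Real.log (19 : ℕ) ∧
    ((54 : ℕ) : ℝ) / (12 : ℕ) * 0.6931 ≤ Real.log (23 : ℕ) ∧
    ((34 : ℕ) : ℝ) / (7 : ℕ) * 0.6931 ≤ Real.log (29 : ℕ) ∧
    ((59 : ℕ) : ℝ) / (12 : ℕ) * 0.6931 ≤ Real.log (31 : ℕ) ∧
    ((52 : ℕ) : ℝ) / (10 : ℕ) * 0.6931 ≤ Real.log (37 : ℕ) ∧
    ((64 : ℕ) : ℝ) / (12 : ℕ) * 0.6931 ≤ Real.log (41 : ℕ) ∧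
    ((65 : ℕ) : ℝ) / (12 : ℕ) * 0.6931 ≤ Real.log (43 : ℕ) ∧
    ((61 : ℕ) : ℝ) / (11 : ℕ) * 0.6931 ≤ Real.log (47 : ℕ) := by
  refine ⟨?_, ?_, ?_, ?_, ?_, ?_, ?_, ?_, ?_, ?_, ?_, ?_, ?_, ?_, ?_⟩ <;>
    exact log_ge_of_two_pow_le (by norm_num) (by norm_num)

private lemma exp_neg_lt_gammaR_of_lt {r : ℕ} (hr : r < 15) :
    Real.exp (-Real.eulerMascheroniConstant) < gammaR r := by
  refine exp_neg_eulerMascheroniConstant_lt.trans ?_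
  have hγ := le_eulerMascheroniConstant
  obtain ⟨h5, h6, h7, h8, h9, h10, h11, h12, h13, -⟩ := nth_prime_values
  obtain ⟨l0, l1, l2, l3, l4, l5, l6, l7, l8, l9, l10, l11, l12, l13, l14⟩ := log_lower_bounds
  push_cast at l0 l1 l2 l3 l4 l5 l6 l7 l8 l9 l10 l11 l12 l13 l14
  rw [gammaR_eq]
  interval_cases r <;>
  · simp only [Finset.prod_range_succ, Finset.sum_range_succ, Finset.prod_range_zero,
      Finset.sum_range_zero, Nat.nth_prime_zero_eq_two, Nat.nth_prime_one_eq_three,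
      Nat.nth_prime_two_eq_five, Nat.nth_prime_three_eq_seven, Nat.nth_prime_four_eq_eleven,
      h5, h6, h7, h8, h9, h10, h11, h12, h13, Nat.cast_ofNat]
    norm_num at *
    linarith

private lemma four_le_add_sum_range_nth_prime {r : ℕ} (hr : 15 ≤ r) :
    4 ≤ Real.eulerMascheroniConstant +
      ∑ i ∈ Finset.range r, Real.log (Nat.nth Nat.Prime i) / ((Nat.nth Nat.Prime i : ℝ) - 1) := by
  have hmono : ∑ i ∈ Finset.range 15, Real.log (Nat.nth Nat.Prime i) /
      ((Nat.nth Nat.Prime i : ℝ) - 1) ≤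
      ∑ i ∈ Finset.range r, Real.log (Nat.nth Nat.Prime i) / ((Nat.nth Nat.Prime i : ℝ) - 1) := by
    refine Finset.sum_le_sum_of_subset_of_nonneg (Finset.range_subset_range.2 hr) fun i _ _ ↦ ?_
    have h1 : (1 : ℝ) ≤ Nat.nth Nat.Prime i := by exact_mod_cast (Nat.prime_nth_prime i).one_le
    exact div_nonneg (Real.log_nonneg h1) (sub_nonneg.2 h1)
  refine le_trans ?_ (add_le_add_right hmono _)
  have hγ := le_eulerMascheroniConstant
  obtain ⟨h5, h6, h7, h8, h9, h10, h11, h12, h13, h14⟩ := nth_prime_values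
  obtain ⟨l0, l1, l2, l3, l4, l5, l6, l7, l8, l9, l10, l11, l12, l13, l14⟩ := log_lower_bounds
  push_cast at l0 l1 l2 l3 l4 l5 l6 l7 l8 l9 l10 l11 l12 l13 l14
  simp only [Finset.sum_range_succ, Finset.sum_range_zero, Nat.nth_prime_zero_eq_two,
    Nat.nth_prime_one_eq_three, Nat.nth_prime_two_eq_five, Nat.nth_prime_three_eq_seven,
    Nat.nth_prime_four_eq_eleven, h5, h6, h7, h8, h9, h10, h11, h12, h13, h14, Nat.cast_ofNat]
  norm_num at *
  linarith

end GammaNumerics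

/-- On RH, `γ_r > e^{-γ}` for all `r ≥ 0`. -/
theorem gammaR_gt_of_RH (hRH : RiemannHypothesis) (r : ℕ) :
    Real.exp (-Real.eulerMascheroniConstant) < gammaR r := by
  rcases lt_or_ge r 15 with hr | hr
  · exact exp_neg_lt_gammaR_of_lt hr
  · refine exp_neg_lt_gammaP_of_RH hRH eulerMascheroniConstant_le ?_ ?_
    · intro p hp
      obtain ⟨i, -, rfl⟩ := Finset.mem_image.1 hp
      exact Nat.prime_nth_prime i
    · rw [Finset.sum_image nth_prime_injective.injOn]
      exact four_le_add_sum_range_nth_prime hr
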